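/- arXiv:1605.04146 — 10 statements merged into one kernel-verified Lean document; each statement's English description precedes it below -/
import Mathlib

section
/- Minkowski's lattice point theorem, boundary version: Let n ≥ 1, let Λ ⊆ ℝⁿ be a full-rank lattice, and let C ⊆ ℝⁿ be a bounded convex set that is symmetric (C = −C) and has Lebesgue measure vol(C) ≥ 2ⁿ·det(Λ). Then the closure of C contains a point z ∈ Λ with z ≠ 0. -/
open MeasureTheory

/-! If `C` has volume strictly larger than `2 ^ n * |det B|`, Minkowski's theorem gives a nonzero
lattice point in `C` itself. In the case of equality the volume of `C` is positive and finite, which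
makes `C` bounded: an unbounded convex set with nonempty interior recedes to infinity in some
direction `v`, so it contains infinitely many disjoint translates of a ball along `v`. Hence
`closure C` is compact, and for compact convex bodies the weak volume inequality suffices. -/

open Module ZSpan

section HaarMeasure

variable {E : Type*} [NormedAddCommGroup E] [NormedSpace ℝ E] [MeasurableSpace E] [BorelSpace E]
  {μ : Measure E} [μ.IsAddHaarMeasure] {s : Set E}

theorem measure_eq_top_of_forall_smul_add_mem {v : E} (hv : v ≠ 0) (hs : (interior s).Nonempty)
    (hsv : ∀ x ∈ interior s, ∀ c : ℝ, 0 ≤ c → c • v + x ∈ s) : μ s = ⊤ := by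
  obtain ⟨a, ha⟩ := hs
  obtain ⟨r, hr, hball⟩ := Metric.isOpen_iff.1 isOpen_interior a ha
  -- The spacing puts consecutive centres exactly `2 * r` apart.
  let c : ℕ → ℝ := fun k ↦ k * (2 * r / ‖v‖)
  let translate : ℕ → Set E := fun k ↦ Metric.ball (c k • v + a) r
  have translate_subset (k : ℕ) : translate k ⊆ s := fun x hx ↦ by
    have hx' : x - c k • v ∈ Metric.ball a r := by
      rwa [mem_ball_iff_norm, sub_sub, ← mem_ball_iff_norm]
    simpa only [add_sub_cancel] using hsv _ (hball hx') (c k) (by positivity)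
  have translate_disjoint : Pairwise (Function.onFun Disjoint translate) := fun j k hjk ↦ by
    refine Metric.ball_disjoint_ball ?_
    have one_le : (1 : ℝ) ≤ |(j : ℝ) - k| := by
      exact_mod_cast Int.one_le_abs (sub_ne_zero.2 (Nat.cast_injective.ne hjk))
    calc r + r ≤ |(j : ℝ) - k| * (2 * r) := by nlinarith
      _ = dist (c j • v + a) (c k • v + a) := by
        rw [dist_add_right, dist_eq_norm, ← sub_smul, norm_smul, ← sub_mul, norm_mul,
          Real.norm_eq_abs, Real.norm_of_nonneg (by positivity : 0 ≤ 2 * r / ‖v‖), mul_assoc,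
          div_mul_cancel₀ _ (norm_ne_zero_iff.2 hv)]
  by_contra hμs
  have finite_translates := Measure.finite_const_le_meas_of_disjoint_iUnion μ
    (Metric.measure_ball_pos μ a hr) (fun _ ↦ Metric.isOpen_ball.measurableSet) translate_disjoint
    (measure_ne_top_of_subset (Set.iUnion_subset translate_subset) hμs)
  refine Set.infinite_univ (finite_translates.subset fun k _ ↦ ?_)
  exact ((μ.addHaar_ball_center a r).trans (μ.addHaar_ball_center (c k • v + a) r).symm).le

theorem nonempty_interior_of_convex_of_measure_ne_zero [FiniteDimensional ℝ E]
    (hs : Convex ℝ s) (hμs : μ s ≠ 0) : (interior s).Nonempty := by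
  refine nonempty_of_measure_ne_zero (μ := μ) ?_
  rwa [measure_congr (interior_ae_eq_of_null_frontier (hs.addHaar_frontier μ))]

theorem isBounded_of_convex_of_measure_ne_zero_of_measure_ne_top [FiniteDimensional ℝ E]
    (hs : Convex ℝ s) (hμs₀ : μ s ≠ 0) (hμs : μ s ≠ ⊤) : Bornology.IsBounded s := by
  by_contra hbdd
  obtain ⟨v, hv, hvs⟩ := not_bounded_iff_exists_ne_zero_mem_asymptoticCone.1 hbdd
  refine hμs (measure_eq_top_of_forall_smul_add_mem hv
    (nonempty_interior_of_convex_of_measure_ne_zero hs hμs₀) fun x hx c hc ↦ ?_)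
  exact hs.smul_vadd_mem_of_mem_nhds_of_mem_asymptoticCone hc (mem_interior_iff_mem_nhds.1 hx) hvs

theorem exists_ne_zero_mem_lattice_mem_closure_of_measure_mul_two_pow_le_measure
    [FiniteDimensional ℝ E] [Nontrivial E] {L : AddSubgroup E} [Countable L] [DiscreteTopology L]
    {F : Set E} (fund : IsAddFundamentalDomain L F μ) (hF : μ F ≠ ⊤)
    (h_symm : ∀ x ∈ s, -x ∈ s) (h_conv : Convex ℝ s) (h : μ F * 2 ^ finrank ℝ E ≤ μ s) :
    ∃ x ≠ 0, ((x : L) : E) ∈ closure s := by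
  rcases h.lt_or_eq with h_lt | h_eq
  · obtain ⟨x, hx₀, hx⟩ :=
      exists_ne_zero_mem_lattice_of_measure_mul_two_pow_lt_measure fund h_symm h_conv h_lt
    exact ⟨x, hx₀, subset_closure hx⟩
  · have hμs₀ : μ s ≠ 0 := h_eq ▸ mul_ne_zero (fund.measure_ne_zero (NeZero.ne μ)) (by simp)
    have hμs : μ s ≠ ⊤ := h_eq ▸ ENNReal.mul_ne_top hF (by simp)
    have h_bdd := isBounded_of_convex_of_measure_ne_zero_of_measure_ne_top h_conv hμs₀ hμs
    exact exists_ne_zero_mem_lattice_of_measure_mul_two_pow_le_measure fund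
      (fun _ hx ↦ map_mem_closure continuous_neg hx h_symm) h_conv.closure h_bdd.isCompact_closure
      (h.trans (measure_mono subset_closure))

theorem exists_ne_zero_mem_span_int_mem_closure_of_measure_mul_two_pow_le_measure {ι : Type*}
    [Finite ι] [Nonempty ι] (b : Basis ι ℝ E) (h_symm : ∀ x ∈ s, -x ∈ s) (h_conv : Convex ℝ s)
    (h : μ (fundamentalDomain b) * 2 ^ finrank ℝ E ≤ μ s) :
    ∃ x ∈ Submodule.span ℤ (Set.range b), x ≠ 0 ∧ x ∈ closure s := by
  have : Nontrivial E := nontrivial_of_ne _ _ (b.ne_zero (Classical.arbitrary ι))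
  have : FiniteDimensional ℝ E := b.finiteDimensional_of_finite
  let L := Submodule.span ℤ (Set.range b)
  have : Countable L.toAddSubgroup := inferInstanceAs (Countable L)
  have : DiscreteTopology L.toAddSubgroup := inferInstanceAs (DiscreteTopology L)
  obtain ⟨x, hx₀, hx⟩ := exists_ne_zero_mem_lattice_mem_closure_of_measure_mul_two_pow_le_measure
    (ZSpan.isAddFundamentalDomain' b μ) (fundamentalDomain_isBounded b).measure_lt_top.ne
    h_symm h_conv h
  exact ⟨x, x.2, by simpa using hx₀, hx⟩

end HaarMeasure

theorem mem_span_int_range_col_iff {R m n : Type*} [Ring R] [Fintype n] {B : Matrix m n R}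
    {x : m → R} :
    x ∈ Submodule.span ℤ (Set.range B.col) ↔ ∃ k : n → ℤ, B.mulVec (fun i ↦ (k i : R)) = x := by
  have mulVec_intCast (k : n → ℤ) : B.mulVec (fun i ↦ (k i : R)) = ∑ i, k i • B.col i := by
    ext j
    simp [Matrix.mulVec, dotProduct, Finset.sum_apply, Int.cast_comm]
  simp only [Submodule.mem_span_range_iff_exists_fun, mulVec_intCast]

theorem minkowski_lattice_point_boundary_general {ι : Type*} [Fintype ι] [DecidableEq ι]
    [Nonempty ι] {B : Matrix ι ι ℝ} (hB : B.det ≠ 0) {C : Set (ι → ℝ)} (hconv : Convex ℝ C)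
    (hsymm : C = -C) (hvol : ENNReal.ofReal (2 ^ Fintype.card ι * |B.det|) ≤ volume C) :
    ∃ m : ι → ℤ, m ≠ 0 ∧ B.mulVec (fun i => (m i : ℝ)) ∈ closure C := by
  have hcol : LinearIndependent ℝ B.col :=
    Matrix.linearIndependent_cols_of_isUnit ((Matrix.isUnit_iff_isUnit_det B).2 hB.isUnit)
  let b : Basis ι ℝ (ι → ℝ) :=
    basisOfLinearIndependentOfCardEqFinrank hcol (finrank_fintype_fun_eq_card ℝ).symm
  have hb : ⇑b = B.col := coe_basisOfLinearIndependentOfCardEqFinrank hcol _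
  have volume_domain : volume (fundamentalDomain b) = ENNReal.ofReal |B.det| := by
    rw [volume_fundamentalDomain, hb, ← B.det_transpose]
    rfl
  have hvol_domain : volume (fundamentalDomain b) * 2 ^ finrank ℝ (ι → ℝ) ≤ volume C := by
    rwa [volume_domain, finrank_fintype_fun_eq_card, mul_comm, ← ENNReal.ofReal_ofNat 2,
      ← ENNReal.ofReal_pow zero_le_two, ← ENNReal.ofReal_mul (by positivity)]
  obtain ⟨x, hxb, hx₀, hx⟩ :=
    exists_ne_zero_mem_span_int_mem_closure_of_measure_mul_two_pow_le_measure b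
      (s := C) (fun _ hx ↦ hsymm.subset hx) hconv hvol_domain
  rw [hb] at hxb
  obtain ⟨m, rfl⟩ := mem_span_int_range_col_iff.1 hxb
  refine ⟨m, fun hm ↦ hx₀ ?_, hx⟩
  simp [hm, ← Pi.zero_def]

theorem minkowski_lattice_point_boundary (n : ℕ) (hn : 1 ≤ n)
    (B : Matrix (Fin n) (Fin n) ℝ) (hB : B.det ≠ 0)
    (C : Set (Fin n → ℝ)) (hbd : Bornology.IsBounded C)
    (hconv : Convex ℝ C) (hsymm : C = -C)
    (hvol : ENNReal.ofReal (2 ^ n * |B.det|) ≤ volume C) :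
    ∃ m : Fin n → ℤ, m ≠ 0 ∧ B.mulVec (fun i => (m i : ℝ)) ∈ closure C := by
  have : Nonempty (Fin n) := ⟨⟨0, hn⟩⟩
  exact minkowski_lattice_point_boundary_general hB hconv hsymm (by rwa [Fintype.card_fin])
end

section
/- Minkowski's theorem on the first minimum of a quadratic form: Let n ≥ 2 and let Q(x) = xᵀAx be a positive definite quadratic form on ℝⁿ given by a symmetric positive definite real n×n matrix A with determinant D = det(A). Then there exist integers x₁,…,xₙ, not all zero, such that Q(x₁,…,xₙ) ≤ (4/π)·Γ(n/2 + 1)^{2/n}·D^{1/n}, where Γ denotes the Gamma function. -/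
open Matrix

/-!
Writing `A = Bᵀ * B`, the ellipsoid `Q ≤ R` is the preimage under `B` of the Euclidean ball of
radius `√R`, so its volume is `(π R) ^ (n / 2) / (Γ (n / 2 + 1) * √(det A))`. The bound in the
theorem is the value of `R` at which this volume equals `2 ^ n`, which is what Minkowski's convex
body theorem for the lattice `ℤⁿ` requires.
-/

open MeasureTheory

theorem rpow_div_natCast_pow {x : ℝ} (hx : 0 ≤ x) (y : ℝ) {n : ℕ} (hn : n ≠ 0) :
    (x ^ (y / n)) ^ n = x ^ y := by
  rw [← Real.rpow_mul_natCast hx, div_mul_cancel₀ y (Nat.cast_ne_zero.mpr hn)]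

section

variable {ι : Type*} [Fintype ι]

theorem exists_int_ne_zero_mem_of_two_pow_le_volume [Nonempty ι] {s : Set (ι → ℝ)}
    (h_symm : ∀ x ∈ s, -x ∈ s) (h_conv : Convex ℝ s) (h_cpt : IsCompact s)
    (h_vol : 2 ^ Fintype.card ι ≤ volume s) :
    ∃ x : ι → ℤ, x ≠ 0 ∧ (fun i ↦ (x i : ℝ)) ∈ s := by
  let b := Pi.basisFun ℝ ι
  let L := Submodule.span ℤ (Set.range b)
  have : Countable L.toAddSubgroup := inferInstanceAs (Countable L)
  have : DiscreteTopology L.toAddSubgroup := inferInstanceAs (DiscreteTopology L)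
  have h_covol : volume (ZSpan.fundamentalDomain b) * 2 ^ Module.finrank ℝ (ι → ℝ) ≤ volume s := by
    simpa [b, ZSpan.fundamentalDomain_pi_basisFun, Real.volume_pi_Ico] using h_vol
  obtain ⟨⟨x, hxL⟩, hx_ne, hxs⟩ :=
    exists_ne_zero_mem_lattice_of_measure_mul_two_pow_le_measure
      (ZSpan.isAddFundamentalDomain' b volume) h_symm h_conv h_cpt h_covol
  choose z hz using (b.mem_span_iff_repr_mem ℤ x).mp hxL
  obtain rfl : (fun i ↦ (z i : ℝ)) = x := funext fun i ↦ by simpa [b] using hz i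
  refine ⟨z, ?_, hxs⟩
  rintro rfl
  exact hx_ne (Subtype.ext (funext fun _ ↦ Int.cast_zero))

theorem dotProduct_transpose_mul_self_mulVec {κ : Type*} [Fintype κ] (B : Matrix κ ι ℝ)
    (x : ι → ℝ) : x ⬝ᵥ (Bᵀ * B) *ᵥ x = ‖WithLp.toLp 2 (B *ᵥ x)‖ ^ 2 := by
  rw [EuclideanSpace.real_norm_sq_eq, ← mulVec_mulVec, dotProduct_mulVec, vecMul_transpose]
  simp only [dotProduct, sq]

open scoped MatrixOrder Matrix.Norms.L2Operator in
theorem exists_isUnit_eq_transpose_mul_self [DecidableEq ι] {A : Matrix ι ι ℝ}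
    (hA : A.PosDef) :
    ∃ B : Matrix ι ι ℝ, IsUnit B ∧ A = Bᵀ * B := by
  simpa only [star_eq_conjTranspose, conjTranspose_eq_transpose_of_trivial] using
    CStarAlgebra.isStrictlyPositive_iff_eq_star_mul_self.mp hA.isStrictlyPositive

/-- The solid ellipsoid `Q ≤ R` of the quadratic form `Q x = x ⬝ᵥ A *ᵥ x`, as a subset of `ι → ℝ`
with its product measure. The parameter `R` bounds the form itself, so it is the square of a
radius. -/
def ellipsoid (A : Matrix ι ι ℝ) (R : ℝ) : Set (ι → ℝ) :=
  {x | x ⬝ᵥ A *ᵥ x ≤ R}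

namespace ellipsoid

variable {A : Matrix ι ι ℝ} {R : ℝ}

theorem neg_mem {x : ι → ℝ} (hx : x ∈ ellipsoid A R) : -x ∈ ellipsoid A R := by
  simpa [ellipsoid, mulVec_neg] using hx

protected theorem convex (hA : A.PosSemidef) (R : ℝ) : Convex ℝ (ellipsoid A R) := by
  intro x hx y hy a b ha hb hab
  obtain rfl : b = 1 - a := by linarith
  have h_sub : 0 ≤ (x - y) ⬝ᵥ A *ᵥ (x - y) := hA.dotProduct_mulVec_nonneg (x - y)
  calc (a • x + (1 - a) • y) ⬝ᵥ A *ᵥ (a • x + (1 - a) • y)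
      = a * (x ⬝ᵥ A *ᵥ x) + (1 - a) * (y ⬝ᵥ A *ᵥ y)
          - a * (1 - a) * ((x - y) ⬝ᵥ A *ᵥ (x - y)) := by
        simp only [mulVec_add, mulVec_sub, mulVec_smul, dotProduct_add, add_dotProduct,
          dotProduct_sub, sub_dotProduct, dotProduct_smul, smul_dotProduct, smul_eq_mul]
        ring
    _ ≤ a * (x ⬝ᵥ A *ᵥ x) + (1 - a) * (y ⬝ᵥ A *ᵥ y) :=
        sub_le_self _ (mul_nonneg (mul_nonneg ha hb) h_sub)
    _ ≤ a * R + (1 - a) * R := by gcongr <;> assumption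
    _ = R := by ring

theorem transpose_mul_self_eq_preimage {κ : Type*} [Fintype κ] (B : Matrix κ ι ℝ) (hR : 0 ≤ R) :
    ellipsoid (Bᵀ * B) R =
      B.mulVecLin ⁻¹' (WithLp.toLp 2 ⁻¹' Metric.closedBall (0 : EuclideanSpace ℝ κ) √R) := by
  ext x
  simp [ellipsoid, dotProduct_transpose_mul_self_mulVec, Real.le_sqrt, hR]

protected theorem isCompact (hA : A.PosDef) (hR : 0 ≤ R) : IsCompact (ellipsoid A R) := by
  classical
  obtain ⟨B, hB, rfl⟩ := exists_isUnit_eq_transpose_mul_self hA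
  have hB_inj : Function.Injective B.mulVecLin := mulVec_injective_of_isUnit hB
  have hB_emb := LinearMap.isClosedEmbedding_of_injective (LinearMap.ker_eq_bot.mpr hB_inj)
  rw [transpose_mul_self_eq_preimage B hR]
  exact hB_emb.isCompact_preimage
    ((PiLp.homeomorph 2 _).symm.isCompact_preimage.mpr (isCompact_closedBall 0 √R))

theorem volume_eq [Nonempty ι] [DecidableEq ι] (hA : A.PosDef) (hR : 0 ≤ R) :
    volume (ellipsoid A R) = ENNReal.ofReal (√(Real.pi * R) ^ Fintype.card ι /
      (Real.Gamma (Fintype.card ι / 2 + 1) * √A.det)) := by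
  obtain ⟨B, hB, rfl⟩ := exists_isUnit_eq_transpose_mul_self hA
  have h_det : LinearMap.det B.mulVecLin ≠ 0 := by
    simpa [← toLin'_apply'] using (B.isUnit_iff_isUnit_det.mp hB).ne_zero
  have h_sqrt_det : √(Bᵀ * B).det = |B.det| := by
    rw [det_mul, det_transpose, Real.sqrt_mul_self_eq_abs]
  rw [transpose_mul_self_eq_preimage B hR, Measure.addHaar_preimage_linearMap _ h_det,
    (PiLp.volume_preserving_toLp ι).measure_preimage
      Metric.isClosed_closedBall.nullMeasurableSet,
    EuclideanSpace.volume_closedBall, ← ENNReal.ofReal_pow (by positivity),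
    ← ENNReal.ofReal_mul (by positivity), ← ENNReal.ofReal_mul (by positivity),
    h_sqrt_det, ← toLin'_apply', LinearMap.det_toLin', abs_inv, Real.sqrt_mul Real.pi_nonneg,
    mul_pow]
  congr 1
  ring

theorem two_pow_le_volume_of_le_pow [Nonempty ι] [DecidableEq ι] (hA : A.PosDef) (hR : 0 ≤ R)
    (h : (4 / Real.pi) ^ Fintype.card ι * Real.Gamma (Fintype.card ι / 2 + 1) ^ 2 * A.det ≤
      R ^ Fintype.card ι) :
    2 ^ Fintype.card ι ≤ volume (ellipsoid A R) := by
  have h_det : 0 < √A.det := Real.sqrt_pos.mpr hA.det_pos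
  have : 0 < Real.Gamma (Fintype.card ι / 2 + 1) := Real.Gamma_pos_of_pos (by positivity)
  have h_four : ((2 : ℝ) ^ Fintype.card ι) ^ 2 =
      Real.pi ^ Fintype.card ι * (4 / Real.pi) ^ Fintype.card ι := by
    rw [← mul_pow, mul_div_cancel₀ _ Real.pi_ne_zero, pow_right_comm]
    norm_num
  rw [volume_eq hA hR, ← ENNReal.ofReal_ofNat 2, ← ENNReal.ofReal_pow zero_le_two]
  refine ENNReal.ofReal_le_ofReal ((le_div_iff₀ (by positivity)).mpr ?_)
  refine le_of_sq_le_sq ?_ (by positivity)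
  calc (2 ^ Fintype.card ι * (Real.Gamma (Fintype.card ι / 2 + 1) * √A.det)) ^ 2
      = Real.pi ^ Fintype.card ι * ((4 / Real.pi) ^ Fintype.card ι *
          Real.Gamma (Fintype.card ι / 2 + 1) ^ 2 * A.det) := by
        rw [mul_pow, mul_pow, Real.sq_sqrt hA.det_pos.le, h_four]
        ring
    _ ≤ Real.pi ^ Fintype.card ι * R ^ Fintype.card ι := by gcongr
    _ = (√(Real.pi * R) ^ Fintype.card ι) ^ 2 := by
        rw [pow_right_comm, Real.sq_sqrt (by positivity), mul_pow]

end ellipsoid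

theorem minkowski_first_minimum_general [Nonempty ι] [DecidableEq ι]
    (A : Matrix ι ι ℝ) (hA : A.PosDef) :
    ∃ x : ι → ℤ, x ≠ 0 ∧
      (fun i => (x i : ℝ)) ⬝ᵥ A.mulVec (fun i => (x i : ℝ)) ≤
        (4 / Real.pi) * Real.Gamma ((Fintype.card ι : ℝ) / 2 + 1) ^ ((2 : ℝ) / Fintype.card ι) *
          A.det ^ ((1 : ℝ) / Fintype.card ι) := by
  have h_card : Fintype.card ι ≠ 0 := Fintype.card_ne_zero
  have h_det : 0 ≤ A.det := hA.det_pos.le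
  have h_Gamma : 0 ≤ Real.Gamma ((Fintype.card ι : ℝ) / 2 + 1) :=
    Real.Gamma_nonneg_of_nonneg (by positivity)
  set R := (4 / Real.pi) * Real.Gamma ((Fintype.card ι : ℝ) / 2 + 1) ^
    ((2 : ℝ) / Fintype.card ι) * A.det ^ ((1 : ℝ) / Fintype.card ι)
  have hR : 0 ≤ R := by positivity
  have hR_pow : R ^ Fintype.card ι = (4 / Real.pi) ^ Fintype.card ι *
      Real.Gamma ((Fintype.card ι : ℝ) / 2 + 1) ^ 2 * A.det := by
    rw [mul_pow, mul_pow, rpow_div_natCast_pow h_Gamma 2 h_card,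
      rpow_div_natCast_pow h_det 1 h_card, Real.rpow_two, Real.rpow_one]
  exact exists_int_ne_zero_mem_of_two_pow_le_volume (fun _ ↦ ellipsoid.neg_mem)
    (ellipsoid.convex hA.posSemidef R) (ellipsoid.isCompact hA hR)
    (ellipsoid.two_pow_le_volume_of_le_pow hA hR hR_pow.ge)

end

theorem minkowski_first_minimum (n : ℕ) (hn : 2 ≤ n)
    (A : Matrix (Fin n) (Fin n) ℝ) (hA : A.PosDef) :
    ∃ x : Fin n → ℤ, x ≠ 0 ∧
      (fun i => (x i : ℝ)) ⬝ᵥ A.mulVec (fun i => (x i : ℝ)) ≤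
        (4 / Real.pi) * Real.Gamma ((n : ℝ) / 2 + 1) ^ ((2 : ℝ) / n) *
          A.det ^ ((1 : ℝ) / n) := by
  have : Nonempty (Fin n) := ⟨0, by lia⟩
  simpa only [Fintype.card_fin] using minkowski_first_minimum_general A hA
end

section
/- Blichfeldt's improvement of the Hermite constant bound: Let n ≥ 2 and let Q(x) = xᵀAx be a positive definite quadratic form on ℝⁿ given by a symmetric positive definite real n×n matrix A with determinant D = det(A). Then there exist integers x₁,…,xₙ, not all zero, such that Q(x₁,…,xₙ) ≤ (2/π)·Γ(2 + n/2)^{2/n}·D^{1/n}, where Γ denotes the Gamma function. -/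
/-!
The form `xᵀAx` is the squared norm on a Euclidean lattice `L` whose basis has Gram matrix `A`, so
`det A` is the square of the covolume of `L`. Let `2c` be the minimal squared norm of a nonzero
vector of `L`. Minkowski's argument would pack disjoint balls of radius `√(c / 2)` around the points
of `L`; Blichfeldt's enlarges them to overlapping balls of radius `√c` carrying the density
`c - ‖z‖²`. Since `∑ ‖vᵢ - vⱼ‖² ≤ 2m ∑ ‖vᵢ‖²` for any `m` vectors, points at mutual squared distance
at least `2c` satisfy `∑ (c - ‖vᵢ‖²) ≤ c`: the total density at each point of space is at most `c`.
Comparing the mass of one ball with `c` times the covolume gives the bound.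
-/

open Matrix
open MeasureTheory Module Metric
open scoped Real Finset

section Separation

variable {ι E : Type*} [NormedAddCommGroup E] [InnerProductSpace ℝ E] {c : ℝ} {v : ι → E}

theorem sum_sum_norm_sub_sq (s : Finset ι) (v : ι → E) :
    ∑ i ∈ s, ∑ j ∈ s, ‖v i - v j‖ ^ 2 =
      2 * #s * ∑ i ∈ s, ‖v i‖ ^ 2 - 2 * ‖∑ i ∈ s, v i‖ ^ 2 := by
  have norm_sum_sq : ‖∑ i ∈ s, v i‖ ^ 2 = ∑ i ∈ s, ∑ j ∈ s, inner ℝ (v i) (v j) := by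
    simp_rw [← real_inner_self_eq_norm_sq, sum_inner, inner_sum]
  simp_rw [norm_sum_sq, norm_sub_sq_real, Finset.sum_add_distrib, Finset.sum_sub_distrib,
    Finset.sum_const, nsmul_eq_mul, ← Finset.mul_sum]
  ring

theorem sum_sub_norm_sq_le_of_pairwise {s : Finset ι} (hs : s.Nonempty)
    (hv : (s : Set ι).Pairwise fun i j ↦ 2 * c ≤ ‖v i - v j‖ ^ 2) :
    ∑ i ∈ s, (c - ‖v i‖ ^ 2) ≤ c := by
  classical
  have hcard : (0 : ℝ) < #s := by exact_mod_cast hs.card_pos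
  have le_sum_norm_sub_sq (i) (hi : i ∈ s) : (#s - 1) * (2 * c) ≤ ∑ j ∈ s, ‖v i - v j‖ ^ 2 := by
    rw [← Finset.add_sum_erase s _ hi, sub_self, norm_zero, zero_pow two_ne_zero, zero_add,
      ← Finset.cast_card_erase_of_mem hi, ← nsmul_eq_mul]
    exact Finset.card_nsmul_le_sum _ _ _ fun j hj ↦
      hv hi (Finset.mem_of_mem_erase hj) (Finset.ne_of_mem_erase hj).symm
  have le_sum_norm_sq : #s * ((#s - 1) * c) ≤ #s * ∑ i ∈ s, ‖v i‖ ^ 2 := by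
    have := Finset.card_nsmul_le_sum s _ _ le_sum_norm_sub_sq
    rw [nsmul_eq_mul, sum_sum_norm_sub_sq] at this
    linarith [sq_nonneg ‖∑ i ∈ s, v i‖]
  rw [Finset.sum_sub_distrib, Finset.sum_const, nsmul_eq_mul]
  linarith [le_of_mul_le_mul_left le_sum_norm_sq hcard]

theorem tsum_ofReal_sub_norm_sq_le_of_pairwise
    (hv : Pairwise fun i j ↦ 2 * c ≤ ‖v i - v j‖ ^ 2) :
    ∑' i, ENNReal.ofReal (c - ‖v i‖ ^ 2) ≤ ENNReal.ofReal c := by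
  rw [ENNReal.tsum_eq_iSup_sum]
  refine iSup_le fun s ↦ ?_
  let t := s.filter fun i ↦ 0 < c - ‖v i‖ ^ 2
  calc ∑ i ∈ s, ENNReal.ofReal (c - ‖v i‖ ^ 2)
      = ∑ i ∈ t, ENNReal.ofReal (c - ‖v i‖ ^ 2) :=
        (Finset.sum_filter_of_ne fun i _ hi ↦ by simpa using hi).symm
    _ = ENNReal.ofReal (∑ i ∈ t, (c - ‖v i‖ ^ 2)) :=
        (ENNReal.ofReal_sum_of_nonneg fun i hi ↦ (Finset.mem_filter.1 hi).2.le).symm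
    _ ≤ ENNReal.ofReal c := by
        rcases t.eq_empty_or_nonempty with ht | ht
        · simp [ht]
        · exact ENNReal.ofReal_le_ofReal
            (sum_sub_norm_sq_le_of_pairwise ht fun i _ j _ hij ↦ hv hij)

end Separation

section Integral

theorem lintegral_Ioo_sub_rpow {c d : ℝ} (hc : 0 ≤ c) (hd : 0 ≤ d) :
    ∫⁻ t in Set.Ioo 0 c, ENNReal.ofReal ((c - t) ^ d) =
      ENNReal.ofReal (c ^ (d + 1) / (d + 1)) := by
  have continuous_rpow : Continuous fun t : ℝ ↦ (c - t) ^ d :=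
    (continuous_const.sub continuous_id).rpow_const fun _ ↦ .inr hd
  have integral_eq : ∫ t in Set.Ioo 0 c, (c - t) ^ d = c ^ (d + 1) / (d + 1) := by
    rw [← integral_Ioc_eq_integral_Ioo, ← intervalIntegral.integral_of_le hc,
      intervalIntegral.integral_comp_sub_left (fun s ↦ s ^ d) c, sub_self, sub_zero,
      integral_rpow (.inl (by linarith)), Real.zero_rpow (by positivity), sub_zero]
  rw [← integral_eq, ofReal_integral_eq_lintegral_ofReal]
  · exact (continuous_rpow.integrableOn_Icc).mono_set Set.Ioo_subset_Icc_self
  · exact ae_restrict_of_forall_mem measurableSet_Ioo fun t ht ↦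
      Real.rpow_nonneg (sub_nonneg.2 ht.2.le) d

variable {E : Type*} [NormedAddCommGroup E] [NormedSpace ℝ E] [FiniteDimensional ℝ E]
  [MeasurableSpace E] [BorelSpace E] (μ : Measure E) [μ.IsAddHaarMeasure]

theorem measure_setOf_lt_sub_norm_sq (c t : ℝ) :
    μ {z | t < c - ‖z‖ ^ 2} = (Set.Iio c).indicator
      (fun t ↦ ENNReal.ofReal ((c - t) ^ ((finrank ℝ E : ℝ) / 2)) * μ (ball 0 1)) t := by
  have setOf_eq_ball : {z : E | t < c - ‖z‖ ^ 2} = ball 0 √(c - t) := by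
    ext z
    simp [Real.lt_sqrt (norm_nonneg z), lt_sub_comm]
  rw [setOf_eq_ball]
  by_cases htc : t < c
  · rw [Set.indicator_of_mem (Set.mem_Iio.2 htc),
      Measure.addHaar_ball_of_pos _ _ (Real.sqrt_pos.2 (sub_pos.2 htc)), Real.sqrt_eq_rpow,
      ← Real.rpow_mul_natCast (sub_pos.2 htc).le, one_div_mul_eq_div]
  · rw [Set.indicator_of_notMem (by simpa using htc),
      Real.sqrt_eq_zero_of_nonpos (by linarith), ball_zero, measure_empty]

theorem lintegral_ofReal_sub_norm_sq {c : ℝ} (hc : 0 ≤ c) :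
    ∫⁻ z, ENNReal.ofReal (c - ‖z‖ ^ 2) ∂μ =
      ENNReal.ofReal (c ^ ((finrank ℝ E : ℝ) / 2 + 1) / ((finrank ℝ E : ℝ) / 2 + 1)) *
        μ (ball 0 1) := by
  calc ∫⁻ z, ENNReal.ofReal (c - ‖z‖ ^ 2) ∂μ
      = ∫⁻ z, ENNReal.ofReal (max (c - ‖z‖ ^ 2) 0) ∂μ := by simp [ENNReal.ofReal_max]
    _ = ∫⁻ t in Set.Ioi 0, μ {z | t < max (c - ‖z‖ ^ 2) 0} :=
        lintegral_eq_lintegral_meas_lt μ (.of_forall fun _ ↦ le_max_right _ _) (by fun_prop)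
    _ = ∫⁻ t in Set.Ioi 0, μ {z | t < c - ‖z‖ ^ 2} :=
        setLIntegral_congr_fun measurableSet_Ioi fun t ht ↦ by
          simp only [lt_max_iff, (Set.mem_Ioi.1 ht).not_gt, or_false]
    _ = ∫⁻ t in Set.Ioo 0 c,
          ENNReal.ofReal ((c - t) ^ ((finrank ℝ E : ℝ) / 2)) * μ (ball 0 1) := by
        simp_rw [measure_setOf_lt_sub_norm_sq]
        rw [setLIntegral_indicator measurableSet_Iio, Set.Iio_inter_Ioi]
    _ = _ := by
        rw [lintegral_mul_const _ (by fun_prop), lintegral_Ioo_sub_rpow hc (by positivity)]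

end Integral

section Lattice

theorem lintegral_ofReal_sub_norm_sq_le_mul_measure {E : Type*} [NormedAddCommGroup E]
    [InnerProductSpace ℝ E] [MeasurableSpace E] [BorelSpace E] {μ : Measure E}
    [μ.IsAddLeftInvariant] {L : AddSubgroup E} [Countable L] {F : Set E}
    (hF : IsAddFundamentalDomain L F μ) {c : ℝ} (hL : ∀ x ∈ L, x ≠ 0 → 2 * c ≤ ‖x‖ ^ 2) :
    ∫⁻ z, ENNReal.ofReal (c - ‖z‖ ^ 2) ∂μ ≤ ENNReal.ofReal c * μ F := by
  have separated (z : E) : Pairwise fun g h : L ↦ 2 * c ≤ ‖(g +ᵥ z) - (h +ᵥ z)‖ ^ 2 := by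
    intro g h hgh
    rw [AddSubgroup.vadd_def, AddSubgroup.vadd_def, vadd_eq_add, vadd_eq_add,
      add_sub_add_right_eq_sub]
    exact hL _ (sub_mem g.2 h.2) (sub_ne_zero.2 (Subtype.coe_ne_coe.2 hgh))
  calc ∫⁻ z, ENNReal.ofReal (c - ‖z‖ ^ 2) ∂μ
      = ∑' g : L, ∫⁻ z in F, ENNReal.ofReal (c - ‖g +ᵥ z‖ ^ 2) ∂μ := hF.lintegral_eq_tsum'' _
    _ = ∫⁻ z in F, ∑' g : L, ENNReal.ofReal (c - ‖g +ᵥ z‖ ^ 2) ∂μ :=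
        (lintegral_tsum fun g ↦ by fun_prop).symm
    _ ≤ ∫⁻ _ in F, ENNReal.ofReal c ∂μ :=
        lintegral_mono fun z ↦ tsum_ofReal_sub_norm_sq_le_of_pairwise (separated z)
    _ = ENNReal.ofReal c * μ F := setLIntegral_const F _

theorem exists_mem_ne_zero_forall_norm_le {E : Type*} [NormedAddCommGroup E] [ProperSpace E]
    (L : AddSubgroup E) [DiscreteTopology L] (hL : L ≠ ⊥) :
    ∃ x ∈ L, x ≠ 0 ∧ ∀ y ∈ L, y ≠ 0 → ‖x‖ ≤ ‖y‖ := by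
  have norm_tendsto : Filter.Tendsto (fun x : L ↦ ‖(x : E)‖) .cofinite .atTop :=
    (tendsto_norm_cocompact_atTop (E := E)).comp
      (L.tendsto_coe_cofinite_of_discrete (isDiscrete_iff_discreteTopology.2 inferInstance))
  obtain ⟨y, hy0⟩ := L.ne_bot_iff_exists_ne_zero.1 hL
  obtain ⟨x, hx0, hx⟩ := norm_tendsto.exists_within_forall_le (s := {0}ᶜ) ⟨y, hy0⟩
  exact ⟨x, x.2, by simpa using hx0, fun y hy hy0 ↦ hx ⟨y, hy⟩ (by simpa using hy0)⟩

variable {E : Type*} [NormedAddCommGroup E] [InnerProductSpace ℝ E] [FiniteDimensional ℝ E]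
  [MeasurableSpace E] [BorelSpace E] (L : Submodule ℤ E) [DiscreteTopology L] [IsZLattice ℝ L]

theorem covolume_sq_eq_det_gram {ι : Type*} [Fintype ι] [DecidableEq ι] (b : Basis ι ℤ L) :
    ZLattice.covolume L ^ 2 = (gram ℝ fun i ↦ (b i : E)).det := by
  let o : OrthonormalBasis ι ℝ E := (stdOrthonormalBasis ℝ E).reindex
    (Fintype.equivOfCardEq (by simp [finrank_eq_card_basis (b.ofZLatticeBasis ℝ L)]))
  have measure_fundamentalDomain : volume.real (ZSpan.fundamentalDomain o.toBasis) = 1 := by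
    rw [measureReal_congr (ZSpan.fundamentalDomain_ae_parallelepiped _ _), Measure.real,
      o.coe_toBasis, o.volume_parallelepiped, ENNReal.toReal_one]
  rw [ZLattice.covolume_eq_det_mul_measureReal L volume b o.toBasis, measure_fundamentalDomain,
    mul_one, sq_abs, gram_eq_conjTranspose_mul o, det_mul, det_conjTranspose, star_trivial, ← sq]
  rfl

theorem lintegral_ofReal_sub_norm_sq_volume [Nontrivial E] {c : ℝ} (hc : 0 ≤ c) :
    ∫⁻ z : E, ENNReal.ofReal (c - ‖z‖ ^ 2) =
      ENNReal.ofReal (c * (π * c) ^ ((finrank ℝ E : ℝ) / 2) /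
        Real.Gamma (2 + (finrank ℝ E : ℝ) / 2)) := by
  set d : ℝ := (finrank ℝ E : ℝ) / 2 with hd
  have hd0 : 0 < d + 1 := by positivity
  have Gamma_eq : Real.Gamma (2 + d) = (d + 1) * Real.Gamma (d + 1) := by
    rw [← Real.Gamma_add_one hd0.ne']
    ring_nf
  have sqrt_pi_pow : √π ^ finrank ℝ E = π ^ d := by
    rw [Real.sqrt_eq_rpow, ← Real.rpow_mul_natCast Real.pi_pos.le, one_div_mul_eq_div]
  rw [lintegral_ofReal_sub_norm_sq volume hc, InnerProductSpace.volume_ball, ENNReal.ofReal_one,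
    one_pow, one_mul, ← ENNReal.ofReal_mul (by positivity), ← hd, sqrt_pi_pow, Gamma_eq,
    Real.rpow_add_one' hc hd0.ne', Real.mul_rpow Real.pi_pos.le hc]
  congr 1
  field_simp

theorem pi_mul_rpow_le_Gamma_mul_covolume [Nontrivial E] {c : ℝ} (hc : 0 < c)
    (hL : ∀ x ∈ L, x ≠ 0 → 2 * c ≤ ‖x‖ ^ 2) :
    (π * c) ^ ((finrank ℝ E : ℝ) / 2) ≤
      Real.Gamma (2 + (finrank ℝ E : ℝ) / 2) * ZLattice.covolume L := by
  have hF := ZLattice.isAddFundamentalDomain (Free.chooseBasis ℤ L) volume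
  set F := ZSpan.fundamentalDomain ((Free.chooseBasis ℤ L).ofZLatticeBasis ℝ)
  have volume_F : volume F = ENNReal.ofReal (ZLattice.covolume L) := by
    rw [ZLattice.covolume_eq_measure_fundamentalDomain L volume hF,
      ofReal_measureReal (ZSpan.fundamentalDomain_isBounded _).measure_lt_top.ne]
  have : Countable L.toAddSubgroup := inferInstanceAs (Countable L)
  have packing := lintegral_ofReal_sub_norm_sq_le_mul_measure (L := L.toAddSubgroup) hF hL
  rw [lintegral_ofReal_sub_norm_sq_volume hc.le, volume_F, ← ENNReal.ofReal_mul hc.le,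
    ENNReal.ofReal_le_ofReal_iff (mul_pos hc (ZLattice.covolume_pos L volume)).le, mul_div_assoc,
    mul_le_mul_iff_right₀ hc, div_le_iff₀' (Real.Gamma_pos_of_pos (by positivity))] at packing
  exact packing

theorem exists_norm_sq_le_Gamma_mul_covolume [Nontrivial E] :
    ∃ x ∈ L, x ≠ 0 ∧ ‖x‖ ^ 2 ≤
      2 / π * Real.Gamma (2 + (finrank ℝ E : ℝ) / 2) ^ ((2 : ℝ) / finrank ℝ E) *
        (ZLattice.covolume L ^ 2) ^ ((1 : ℝ) / finrank ℝ E) := by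
  have hL : L.toAddSubgroup ≠ ⊥ := by
    rw [Ne, ← Submodule.bot_toAddSubgroup (R := ℤ), Submodule.toAddSubgroup_inj]
    rintro rfl
    simpa using IsZLattice.span_top (K := ℝ) (L := (⊥ : Submodule ℤ E))
  have : DiscreteTopology L.toAddSubgroup := inferInstanceAs (DiscreteTopology L)
  obtain ⟨x, hx, hx0, hmin⟩ := exists_mem_ne_zero_forall_norm_le L.toAddSubgroup hL
  refine ⟨x, hx, hx0, ?_⟩
  set d : ℝ := (finrank ℝ E : ℝ)
  have hd : 0 < d := Nat.cast_pos.2 finrank_pos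
  have hΓ : 0 ≤ Real.Gamma (2 + d / 2) := (Real.Gamma_pos_of_pos (by positivity)).le
  have hV : 0 ≤ ZLattice.covolume L := (ZLattice.covolume_pos L volume).le
  have pi_mul_rpow_le : (π * (‖x‖ ^ 2 / 2)) ^ (d / 2) ≤
      Real.Gamma (2 + d / 2) * ZLattice.covolume L := by
    refine pi_mul_rpow_le_Gamma_mul_covolume L (by positivity) fun y hy hy0 ↦ ?_
    rw [mul_div_cancel₀ _ two_ne_zero]
    exact pow_le_pow_left₀ (norm_nonneg x) (hmin y hy hy0) 2
  have pi_mul_le : π * (‖x‖ ^ 2 / 2) ≤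
      Real.Gamma (2 + d / 2) ^ (2 / d) * ZLattice.covolume L ^ (2 / d) := by
    rwa [← Real.le_rpow_inv_iff_of_pos (by positivity) (by positivity) (by positivity), inv_div,
      Real.mul_rpow hΓ hV] at pi_mul_rpow_le
  have covolume_rpow_eq :
      (ZLattice.covolume L ^ 2) ^ (1 / d) = ZLattice.covolume L ^ (2 / d) := by
    rw [← Real.rpow_natCast_mul hV, Nat.cast_ofNat, mul_one_div]
  rw [covolume_rpow_eq, mul_assoc, div_mul_eq_mul_div, le_div_iff₀' Real.pi_pos]
  linarith

end Lattice

section Gram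

theorem exists_gram_eq {ι : Type*} [Fintype ι] {A : Matrix ι ι ℝ} (hA : A.PosSemidef) :
    ∃ v : ι → EuclideanSpace ℝ ι, gram ℝ v = A := by
  classical
  obtain ⟨B, rfl⟩ : ∃ B : Matrix ι ι ℝ, A = star B * B := by
    open scoped MatrixOrder Matrix.Norms.L2Operator in
    exact CStarAlgebra.nonneg_iff_eq_star_mul_self.mp hA.nonneg
  exact ⟨fun j ↦ .toLp 2 (B.col j), gram_eq_conjTranspose_mul (EuclideanSpace.basisFun ι ℝ) _⟩

theorem exists_basis_gram_eq {ι : Type*} [Fintype ι] {A : Matrix ι ι ℝ} (hA : A.PosDef) :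
    ∃ b : Basis ι ℝ (EuclideanSpace ℝ ι), gram ℝ b = A := by
  obtain ⟨v, rfl⟩ := exists_gram_eq hA.posSemidef
  have hv : LinearIndependent ℝ v := linearIndependent_of_posDef_gram hA
  exact ⟨basisOfLinearIndependentOfCardEqFinrank' v hv (by simp), by simp⟩

end Gram

theorem blichfeldt_hermite_bound_general {ι : Type*} [Fintype ι] [DecidableEq ι] [Nonempty ι]
    {A : Matrix ι ι ℝ} (hA : A.PosDef) :
    ∃ x : ι → ℤ, x ≠ 0 ∧
      (fun i => (x i : ℝ)) ⬝ᵥ A.mulVec (fun i => (x i : ℝ)) ≤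
        (2 / π) * Real.Gamma (2 + (Fintype.card ι : ℝ) / 2) ^ ((2 : ℝ) / Fintype.card ι) *
          A.det ^ ((1 : ℝ) / Fintype.card ι) := by
  obtain ⟨b, rfl⟩ := exists_basis_gram_eq hA
  obtain ⟨y, hy, hy0, hbound⟩ :=
    exists_norm_sq_le_Gamma_mul_covolume (Submodule.span ℤ (Set.range b))
  obtain ⟨x, rfl⟩ := (Submodule.mem_span_range_iff_exists_fun ℤ).1 hy
  have quadratic_form_eq : (fun i => (x i : ℝ)) ⬝ᵥ (gram ℝ b).mulVec (fun i => (x i : ℝ)) =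
      ‖∑ i, x i • b i‖ ^ 2 := by
    simp_rw [← real_inner_self_eq_norm_sq, ← Int.cast_smul_eq_zsmul ℝ]
    exact star_dotProduct_gram_mulVec b _ _
  have covolume_sq_eq :
      ZLattice.covolume (Submodule.span ℤ (Set.range b)) ^ 2 = (gram ℝ b).det := by
    simpa using covolume_sq_eq_det_gram _ (b.restrictScalars ℤ)
  rw [covolume_sq_eq, finrank_euclideanSpace] at hbound
  exact ⟨x, by rintro rfl; simp at hy0, quadratic_form_eq.trans_le hbound⟩

theorem blichfeldt_hermite_bound (n : ℕ) (hn : 2 ≤ n)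
    (A : Matrix (Fin n) (Fin n) ℝ) (hA : A.PosDef) :
    ∃ x : Fin n → ℤ, x ≠ 0 ∧
      (fun i => (x i : ℝ)) ⬝ᵥ A.mulVec (fun i => (x i : ℝ)) ≤
        (2 / Real.pi) * Real.Gamma (2 + (n : ℝ) / 2) ^ ((2 : ℝ) / n) *
          A.det ^ ((1 : ℝ) / n) := by
  have : Nonempty (Fin n) := ⟨⟨0, by omega⟩⟩
  simpa using blichfeldt_hermite_bound_general hA
end

section
/- Minkowski's linear forms theorem: Let n ≥ 1 and let Y_j(X) = α_{j1}X₁ + ⋯ + α_{jn}Xₙ for j = 1,…,n be linear forms with real coefficients α_{jk}. Let λ₁,…,λₙ be positive reals with λ₁·…·λₙ ≥ |det(α_{jk})|. Then there exist integers x₁,…,xₙ, not all zero, such that |Y_j(x₁,…,xₙ)| ≤ λ_j for all j = 1,…,n. -/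
open Matrix

/-!
Apply Minkowski's convex body theorem to the preimage `s` of the box `∏ [-l j, l j]` under `α`. If
`det α ≠ 0`, then `s` is compact of volume `2 ^ n * ∏ l j / |det α| ≥ 2 ^ n`. If `det α = 0`, then
`s` has infinite volume: stretching by a factor `2` along a vector of the kernel maps `s` to itself
but doubles volumes, and `s` is a neighbourhood of `0`.
-/

open MeasureTheory Module Set
open scoped Topology ENNReal

section Lattice

variable {E : Type*} [NormedAddCommGroup E] [NormedSpace ℝ E] [FiniteDimensional ℝ E]
  [MeasurableSpace E] [BorelSpace E] (μ : Measure E) [μ.IsAddHaarMeasure]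

theorem addHaar_eq_top_of_preimage_linearMap_eq {g : E →ₗ[ℝ] E} {s : Set E}
    (hg₀ : LinearMap.det g ≠ 0) (hg₁ : |LinearMap.det g| ≠ 1) (hgs : g ⁻¹' s = s)
    (hs : μ s ≠ 0) : μ s = ∞ := by
  by_contra hs_top
  have h_scale : ENNReal.ofReal |(LinearMap.det g)⁻¹| * μ s = 1 * μ s := by
    rw [← Measure.addHaar_preimage_linearMap μ hg₀, hgs, one_mul]
  rw [ENNReal.mul_left_inj hs hs_top, ENNReal.ofReal_eq_one, abs_inv, inv_eq_one] at h_scale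
  exact hg₁ h_scale

theorem addHaar_preimage_linearMap_eq_top {F : Type*} [AddCommGroup F] [Module ℝ F]
    [TopologicalSpace F] [IsTopologicalAddGroup F] [ContinuousSMul ℝ F] {f : E →ₗ[ℝ] F}
    (hf : f.ker ≠ ⊥) {s : Set F} (hs : s ∈ 𝓝 0) : μ (f ⁻¹' s) = ∞ := by
  obtain ⟨v, hfv, hv⟩ := f.ker.ne_bot_iff.mp hf
  obtain ⟨φ, hφv⟩ := Projective.exists_dual_eq_one ℝ hv
  have h_det : LinearMap.det (LinearMap.transvection φ v) = 2 := by
    rw [LinearMap.transvection.det, hφv, one_add_one_eq_two]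
  have h_inv : LinearMap.transvection φ v ⁻¹' (f ⁻¹' s) = f ⁻¹' s := by
    ext x
    simp [LinearMap.transvection.apply, LinearMap.mem_ker.mp hfv]
  have h_nhds : f ⁻¹' s ∈ 𝓝 0 :=
    f.continuous_of_finiteDimensional.continuousAt.preimage_mem_nhds (by rwa [map_zero])
  exact addHaar_eq_top_of_preimage_linearMap_eq μ (by norm_num [h_det]) (by norm_num [h_det]) h_inv
    (μ.measure_pos_of_mem_nhds h_nhds).ne'

variable {μ}

theorem exists_ne_zero_mem_lattice_map_mem [Nontrivial E] {L : AddSubgroup E} [Countable L]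
    [DiscreteTopology L] {D : Set E} (fund : IsAddFundamentalDomain L D μ) (hD : μ D ≠ ∞)
    (f : E →ₗ[ℝ] E) {K : Set E} (h_symm : ∀ x ∈ K, -x ∈ K) (h_conv : Convex ℝ K)
    (h_cpt : IsCompact K) (h_nhds : K ∈ 𝓝 0)
    (h : ENNReal.ofReal |LinearMap.det f| * μ D * 2 ^ finrank ℝ E ≤ μ K) :
    ∃ x ∈ L, x ≠ 0 ∧ f x ∈ K := by
  have h_symm' : ∀ x ∈ f ⁻¹' K, -x ∈ f ⁻¹' K := fun x hx ↦ by
    simpa only [mem_preimage, map_neg] using h_symm (f x) hx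
  have h_conv' : Convex ℝ (f ⁻¹' K) := h_conv.linear_preimage f
  suffices ∃ x ≠ 0, ((x : L) : E) ∈ f ⁻¹' K by
    obtain ⟨x, hx₀, hxK⟩ := this
    exact ⟨x, x.2, by simpa using hx₀, hxK⟩
  by_cases hf : LinearMap.det f = 0
  · apply exists_ne_zero_mem_lattice_of_measure_mul_two_pow_lt_measure fund h_symm' h_conv'
    rw [addHaar_preimage_linearMap_eq_top μ (LinearMap.bot_lt_ker_of_det_eq_zero hf).ne' h_nhds]
    finiteness
  · apply exists_ne_zero_mem_lattice_of_measure_mul_two_pow_le_measure fund h_symm' h_conv'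
      ((LinearMap.isClosedEmbedding_of_injective (f.equivOfDetNeZero hf).ker).isCompact_preimage
        h_cpt)
    have h_cancel :
        ENNReal.ofReal |(LinearMap.det f)⁻¹| * ENNReal.ofReal |LinearMap.det f| = 1 := by
      rw [← ENNReal.ofReal_mul (abs_nonneg _), ← abs_mul, inv_mul_cancel₀ hf, abs_one,
        ENNReal.ofReal_one]
    calc μ D * 2 ^ finrank ℝ E
      _ = ENNReal.ofReal |(LinearMap.det f)⁻¹| *
            (ENNReal.ofReal |LinearMap.det f| * μ D * 2 ^ finrank ℝ E) := by
        rw [mul_assoc (ENNReal.ofReal _), ← mul_assoc (ENNReal.ofReal _), h_cancel, one_mul]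
      _ ≤ ENNReal.ofReal |(LinearMap.det f)⁻¹| * μ K := by gcongr
      _ = μ (f ⁻¹' K) := (Measure.addHaar_preimage_linearMap μ hf K).symm

end Lattice

section LinearForms

theorem mem_span_range_basisFun_iff {ι : Type*} [Finite ι] {x : ι → ℝ} :
    x ∈ Submodule.span ℤ (range (Pi.basisFun ℝ ι)) ↔ ∃ y : ι → ℤ, (fun i ↦ (y i : ℝ)) = x := by
  simp only [Basis.mem_span_iff_repr_mem, Pi.basisFun_repr, algebraMap_int_eq, mem_range,
    eq_intCast, Classical.skolem, funext_iff]

variable {ι : Type*} [Fintype ι]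

theorem volume_Icc_neg_self_pi (l : ι → ℝ) :
    volume (Icc (-l) l) = (∏ j, ENNReal.ofReal (l j)) * 2 ^ Fintype.card ι := by
  have h_side (j : ι) : ENNReal.ofReal (l j - (-l) j) = ENNReal.ofReal (l j) * 2 := by
    rw [Pi.neg_apply, sub_neg_eq_add, ← mul_two, ENNReal.ofReal_mul' zero_le_two,
      ENNReal.ofReal_ofNat]
  simp only [Real.volume_Icc_pi, h_side, Finset.prod_mul_distrib, Finset.prod_const,
    Finset.card_univ]

theorem covolume_span_range_basisFun :
    ZLattice.covolume (Submodule.span ℤ (range (Pi.basisFun ℝ ι))) = 1 := by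
  rw [ZLattice.covolume_eq_measure_fundamentalDomain _ _
    (ZSpan.isAddFundamentalDomain (Pi.basisFun ℝ ι) volume), ZSpan.fundamentalDomain_pi_basisFun,
    measureReal_def, volume_pi_pi]
  simp

variable [DecidableEq ι] [Nonempty ι]

theorem exists_ne_zero_mem_zlattice_abs_mulVec_le (L : Submodule ℤ (ι → ℝ)) [DiscreteTopology L]
    [IsZLattice ℝ L] (α : Matrix ι ι ℝ) {l : ι → ℝ} (hl : ∀ j, 0 < l j)
    (h : |α.det| * ZLattice.covolume L ≤ ∏ j, l j) :
    ∃ x ∈ L, x ≠ 0 ∧ ∀ j, |(α *ᵥ x) j| ≤ l j := by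
  let b := Free.chooseBasis ℤ L
  let D := ZSpan.fundamentalDomain (b.ofZLatticeBasis ℝ)
  have fund : IsAddFundamentalDomain L D := ZLattice.isAddFundamentalDomain b volume
  have : Countable L.toAddSubgroup := inferInstanceAs (Countable L)
  have : DiscreteTopology L.toAddSubgroup := inferInstanceAs (DiscreteTopology L)
  have hD : volume D ≠ ∞ := (ZSpan.fundamentalDomain_isBounded _).measure_lt_top.ne
  have h_vol : ENNReal.ofReal |α.toLin'.det| * volume D * 2 ^ finrank ℝ (ι → ℝ) ≤
      volume (Icc (-l) l) := by
    rw [volume_Icc_neg_self_pi, finrank_fintype_fun_eq_card, LinearMap.det_toLin',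
      ← ofReal_measureReal hD, ← ZLattice.covolume_eq_measure_fundamentalDomain L volume fund,
      ← ENNReal.ofReal_mul (abs_nonneg _),
      ← ENNReal.ofReal_prod_of_nonneg fun j _ ↦ (hl j).le]
    gcongr
  obtain ⟨x, hxL, hx₀, hx⟩ := exists_ne_zero_mem_lattice_map_mem (L := L.toAddSubgroup)
    (K := Icc (-l) l) fund hD α.toLin' (fun x hx ↦ ⟨neg_le_neg hx.2, neg_le.mp hx.1⟩)
    (convex_Icc _ _) isCompact_Icc (pi_Icc_mem_nhds (fun j ↦ neg_lt_zero.mpr (hl j)) hl) h_vol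
  exact ⟨x, hxL, hx₀, fun j ↦ abs_le.mpr ⟨hx.1 j, hx.2 j⟩⟩

theorem minkowski_linear_forms_general (α : Matrix ι ι ℝ) {l : ι → ℝ} (hl : ∀ j, 0 < l j)
    (h : |α.det| ≤ ∏ j, l j) :
    ∃ x : ι → ℤ, x ≠ 0 ∧ ∀ j, |(α *ᵥ fun i ↦ (x i : ℝ)) j| ≤ l j := by
  obtain ⟨_, hL, hx₀, hx⟩ := exists_ne_zero_mem_zlattice_abs_mulVec_le
    (Submodule.span ℤ (range (Pi.basisFun ℝ ι))) α hl
    (by rwa [covolume_span_range_basisFun, mul_one])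
  obtain ⟨x, rfl⟩ := mem_span_range_basisFun_iff.mp hL
  exact ⟨x, fun hx_zero ↦ hx₀ (by simp [hx_zero, funext_iff]), hx⟩

end LinearForms

theorem minkowski_linear_forms (n : ℕ) (hn : 1 ≤ n)
    (α : Matrix (Fin n) (Fin n) ℝ) (l : Fin n → ℝ) (hl : ∀ j, 0 < l j)
    (h : |α.det| ≤ ∏ j, l j) :
    ∃ x : Fin n → ℤ, x ≠ 0 ∧
      ∀ j, |α.mulVec (fun i => (x i : ℝ)) j| ≤ l j := by
  have : Nonempty (Fin n) := ⟨⟨0, hn⟩⟩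
  exact minkowski_linear_forms_general α hl h
end

section
/- Minkowski's theorem on successive minima: Let n ≥ 1, let Λ ⊆ ℝⁿ be a full-rank lattice, and let C ⊆ ℝⁿ be a compact convex set that is symmetric (C = −C) and contains 0 in its interior. For j = 1,…,n define the j-th successive minimum λ_j = inf{λ > 0 : λC ∩ Λ contains j linearly independent vectors}. Then 2ⁿ/n! ≤ λ₁·…·λₙ · vol(C)/det(Λ) ≤ 2ⁿ. -/
open MeasureTheory Pointwise

/-!
Write `λ₁ ≤ … ≤ λₙ` for the successive minima and `K` for the interior of `C`.

Upper bound: the translates of `(λ₁ / 2) K` by the lattice are disjoint, because a difference of two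
of its points lies in `λ₁ K`, which contains no nonzero lattice vector. The lattice points of
`λᵢ₊₁ K` span a subspace `V` of dimension at most `i`. A packing inside `(λᵢ / 2) K` can be
stretched by the factor `t = λᵢ₊₁ / λᵢ` transversally to `V`, by a dilation of the quotient by
`V` lifted to translations between the fibres, so that the image stays inside `(λᵢ₊₁ / 2) K`. Only
differences in `V` matter there and these are unchanged, so the image is again a packing, while the
volume has grown by the factor `t ^ (n - dim V) ≥ t ^ (n - i)`. After the last step the volume is at
least `λ₁ ⋯ λₙ vol(C) / 2ⁿ`, and a packing has at most the volume `det Λ`.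

Lower bound: for `ε > 0` there are independent lattice vectors `vⱼ ∈ (λⱼ + ε) C`. The cross-polytope
with vertices `±vⱼ / (λⱼ + ε)` lies in `C`, and the lattice generated by the `vⱼ` has determinant at
least `det Λ`. Let `ε` tend to `0`.
-/

section LinearAlgebra

open Module Set Submodule

variable {K V : Type*} [DivisionRing K] [AddCommGroup V] [Module K V] [FiniteDimensional K V]

lemma le_finrank_span_iff_exists_linearIndependent {s : Set V} {k : ℕ} :
    k ≤ finrank K (span K s) ↔ ∃ v : Fin k → V, LinearIndependent K v ∧ ∀ i, v i ∈ s := by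
  refine ⟨fun hk ↦ ?_, fun ⟨v, hv, hvs⟩ ↦ ?_⟩
  · obtain ⟨v, hvs, -, hv⟩ := exists_fun_fin_finrank_span_eq K s
    exact ⟨v ∘ Fin.castLE hk, hv.comp _ (Fin.castLE_injective hk), fun i ↦ hvs _⟩
  · calc k = finrank K (span K (range v)) := by rw [finrank_span_eq_card hv, Fintype.card_fin]
      _ ≤ finrank K (span K s) := finrank_mono (span_mono (range_subset_iff.2 hvs))

lemma exists_linearIndependent_mem_of_lt_finrank_span {n : ℕ} {s : Fin n → Set V}
    (hs : ∀ j : Fin n, j < finrank K (span K (s j))) :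
    ∃ v : Fin n → V, LinearIndependent K v ∧ ∀ j, v j ∈ s j := by
  induction n with
  | zero => exact ⟨0, linearIndependent_empty_type, fun j ↦ j.elim0⟩
  | succ n ih =>
    obtain ⟨v, hv, hvs⟩ := ih fun j ↦ hs j.castSucc
    obtain ⟨x, hx, hxv⟩ : ∃ x ∈ s (Fin.last n), x ∉ span K (range v) := by
      by_contra! h
      have := (hs (Fin.last n)).trans_le (finrank_mono (span_le.2 h))
      rw [finrank_span_eq_card hv, Fintype.card_fin] at this
      exact this.false
    refine ⟨Fin.snoc v x, hv.finSnoc hxv, fun j ↦ ?_⟩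
    cases j using Fin.lastCases with
    | last => simpa using hx
    | cast j => simpa using hvs j

end LinearAlgebra

section Dilation

open Module Submodule

variable {K E : Type*} [Field K] [AddCommGroup E] [Module K E] {p q : Submodule K E}

/-- The linear map that dilates `p` by the factor `t` and fixes its complement `q` pointwise. -/
noncomputable def dilationAlong (h : IsCompl p q) (t : K) : E →ₗ[K] E :=
  1 + (t - 1) • p.projection q h

lemma dilationAlong_apply (h : IsCompl p q) (t : K) (x : E) :
    dilationAlong h t x = x + (t - 1) • p.projection q h x := rfl

lemma projection_dilationAlong (h : IsCompl p q) (t : K) (x : E) :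
    p.projection q h (dilationAlong h t x) = t • p.projection q h x := by
  rw [dilationAlong_apply, map_add, map_smul,
    projection_apply_of_mem_left h (projection_apply_mem h x)]
  module

lemma projection_eq_of_dilationAlong_sub_mem (h : IsCompl p q) {t : K} (ht : t ≠ 0) {x y : E}
    (hxy : dilationAlong h t x - dilationAlong h t y ∈ q) :
    p.projection q h x = p.projection q h y := by
  rw [← projection_apply_eq_zero_iff h, map_sub, projection_dilationAlong,
    projection_dilationAlong, sub_eq_zero] at hxy
  exact smul_right_injective E ht hxy

lemma dilationAlong_sub_dilationAlong (h : IsCompl p q) (t : K) {x y : E}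
    (hxy : p.projection q h x = p.projection q h y) :
    dilationAlong h t x - dilationAlong h t y = x - y := by
  rw [dilationAlong_apply, dilationAlong_apply, hxy, add_sub_add_right_eq_sub]

lemma det_dilationAlong [FiniteDimensional K E] (h : IsCompl p q) (t : K) :
    LinearMap.det (dilationAlong h t) = t ^ finrank K p := by
  let e := p.prodEquivOfIsCompl q h
  have hconj : dilationAlong h t =
      e ∘ₗ (t • (1 : Module.End K p)).prodMap (1 : Module.End K q) ∘ₗ e.symm := by
    ext x
    obtain ⟨⟨a, b⟩, rfl⟩ := e.surjective x
    simp [e, dilationAlong_apply]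
    module
  rw [hconj, LinearMap.det_conj, LinearMap.det_prodMap, LinearMap.det_smul]
  simp

end Dilation

section Stretching

open Module Set Submodule TopologicalSpace

variable {E : Type*} [NormedAddCommGroup E] [NormedSpace ℝ E] {p q : Submodule ℝ E}

/-- The stretching by the factor `t`, along `p` and away from the points `y + s y` of the
fibres `y + q`. On a fibre of the projection along `q` it is a translation, so it leaves the
differences that lie in `q` unchanged. -/
noncomputable def stretch (h : IsCompl p q) (t : ℝ) (s : E → q) (x : E) : E :=
  dilationAlong h t x + (t - 1) • (s (p.projection q h x) : E)

lemma sub_eq_sub_of_stretch_sub_stretch_mem (h : IsCompl p q) {t : ℝ} (ht : t ≠ 0) (s : E → q)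
    {x y : E} (hxy : stretch h t s x - stretch h t s y ∈ q) :
    stretch h t s x - stretch h t s y = x - y := by
  have hproj : p.projection q h x = p.projection q h y := by
    refine projection_eq_of_dilationAlong_sub_mem h ht ?_
    rw [stretch, stretch, add_sub_add_comm] at hxy
    exact (q.add_mem_iff_left (sub_mem (q.smul_mem _ (coe_mem _)) (q.smul_mem _ (coe_mem _)))).1 hxy
  rw [stretch, stretch, hproj, add_sub_add_right_eq_sub, dilationAlong_sub_dilationAlong h t hproj]

lemma stretch_injective (h : IsCompl p q) {t : ℝ} (ht : t ≠ 0) (s : E → q) :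
    Function.Injective (stretch h t s) := fun x y hxy ↦ by
  have := sub_eq_sub_of_stretch_sub_stretch_mem h ht s (x := x) (y := y) (by simp [hxy])
  rwa [hxy, sub_self, eq_comm, sub_eq_zero] at this

lemma stretch_mem_smul_of_convex {A : Set E} (hA : Convex ℝ A) (h : IsCompl p q)
    {t : ℝ} (ht : 1 ≤ t) {s : E → q} {x : E} (hx : x ∈ A)
    (hs : p.projection q h x + s (p.projection q h x) ∈ A) :
    stretch h t s x ∈ t • A := by
  have ht₀ : 0 < t := by linarith
  refine ⟨t⁻¹ • x + (1 - t⁻¹) • (p.projection q h x + s (p.projection q h x)),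
    hA hx hs (inv_nonneg.2 ht₀.le) (sub_nonneg.2 (inv_le_one_of_one_le₀ ht)) (by ring), ?_⟩
  simp only [stretch, dilationAlong_apply]
  match_scalars <;> field_simp

variable [MeasurableSpace E] [BorelSpace E]

lemma exists_measurable_countable_range_add_mem {A : Set E} (hA : IsOpen A) (q : Submodule ℝ E)
    [SeparableSpace q] :
    ∃ s : E → q, Measurable s ∧ (range s).Countable ∧ ∀ x, ∀ w ∈ q, x + w ∈ A → x + s x ∈ A := by
  classical
  let v : ℕ → q := denseSeq q
  let U (k : ℕ) : Set E := {x | x + v k ∈ A}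
  have hU (k : ℕ) : MeasurableSet (U k) := (hA.preimage (by fun_prop)).measurableSet
  have hex (x : E) : ∃ k, x ∈ U k ∪ (⋃ l, U l)ᶜ := by
    by_cases hx : x ∈ ⋃ l, U l
    · exact (mem_iUnion.1 hx).imp fun _ ↦ Or.inl
    · exact ⟨0, .inr hx⟩
  refine ⟨fun x ↦ v (Nat.find (hex x)), ?_, (countable_range v).mono (range_comp_subset_range _ v),
    fun x w hw hxw ↦ ?_⟩
  · exact measurable_from_nat.comp
      (measurable_find hex fun k ↦ (hU k).union (MeasurableSet.iUnion hU).compl)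
  · have hx : ∃ k, x ∈ U k := (denseRange_denseSeq q).exists_mem_open
      (hA.preimage (f := fun w : q ↦ x + w) (by fun_prop)) ⟨⟨w, hw⟩, hxw⟩
    exact (Nat.find_spec (hex x)).resolve_right (not_not_intro (mem_iUnion.2 hx))

variable [FiniteDimensional ℝ E]

lemma measurable_projection (h : IsCompl p q) : Measurable (p.projection q h) :=
  (p.projection q h).continuous_of_finiteDimensional.measurable

lemma measurableEmbedding_stretch (h : IsCompl p q) {t : ℝ} (ht : t ≠ 0) {s : E → q}
    (hs : Measurable s) : MeasurableEmbedding (stretch h t s) := by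
  have := FiniteDimensional.proper ℝ E
  refine Measurable.measurableEmbedding ?_ (stretch_injective h ht s)
  exact (dilationAlong h t).continuous_of_finiteDimensional.measurable.add
    ((hs.comp (measurable_projection h)).subtype_val.const_smul (t - 1))

variable (μ : Measure E) [μ.IsAddHaarMeasure]

lemma addHaar_image_stretch (h : IsCompl p q) {t : ℝ} (ht : 0 < t) {s : E → q}
    (hs : Measurable s) (hs_range : (range s).Countable) (P : Set E) :
    μ (stretch h t s '' P) = ENNReal.ofReal (t ^ finrank ℝ p) * μ P := by
  have hemb := measurableEmbedding_stretch h ht.ne' hs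
  have := hs_range.to_subtype
  let c := ENNReal.ofReal (t ^ finrank ℝ p)
  let F (w : E) : Set E := (fun x ↦ (s (p.projection q h x) : E)) ⁻¹' {w}
  have himage (w : E) (P : Set E) :
      stretch h t s '' (P ∩ F w) = (· + (t - 1) • w) '' (dilationAlong h t '' (P ∩ F w)) := by
    rw [image_image]
    exact image_congr fun x hx ↦ by rw [stretch, show (s (p.projection q h x) : E) = w from hx.2]
  have hfibre (w : range s) :
      (μ.comap (stretch h t s)).restrict (F w) = (c • μ).restrict (F w) := by
    ext P hP
    rw [Measure.restrict_apply hP, Measure.restrict_apply hP, hemb.comap_apply, himage,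
      image_add_right, measure_preimage_add_right, Measure.addHaar_image_linearMap,
      det_dilationAlong, abs_of_nonneg (by positivity), Measure.smul_apply, smul_eq_mul]
  have hcomap : μ.comap (stretch h t s) = c • μ := by
    refine Measure.ext_of_iUnion_eq_univ (iUnion_eq_univ_iff.2 fun x ↦ ?_) hfibre
    exact ⟨⟨_, mem_range_self (p.projection q h x)⟩, rfl⟩
  rw [← hemb.comap_apply, hcomap, Measure.smul_apply, smul_eq_mul]

/-- The image stays inside `t • A` because the stretching is centred at points of `A`. These are
chosen by a section of `A` over the quotient by `V` with countably many values: on the pieces where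
it is constant, the stretching is a dilation followed by a translation. -/
lemma exists_stretched_subset_smul {A : Set E} (hA : IsOpen A) (hA_conv : Convex ℝ A) {P : Set E}
    (hP : MeasurableSet P) (hPA : P ⊆ A) (V : Submodule ℝ E) {t : ℝ} (ht : 1 ≤ t) :
    ∃ Q ⊆ t • A, MeasurableSet Q ∧
      μ.real Q = t ^ (finrank ℝ E - finrank ℝ V) * μ.real P ∧
      ∀ x ∈ Q, ∀ y ∈ Q, x - y ∈ V → ∃ a ∈ P, ∃ b ∈ P, a - b = x - y := by
  have ht₀ : 0 < t := by linarith
  obtain ⟨p, hp⟩ := V.exists_isCompl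
  have h := hp.symm
  obtain ⟨s, hs, hs_range, hsA⟩ := exists_measurable_countable_range_add_mem hA V
  have hemb := measurableEmbedding_stretch h ht₀.ne' hs
  refine ⟨stretch h t s '' P, ?_, hemb.measurableSet_image.2 hP, ?_, ?_⟩
  · refine image_subset_iff.2 fun x hx ↦ stretch_mem_smul_of_convex hA_conv h ht (hPA hx) ?_
    refine hsA _ (x - p.projection V h x) ?_ ?_
    · rw [← projection_apply_eq_zero_iff h, map_sub,
        projection_apply_of_mem_left h (projection_apply_mem h x), sub_self]
    · rw [add_sub_cancel]; exact hPA hx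
  · rw [← finrank_add_eq_of_isCompl h, Nat.add_sub_cancel, measureReal_def,
      addHaar_image_stretch μ h ht₀ hs hs_range, ENNReal.toReal_mul,
      ENNReal.toReal_ofReal (by positivity), measureReal_def]
  · rintro _ ⟨a, ha, rfl⟩ _ ⟨b, hb, rfl⟩ hab
    exact ⟨a, ha, b, hb, (sub_eq_sub_of_stretch_sub_stretch_mem h ht₀.ne' s hab).symm⟩

end Stretching

section Packing

open Module Set Submodule

/-- `P` is a packing for the lattice `L`: the translates of `P` by the vectors of `L` are pairwise
disjoint. This is stated in terms of differences of points of `P`. -/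
def IsLatticePacking {E : Type*} [AddCommGroup E] (L : Submodule ℤ E) (P : Set E) : Prop :=
  ∀ ⦃x⦄, x ∈ P → ∀ ⦃y⦄, y ∈ P → x - y ∈ L → x = y

lemma IsLatticePacking.mono_left {E : Type*} [AddCommGroup E] {M L : Submodule ℤ E} {P : Set E}
    (hP : IsLatticePacking L P) (h : M ≤ L) : IsLatticePacking M P :=
  fun _ hx _ hy hxy ↦ hP hx hy (h hxy)

lemma isLatticePacking_fundamentalDomain {E ι : Type*} [NormedAddCommGroup E] [NormedSpace ℝ E]
    [Finite ι] (b : Basis ι ℝ E) :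
    IsLatticePacking (span ℤ (range b)) (ZSpan.fundamentalDomain b) := fun x hx y hy hxy ↦ by
  have := Fintype.ofFinite ι
  rw [← ZSpan.fract_eq_self.2 hx, ← ZSpan.fract_eq_self.2 hy, eq_comm, ZSpan.fract_eq_fract,
    neg_add_eq_sub]
  exact hxy

variable {E : Type*} [NormedAddCommGroup E] [NormedSpace ℝ E] [FiniteDimensional ℝ E]
  [MeasurableSpace E] [BorelSpace E] (μ : Measure E) [μ.IsAddHaarMeasure]
  {L : Submodule ℤ E} [DiscreteTopology L] [IsZLattice ℝ L]

/-- This is Blichfeldt's theorem. -/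
lemma IsLatticePacking.measureReal_le_covolume {P : Set E} (hP : IsLatticePacking L P)
    (hP_meas : NullMeasurableSet P μ) : μ.real P ≤ ZLattice.covolume L μ := by
  have : MeasurableVAdd L E := inferInstanceAs (MeasurableVAdd L.toAddSubgroup E)
  have : VAddInvariantMeasure L E μ := inferInstanceAs (VAddInvariantMeasure L.toAddSubgroup E μ)
  let b := Free.chooseBasis ℤ L
  have hF := ZLattice.isAddFundamentalDomain b μ
  have hF_top := (ZSpan.fundamentalDomain_isBounded (b.ofZLatticeBasis ℝ)).measure_lt_top (μ := μ)
  rw [ZLattice.covolume_eq_measure_fundamentalDomain L μ hF]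
  refine ENNReal.toReal_mono hF_top.ne (not_lt.1 fun hlt ↦ ?_)
  obtain ⟨x, hx, y, hy, g, hg, hgxy⟩ := hF.exists_ne_zero_vadd_eq hP_meas hlt
  have hyx : y - x = g := sub_eq_iff_eq_add.2 hgxy.symm
  have hxy : y = x := hP hy hx (hyx ▸ g.2)
  exact hg (Subtype.ext (by rw [← hyx, hxy, sub_self, coe_zero]))

lemma covolume_le_covolume_of_le {M : Submodule ℤ E} [DiscreteTopology M] [IsZLattice ℝ M]
    (h : M ≤ L) : ZLattice.covolume L μ ≤ ZLattice.covolume M μ := by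
  let b := Free.chooseBasis ℤ L
  have hF : IsLatticePacking L (ZSpan.fundamentalDomain (b.ofZLatticeBasis ℝ)) :=
    (isLatticePacking_fundamentalDomain _).mono_left (b.ofZLatticeBasis_span ℝ L).ge
  rw [ZLattice.covolume_eq_measure_fundamentalDomain L μ (ZLattice.isAddFundamentalDomain b μ)]
  exact (hF.mono_left h).measureReal_le_covolume μ
    (ZSpan.fundamentalDomain_measurableSet _).nullMeasurableSet

lemma covolume_span_range_basis {ι : Type*} [Finite ι] (b : Basis ι ℝ E) :
    ZLattice.covolume (span ℤ (range b)) μ = μ.real (ZSpan.fundamentalDomain b) :=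
  ZLattice.covolume_eq_measure_fundamentalDomain _ μ (ZSpan.isAddFundamentalDomain b μ)

end Packing

section SuccessiveMinimum

open Module Set Submodule Topology Filter Bornology

variable {E : Type*} [NormedAddCommGroup E] [NormedSpace ℝ E] {L : Submodule ℤ E} {C : Set E}
  {j : ℕ} {l : ℝ}

/-- The `j`-th successive minimum, counted from `0`, of the body `C` with respect to the
lattice `L`: the least dilation of `C` that contains more than `j` linearly independent vectors of
`L`. The space is meant to be finite dimensional, so that `finrank` has no junk value. -/
noncomputable def successiveMinimum (L : Submodule ℤ E) (C : Set E) (j : ℕ) : ℝ :=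
  sInf {l | 0 < l ∧ j < finrank ℝ (span ℝ (L ∩ l • C))}

lemma successiveMinimum_le (hl : 0 < l) (hj : j < finrank ℝ (span ℝ (L ∩ l • C))) :
    successiveMinimum L C j ≤ l :=
  csInf_le ⟨0, fun _ h ↦ h.1.le⟩ ⟨hl, hj⟩

lemma smul_subset_smul_of_starConvex (hC : StarConvex ℝ 0 C) {a b : ℝ} (ha : 0 < a) (hab : a ≤ b) :
    a • C ⊆ b • C := by
  have hb : 0 < b := ha.trans_le hab
  rintro _ ⟨x, hx, rfl⟩
  refine ⟨(a / b) • x, hC.smul_mem hx (by positivity) ((div_le_one₀ hb).2 hab), ?_⟩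
  simp only [smul_smul, mul_div_cancel₀ a hb.ne']

variable [FiniteDimensional ℝ E]

lemma finrank_span_inter_successiveMinimum_smul_interior_le (hpos : 0 < successiveMinimum L C j) :
    finrank ℝ (span ℝ (L ∩ successiveMinimum L C j • interior C)) ≤ j := by
  by_contra! hj
  obtain ⟨v, hv, hvs⟩ := le_finrank_span_iff_exists_linearIndependent.1 (Nat.succ_le_iff.2 hj)
  have hev (i) : ∀ᶠ l in 𝓝 (successiveMinimum L C j), l⁻¹ • v i ∈ interior C :=
    ((continuousAt_inv₀ hpos.ne').smul continuousAt_const).eventually_mem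
      (isOpen_interior.mem_nhds ((mem_smul_set_iff_inv_smul_mem₀ hpos.ne' _ _).1 (hvs i).2))
  obtain ⟨l, ⟨hlC, hl⟩, hlt⟩ := (((eventually_all.2 hev).and (lt_mem_nhds hpos)).filter_mono
    nhdsWithin_le_nhds |>.and self_mem_nhdsWithin).exists (f := 𝓝[<] successiveMinimum L C j)
  refine (successiveMinimum_le hl ?_).not_gt hlt
  refine Nat.succ_le_iff.1 (le_finrank_span_iff_exists_linearIndependent.2 ⟨v, hv, fun i ↦ ?_⟩)
  exact ⟨(hvs i).1, (mem_smul_set_iff_inv_smul_mem₀ hl.ne' _ _).2 (interior_subset (hlC i))⟩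

variable [DiscreteTopology L] [IsZLattice ℝ L]

lemma exists_lt_finrank_span_inter_smul (hC : C ∈ 𝓝 0) (hj : j < finrank ℝ E) :
    ∃ l : ℝ, 0 < l ∧ j < finrank ℝ (span ℝ (L ∩ l • C)) := by
  obtain ⟨v, hv, hvL⟩ := (le_finrank_span_iff_exists_linearIndependent (K := ℝ) (s := (L : Set E))
    (k := finrank ℝ E)).1 (by rw [IsZLattice.span_top, finrank_top])
  obtain ⟨l, hl, hvl⟩ :=
    ((absorbent_nhds_zero (𝕜 := ℝ) hC).absorbs_finite (finite_range v)).exists_pos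
  refine ⟨l, hl, hj.trans_le (le_finrank_span_iff_exists_linearIndependent.2 ⟨v, hv, fun i ↦ ?_⟩)⟩
  exact ⟨hvL i, hvl l (le_abs_self l) (mem_range_self i)⟩

lemma lt_finrank_span_inter_smul_of_successiveMinimum_lt (hC : C ∈ 𝓝 0) (hconv : StarConvex ℝ 0 C)
    (hj : j < finrank ℝ E) (hl : successiveMinimum L C j < l) :
    j < finrank ℝ (span ℝ (L ∩ l • C)) := by
  obtain ⟨l', ⟨hl'₀, hjl'⟩, hl'⟩ :=
    exists_lt_of_csInf_lt (exists_lt_finrank_span_inter_smul hC hj) hl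
  exact hjl'.trans_le (Submodule.finrank_mono (span_mono
    (inter_subset_inter_right _ (smul_subset_smul_of_starConvex hconv hl'₀ hl'.le))))

lemma successiveMinimum_mono (hC : C ∈ 𝓝 0) {i : ℕ} (hij : i ≤ j) (hj : j < finrank ℝ E) :
    successiveMinimum L C i ≤ successiveMinimum L C j :=
  csInf_le_csInf ⟨0, fun _ h ↦ h.1.le⟩ (exists_lt_finrank_span_inter_smul hC hj)
    fun _ h ↦ ⟨h.1, hij.trans_lt h.2⟩

lemma successiveMinimum_pos (hC : C ∈ 𝓝 0) (hC_bdd : IsBounded C)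
    (hj : j < finrank ℝ E) : 0 < successiveMinimum L C j := by
  obtain ⟨ε, hε, hLε⟩ : ∃ ε > 0, ∀ x ∈ L, ‖x‖ < ε → x = 0 := by
    obtain ⟨ε, hε, hball⟩ := Metric.exists_ball_inter_eq_singleton_of_mem_discrete
      (s := (L : Set E)) ⟨inferInstance⟩ L.zero_mem
    exact ⟨ε, hε, fun x hx hxε ↦ hball.subset ⟨mem_ball_zero_iff.2 hxε, hx⟩⟩
  obtain ⟨R, hR, hCR⟩ := hC_bdd.exists_pos_norm_lt
  refine (div_pos hε hR).trans_le
    (le_csInf (exists_lt_finrank_span_inter_smul hC hj) fun l ⟨hl, hjl⟩ ↦ le_of_not_gt fun hlt ↦ ?_)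
  have hzero : span ℝ (L ∩ l • C) = ⊥ := by
    rw [span_eq_bot]
    rintro _ ⟨hxL, x, hx, rfl⟩
    refine hLε _ hxL ?_
    calc ‖l • x‖ = l * ‖x‖ := by rw [norm_smul, Real.norm_of_nonneg hl.le]
      _ < l * R := by gcongr; exact hCR x hx
      _ < ε := (lt_div_iff₀ hR).1 hlt
  rw [hzero, finrank_bot] at hjl
  exact Nat.not_lt_zero _ hjl

end SuccessiveMinimum

section UpperBound

open Module Set Submodule Topology Bornology

lemma neg_mem_interior {G : Type*} [TopologicalSpace G] [InvolutiveNeg G] [ContinuousNeg G]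
    {C : Set G} (hC : ∀ x ∈ C, -x ∈ C) {x : G} (hx : x ∈ interior C) : -x ∈ interior C := by
  rw [mem_interior_iff_mem_nhds] at hx ⊢
  have hpre : Neg.neg ⁻¹' C ∈ 𝓝 (-x) :=
    continuous_neg.continuousAt.preimage_mem_nhds (by rwa [neg_neg])
  exact Filter.mem_of_superset hpre fun y hy ↦ neg_neg y ▸ hC _ hy

variable {E : Type*} [NormedAddCommGroup E] [NormedSpace ℝ E]

lemma sub_mem_smul_of_mem_half_smul {K : Set E} (hK : Convex ℝ K) (hK_symm : ∀ x ∈ K, -x ∈ K)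
    {r : ℝ} {x y : E} (hx : x ∈ (r / 2) • K) (hy : y ∈ (r / 2) • K) : x - y ∈ r • K := by
  obtain ⟨a, ha, rfl⟩ := hx
  obtain ⟨b, hb, rfl⟩ := hy
  refine ⟨(1 / 2 : ℝ) • a + (1 / 2 : ℝ) • -b,
    hK ha (hK_symm b hb) (by norm_num) (by norm_num) (by norm_num), ?_⟩
  module

variable [FiniteDimensional ℝ E] {L : Submodule ℤ E}

lemma isLatticePacking_half_smul {K : Set E} (hK : Convex ℝ K) (hK_symm : ∀ x ∈ K, -x ∈ K)
    {r : ℝ} (hr : finrank ℝ (span ℝ (L ∩ r • K)) = 0) : IsLatticePacking L ((r / 2) • K) := by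
  intro x hx y hy hxy
  have hspan := subset_span (R := ℝ) (show x - y ∈ (L : Set E) ∩ r • K from
    ⟨hxy, sub_mem_smul_of_mem_half_smul hK hK_symm hx hy⟩)
  rwa [Submodule.finrank_eq_zero.1 hr, SetLike.mem_coe, Submodule.mem_bot, sub_eq_zero] at hspan

variable [MeasurableSpace E] [BorelSpace E] (μ : Measure E) [μ.IsAddHaarMeasure]

lemma IsLatticePacking.exists_stretched {K : Set E} (hK_open : IsOpen K) (hK : Convex ℝ K)
    (hK_symm : ∀ x ∈ K, -x ∈ K) {r r' : ℝ} (hr : 0 < r) (hrr' : r ≤ r') {P : Set E}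
    (hP : IsLatticePacking L P) (hP_meas : MeasurableSet P) (hPK : P ⊆ (r / 2) • K) :
    ∃ Q ⊆ (r' / 2) • K, MeasurableSet Q ∧ IsLatticePacking L Q ∧
      μ.real Q = (r' / r) ^ (finrank ℝ E - finrank ℝ (span ℝ (L ∩ r' • K))) * μ.real P := by
  obtain ⟨Q, hQK, hQ_meas, hQ_vol, hQ⟩ := exists_stretched_subset_smul μ
    (hK_open.smul₀ (by positivity)) (hK.smul (r / 2)) hP_meas hPK (span ℝ (L ∩ r' • K))
    ((one_le_div hr).2 hrr')
  rw [smul_smul, show r' / r * (r / 2) = r' / 2 by field_simp] at hQK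
  refine ⟨Q, hQK, hQ_meas, fun x hx y hy hxy ↦ ?_, hQ_vol⟩
  obtain ⟨a, ha, b, hb, hab⟩ := hQ x hx y hy
    (subset_span ⟨hxy, sub_mem_smul_of_mem_half_smul hK hK_symm (hQK hx) (hQK hy)⟩)
  rw [← sub_eq_zero, ← hab, hP ha hb (hab ▸ hxy), sub_self]

lemma measureReal_half_smul_interior {C : Set E} (hC : Convex ℝ C) {r : ℝ} (hr : 0 ≤ r) :
    2 ^ finrank ℝ E * μ.real ((r / 2) • interior C) = r ^ finrank ℝ E * μ.real C := by
  have hint : μ (interior C) = μ C := measure_interior_of_null_frontier (hC.addHaar_frontier μ)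
  rw [measureReal_def, Measure.addHaar_smul_of_nonneg μ (by positivity), hint, ENNReal.toReal_mul,
    ENNReal.toReal_ofReal (by positivity), ← measureReal_def, ← mul_assoc, ← mul_pow,
    mul_div_cancel₀ r two_ne_zero]

/-- The packing for `i + 1` is obtained from the one for `i` by stretching away from the span of
the lattice points in `λ_{i+1} • interior C`, which has dimension at most `i + 1`; indices count
from `0`. -/
lemma exists_isLatticePacking_prod_successiveMinimum_mul_le [DiscreteTopology L] [IsZLattice ℝ L]
    {C : Set E} (hC : Convex ℝ C) (hC_symm : ∀ x ∈ C, -x ∈ C) (hC_bdd : IsBounded C)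
    (hC₀ : C ∈ 𝓝 0) {i : ℕ} (hi : i < finrank ℝ E) :
    ∃ P ⊆ (successiveMinimum L C i / 2) • interior C, MeasurableSet P ∧ IsLatticePacking L P ∧
      (∏ j ∈ Finset.range i, successiveMinimum L C j) *
        successiveMinimum L C i ^ (finrank ℝ E - i) * μ.real C ≤ 2 ^ finrank ℝ E * μ.real P := by
  let m := successiveMinimum L C
  have hm {j : ℕ} (hj : j ≤ i) : 0 < m j := successiveMinimum_pos hC₀ hC_bdd (hj.trans_lt hi)
  have hrank : finrank ℝ (span ℝ (L ∩ m i • interior C)) ≤ i :=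
    finrank_span_inter_successiveMinimum_smul_interior_le (hm le_rfl)
  have hint_symm (x : E) : x ∈ interior C → -x ∈ interior C := neg_mem_interior hC_symm
  induction i with
  | zero =>
    refine ⟨_, Subset.rfl, (isOpen_interior.smul₀ (half_pos (hm le_rfl)).ne').measurableSet,
      isLatticePacking_half_smul hC.interior hint_symm (Nat.le_zero.1 hrank), ?_⟩
    rw [measureReal_half_smul_interior μ hC (hm le_rfl).le, Finset.prod_range_zero, one_mul,
      Nat.sub_zero]
  | succ i ih =>
    have hi' : i < finrank ℝ E := Nat.lt_of_succ_lt hi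
    have hmi : 0 < m i := hm i.le_succ
    have hmono : m i ≤ m (i + 1) := successiveMinimum_mono hC₀ i.le_succ hi
    obtain ⟨P, hPK, hP_meas, hP, hP_vol⟩ := ih hi' (fun hj ↦ hm (Nat.le_succ_of_le hj))
      (finrank_span_inter_successiveMinimum_smul_interior_le hmi)
    obtain ⟨Q, hQK, hQ_meas, hQ, hQ_vol⟩ := hP.exists_stretched μ isOpen_interior hC.interior
      hint_symm hmi hmono hP_meas hPK
    have hprod : 0 ≤ ∏ j ∈ Finset.range i, m j := Finset.prod_nonneg fun j hj ↦
      (hm (Finset.mem_range.1 hj |>.le.trans i.le_succ)).le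
    refine ⟨Q, hQK, hQ_meas, hQ, ?_⟩
    calc (∏ j ∈ Finset.range (i + 1), m j) * m (i + 1) ^ (finrank ℝ E - (i + 1)) * μ.real C
      _ = (m (i + 1) / m i) ^ (finrank ℝ E - (i + 1)) *
            ((∏ j ∈ Finset.range i, m j) * m i ^ (finrank ℝ E - i) * μ.real C) := by
        rw [Finset.prod_range_succ, show finrank ℝ E - i = finrank ℝ E - (i + 1) + 1 by omega,
          pow_succ, div_pow]
        field_simp
      _ ≤ (m (i + 1) / m i) ^ (finrank ℝ E - finrank ℝ (span ℝ (L ∩ m (i + 1) • interior C))) *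
            (2 ^ finrank ℝ E * μ.real P) := by
        exact mul_le_mul (pow_le_pow_right₀ ((one_le_div hmi).2 hmono)
          (Nat.sub_le_sub_left hrank _)) hP_vol
          (mul_nonneg (mul_nonneg hprod (by positivity)) measureReal_nonneg)
          (pow_nonneg (div_nonneg (hm le_rfl).le hmi.le) _)
      _ = 2 ^ finrank ℝ E * μ.real Q := by rw [hQ_vol, mul_left_comm]

theorem prod_successiveMinimum_mul_measureReal_le [DiscreteTopology L] [IsZLattice ℝ L]
    {C : Set E} (hC : Convex ℝ C) (hC_symm : ∀ x ∈ C, -x ∈ C) (hC_bdd : IsBounded C)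
    (hC₀ : C ∈ 𝓝 0) :
    (∏ j ∈ Finset.range (finrank ℝ E), successiveMinimum L C j) * μ.real C ≤
      2 ^ finrank ℝ E * ZLattice.covolume L μ := by
  rcases Nat.eq_zero_or_pos (finrank ℝ E) with hE | hE
  · have := finrank_zero_iff.1 hE
    have hpack : IsLatticePacking L C := fun x _ y _ _ ↦ Subsingleton.elim x y
    simpa [hE] using hpack.measureReal_le_covolume μ (hC.nullMeasurableSet μ)
  · obtain ⟨P, -, hP_meas, hP, hP_vol⟩ :=
      exists_isLatticePacking_prod_successiveMinimum_mul_le μ (L := L) hC hC_symm hC_bdd hC₀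
        (Nat.sub_one_lt_of_lt hE)
    rw [Nat.sub_sub_self hE, pow_one, ← Finset.prod_range_succ, Nat.sub_add_cancel hE] at hP_vol
    refine hP_vol.trans ?_
    gcongr
    exact hP.measureReal_le_covolume μ hP_meas.nullMeasurableSet

end UpperBound

section LowerBound

open Module Set Submodule Topology Filter Bornology

lemma volume_real_sum_abs_lt_one (ι : Type*) [Fintype ι] :
    volume.real {x : ι → ℝ | ∑ i, |x i| < 1} = 2 ^ Fintype.card ι / (Fintype.card ι).factorial := by
  have h := volume_sum_rpow_lt_one ι le_rfl
  simp only [Real.rpow_one, div_one, one_add_one_eq_two, Real.Gamma_two, mul_one,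
    Real.Gamma_nat_eq_factorial] at h
  rw [measureReal_def, h, ENNReal.toReal_ofReal (by positivity)]

variable {E : Type*} [NormedAddCommGroup E] [NormedSpace ℝ E] {ι : Type*} [Fintype ι] {C : Set E}

lemma sum_smul_mem_of_sum_abs_lt_one (hC : Convex ℝ C) (hC_symm : ∀ x ∈ C, -x ∈ C) (hC₀ : C ∈ 𝓝 0)
    {u : ι → E} (hu : ∀ i, u i ∈ C) {x : ι → ℝ} (hx : ∑ i, |x i| < 1) : ∑ i, x i • u i ∈ C := by
  refine setOfPred_gauge_lt_one_subset_self hC (mem_of_mem_nhds hC₀) (absorbent_nhds_zero hC₀) ?_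
  calc gauge C (∑ i, x i • u i)
    _ ≤ ∑ i, gauge C (x i • u i) := gauge_sum_le hC (absorbent_nhds_zero hC₀) _ _
    _ = ∑ i, |x i| * gauge C (u i) := by
      simp only [gauge_smul ((balanced_iff_neg_mem hC).2 hC_symm), Real.norm_eq_abs]
    _ ≤ ∑ i, |x i| := Finset.sum_le_sum fun i _ ↦
      mul_le_of_le_one_right (abs_nonneg _) (gauge_le_one_of_mem (hu i))
    _ < 1 := hx

variable [MeasurableSpace E] [BorelSpace E] (μ : Measure E) [μ.IsAddHaarMeasure]

lemma measureReal_preimage_equivFun (b : Basis ι ℝ E) (S : Set (ι → ℝ)) :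
    μ.real (b.equivFun ⁻¹' S) = μ.real (ZSpan.fundamentalDomain b) * volume.real S := by
  have := b.finiteDimensional_of_finite
  let e : E ≃L[ℝ] (ι → ℝ) := b.equivFun.toContinuousLinearEquiv
  have he (T : Set (ι → ℝ)) : μ.map e T = μ (b.equivFun ⁻¹' T) :=
    e.toHomeomorph.toMeasurableEquiv.map_apply T
  have : (μ.map e).IsAddHaarMeasure := e.isAddHaarMeasure_map μ
  have hcube : b.equivFun ⁻¹' (univ.pi fun _ ↦ Ico (0 : ℝ) 1) = ZSpan.fundamentalDomain b := by
    ext; simp [ZSpan.mem_fundamentalDomain]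
  obtain ⟨c, hc⟩ : ∃ c : NNReal, μ.map e = c • volume := ⟨_, Measure.isAddLeftInvariant_eq_smul _ _⟩
  have hcF : μ (ZSpan.fundamentalDomain b) = c := by
    rw [← hcube, ← he, hc, Measure.coe_nnreal_smul_apply, volume_pi_pi]
    simp
  rw [measureReal_def, ← he, hc, measureReal_def, hcF, Measure.coe_nnreal_smul_apply,
    ENNReal.toReal_mul, measureReal_def]

lemma two_pow_div_factorial_mul_measureReal_fundamentalDomain_le (hC : Convex ℝ C)
    (hC_symm : ∀ x ∈ C, -x ∈ C) (hC_bdd : IsBounded C) (hC₀ : C ∈ 𝓝 0) (b : Basis ι ℝ E)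
    (hb : ∀ i, b i ∈ C) :
    2 ^ Fintype.card ι / (Fintype.card ι).factorial * μ.real (ZSpan.fundamentalDomain b) ≤
      μ.real C := by
  have := b.finiteDimensional_of_finite
  rw [← volume_real_sum_abs_lt_one, mul_comm, ← measureReal_preimage_equivFun μ b]
  refine measureReal_mono (fun x hx ↦ ?_) hC_bdd.measure_lt_top.ne
  rw [← b.sum_equivFun x]
  exact sum_smul_mem_of_sum_abs_lt_one hC hC_symm hC₀ hb hx

lemma two_pow_div_factorial_mul_covolume_le {L : Submodule ℤ E} [DiscreteTopology L]
    [IsZLattice ℝ L] (hC : Convex ℝ C) (hC_symm : ∀ x ∈ C, -x ∈ C) (hC_bdd : IsBounded C)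
    (hC₀ : C ∈ 𝓝 0) (b : Basis ι ℝ E) {l : ι → ℝ} (hl : ∀ i, 0 < l i)
    (hb : ∀ i, b i ∈ (L : Set E) ∩ l i • C) :
    2 ^ Fintype.card ι / (Fintype.card ι).factorial * ZLattice.covolume L μ ≤
      (∏ i, l i) * μ.real C := by
  classical
  have := b.finiteDimensional_of_finite
  let u : Basis ι ℝ E := b.isUnitSMul fun i ↦ (inv_pos.2 (hl i)).ne'.isUnit
  have hu (i) : u i ∈ C := by
    rw [Basis.isUnitSMul_apply]
    exact (mem_smul_set_iff_inv_smul_mem₀ (hl i).ne' _ _).1 (hb i).2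
  have hvol : μ.real (ZSpan.fundamentalDomain b) =
      (∏ i, l i) * μ.real (ZSpan.fundamentalDomain u) := by
    have hprod : 0 < ∏ i, l i := Finset.prod_pos fun i _ ↦ hl i
    rw [ZSpan.measureReal_fundamentalDomain u μ b, Basis.det_isUnitSMul, Finset.prod_inv_distrib,
      abs_of_pos (inv_pos.2 hprod), mul_inv_cancel_left₀ hprod.ne']
  have hbL : span ℤ (range b) ≤ L := span_le.2 (range_subset_iff.2 fun i ↦ (hb i).1)
  calc 2 ^ Fintype.card ι / (Fintype.card ι).factorial * ZLattice.covolume L μ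
    _ ≤ 2 ^ Fintype.card ι / (Fintype.card ι).factorial *
          μ.real (ZSpan.fundamentalDomain b) := by
      rw [← covolume_span_range_basis μ b]
      gcongr
      exact covolume_le_covolume_of_le μ hbL
    _ = (∏ i, l i) * (2 ^ Fintype.card ι / (Fintype.card ι).factorial *
          μ.real (ZSpan.fundamentalDomain u)) := by rw [hvol, mul_left_comm]
    _ ≤ (∏ i, l i) * μ.real C := by
      gcongr
      · exact Finset.prod_nonneg fun i _ ↦ (hl i).le
      · exact two_pow_div_factorial_mul_measureReal_fundamentalDomain_le μ hC hC_symm hC_bdd hC₀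
          u hu

theorem two_pow_div_factorial_mul_covolume_le_prod_successiveMinimum [FiniteDimensional ℝ E]
    {L : Submodule ℤ E} [DiscreteTopology L] [IsZLattice ℝ L] (hC : Convex ℝ C)
    (hC_symm : ∀ x ∈ C, -x ∈ C) (hC_bdd : IsBounded C) (hC₀ : C ∈ 𝓝 0) :
    2 ^ finrank ℝ E / (finrank ℝ E).factorial * ZLattice.covolume L μ ≤
      (∏ j ∈ Finset.range (finrank ℝ E), successiveMinimum L C j) * μ.real C := by
  let m := successiveMinimum L C
  have hlim : Tendsto (fun ε ↦ (∏ j : Fin (finrank ℝ E), (m j + ε)) * μ.real C) (𝓝[>] 0)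
      (𝓝 ((∏ j ∈ Finset.range (finrank ℝ E), m j) * μ.real C)) := by
    rw [Finset.prod_range]
    exact (Continuous.tendsto' (by fun_prop) _ _ (by simp only [add_zero])).mono_left
      nhdsWithin_le_nhds
  refine ge_of_tendsto hlim (eventually_nhdsWithin_of_forall fun ε hε ↦ ?_)
  obtain ⟨v, hv, hvs⟩ := exists_linearIndependent_mem_of_lt_finrank_span (K := ℝ)
    (s := fun j : Fin (finrank ℝ E) ↦ (L : Set E) ∩ (m j + ε) • C) fun j ↦
      lt_finrank_span_inter_smul_of_successiveMinimum_lt hC₀ (hC.starConvex (mem_of_mem_nhds hC₀))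
        j.2 (lt_add_of_pos_right _ hε)
  have hpos (j : Fin (finrank ℝ E)) : 0 < m j + ε :=
    add_pos (successiveMinimum_pos hC₀ hC_bdd j.2) hε
  simpa only [Fintype.card_fin] using
    two_pow_div_factorial_mul_covolume_le μ hC hC_symm hC_bdd hC₀
      (basisOfLinearIndependentOfCardEqFinrank' v hv (Fintype.card_fin _)) hpos
      (by simpa only [coe_basisOfLinearIndependentOfCardEqFinrank'] using hvs)

end LowerBound

section Minkowski

open Module Submodule Topology Bornology

theorem minkowski_successive_minima_general {E : Type*} [NormedAddCommGroup E] [NormedSpace ℝ E]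
    [FiniteDimensional ℝ E] [MeasurableSpace E] [BorelSpace E] (μ : Measure E)
    [μ.IsAddHaarMeasure] (L : Submodule ℤ E) [DiscreteTopology L] [IsZLattice ℝ L] {C : Set E}
    (hC : Convex ℝ C) (hC_symm : ∀ x ∈ C, -x ∈ C) (hC_bdd : IsBounded C) (hC₀ : C ∈ 𝓝 0) :
    2 ^ finrank ℝ E / (finrank ℝ E).factorial ≤
        (∏ j ∈ Finset.range (finrank ℝ E), successiveMinimum L C j) * μ.real C /
          ZLattice.covolume L μ ∧
      (∏ j ∈ Finset.range (finrank ℝ E), successiveMinimum L C j) * μ.real C /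
          ZLattice.covolume L μ ≤ 2 ^ finrank ℝ E := by
  have hcov := ZLattice.covolume_pos L μ
  rw [le_div_iff₀ hcov, div_le_iff₀ hcov]
  exact ⟨two_pow_div_factorial_mul_covolume_le_prod_successiveMinimum μ hC hC_symm hC_bdd hC₀,
    prod_successiveMinimum_mul_measureReal_le μ hC hC_symm hC_bdd hC₀⟩

end Minkowski

section MatrixLattice

open Module Submodule

variable {n : Type*} [Fintype n] [DecidableEq n] {B : Matrix n n ℝ}

/-- The basis of `ℝⁿ` formed by the columns of an invertible matrix `B`; its integral span is the
lattice `B ℤⁿ`. -/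
noncomputable def columnBasis (hB : B.det ≠ 0) : Basis n ℝ (n → ℝ) :=
  (Pi.basisFun ℝ n).map (B.toLinearEquiv' (B.invertibleOfIsUnitDet hB.isUnit))

lemma columnBasis_apply (hB : B.det ≠ 0) (i : n) : columnBasis hB i = B.col i := by
  rw [columnBasis, Basis.map_apply, Pi.basisFun_apply]
  exact B.mulVec_single_one i

lemma mem_span_range_columnBasis (hB : B.det ≠ 0) {x : n → ℝ} :
    x ∈ span ℤ (Set.range (columnBasis hB)) ↔ ∃ m : n → ℤ, x = B.mulVec fun k ↦ (m k : ℝ) := by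
  simp only [mem_span_range_iff_exists_fun, columnBasis_apply, Matrix.mulVec_eq_sum,
    op_smul_eq_smul, Int.cast_smul_eq_zsmul, eq_comm]
  rfl

lemma covolume_span_range_columnBasis (hB : B.det ≠ 0) :
    ZLattice.covolume (span ℤ (Set.range (columnBasis hB))) = |B.det| := by
  rw [covolume_span_range_basis, ZSpan.volume_real_fundamentalDomain, ← B.det_transpose]
  congr 2
  ext i j
  simp [columnBasis_apply]

lemma successiveMinimum_eq_sInf_linearIndependent {n : ℕ} {B : Matrix (Fin n) (Fin n) ℝ}
    (hB : B.det ≠ 0) (C : Set (Fin n → ℝ)) (j : ℕ) :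
    successiveMinimum (span ℤ (Set.range (columnBasis hB))) C j =
      sInf {l : ℝ | 0 < l ∧ ∃ v : Fin (j + 1) → (Fin n → ℝ), LinearIndependent ℝ v ∧
        ∀ i, v i ∈ l • C ∧ ∃ m : Fin n → ℤ, v i = B.mulVec (fun k => (m k : ℝ))} := by
  simp only [successiveMinimum, ← Nat.succ_le_iff, le_finrank_span_iff_exists_linearIndependent,
    Set.mem_inter_iff, SetLike.mem_coe, mem_span_range_columnBasis, and_comm]

end MatrixLattice

theorem minkowski_successive_minima (n : ℕ) (hn : 1 ≤ n)
    (B : Matrix (Fin n) (Fin n) ℝ) (hB : B.det ≠ 0)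
    (C : Set (Fin n → ℝ)) (hconv : Convex ℝ C) (hcpt : IsCompact C)
    (hsymm : C = -C) (h0 : (0 : Fin n → ℝ) ∈ interior C)
    (μ : Fin n → ℝ)
    (hμ : ∀ j : Fin n, μ j = sInf { l : ℝ | 0 < l ∧
        ∃ v : Fin ((j : ℕ) + 1) → (Fin n → ℝ), LinearIndependent ℝ v ∧
          ∀ i, v i ∈ l • C ∧ ∃ m : Fin n → ℤ,
            v i = B.mulVec (fun k => (m k : ℝ)) }) :
    2 ^ n / (Nat.factorial n : ℝ) ≤ (∏ j, μ j) * (volume C).toReal / |B.det| ∧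
    (∏ j, μ j) * (volume C).toReal / |B.det| ≤ 2 ^ n := by
  have h := minkowski_successive_minima_general volume
    (Submodule.span ℤ (Set.range (columnBasis hB))) hconv (fun _ hx ↦ hsymm.subset hx)
    hcpt.isBounded (mem_interior_iff_mem_nhds.1 h0)
  rw [covolume_span_range_columnBasis, Module.finrank_fin_fun, Finset.prod_range] at h
  simpa only [successiveMinimum_eq_sInf_linearIndependent hB, ← hμ, measureReal_def] using h
end

section
/- Blichfeldt's theorem: Let n ≥ 1, let Λ ⊆ ℝⁿ be a full-rank lattice, let m ≥ 1 be a natural number, and let Ω ⊆ ℝⁿ be a Lebesgue measurable set with vol(Ω) > m·det(Λ). Then there exist m+1 pairwise distinct points x₀, x₁, …, x_m in Ω such that all differences x_j − x_i lie in Λ. -/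
open MeasureTheory

/-!
Let `F` be a fundamental domain of the lattice `Λ`. Cutting `Ω` along the translates of `F` and
moving the pieces back to `F` gives `vol Ω = ∫_F #{g ∈ Λ | g + x ∈ Ω} dx`. If `vol Ω > m · vol F`,
the integrand exceeds `m` at some `x`, and `m + 1` of the points `g + x` lying in `Ω` are as wanted.
-/

open scoped ENNReal

section Counting

variable {α : Type*}

lemma tsum_indicator_one_eq_encard (s : Set α) :
    ∑' a, s.indicator (1 : α → ℝ≥0∞) a = s.encard :=
  (tsum_subtype s 1).symm.trans (ENNReal.tsum_set_one s)

lemma exists_fin_embedding_of_le_encard {s : Set α} {n : ℕ} (h : (n : ℕ∞) ≤ s.encard) :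
    Nonempty (Fin n ↪ s) := by
  have hcard : (n : Cardinal) ≤ Cardinal.mk s := Cardinal.natCast_le_toENat.mp h
  rw [← Cardinal.lift_mk_le']
  simpa using hcard

end Counting

lemma exists_lt_of_mul_measure_univ_lt_lintegral {α : Type*} [MeasurableSpace α] {μ : Measure α}
    {f : α → ℝ≥0∞} {c : ℝ≥0∞} (h : c * μ Set.univ < ∫⁻ x, f x ∂μ) : ∃ x, c < f x := by
  by_contra! hf
  exact h.not_ge ((lintegral_mono hf).trans_eq (lintegral_const c))

section FundamentalDomain

variable {G α : Type*} [AddGroup G] [Countable G] [AddAction G α] [MeasurableSpace α]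
  [MeasurableConstVAdd G α] {μ : Measure α} [VAddInvariantMeasure G α μ] {F s : Set α}

lemma measure_eq_setLIntegral_encard_vadd_mem (hF : IsAddFundamentalDomain G F μ)
    (hs : NullMeasurableSet s μ) :
    μ s = ∫⁻ x in F, ({g : G | g +ᵥ x ∈ s}.encard : ℝ≥0∞) ∂μ := by
  have hmeas (g : G) :
      AEMeasurable (fun x ↦ s.indicator (1 : α → ℝ≥0∞) (g +ᵥ x)) (μ.restrict F) :=
    (((aemeasurable_indicator_const_iff 1).2 hs : AEMeasurable _ μ).comp_quasiMeasurePreserving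
      (measurePreserving_vadd g μ).quasiMeasurePreserving).restrict
  calc
    μ s = ∫⁻ x, s.indicator 1 x ∂μ := (lintegral_indicator_one₀ hs).symm
    _ = ∑' g : G, ∫⁻ x in F, s.indicator 1 (g +ᵥ x) ∂μ := hF.lintegral_eq_tsum'' _
    _ = ∫⁻ x in F, ∑' g : G, s.indicator 1 (g +ᵥ x) ∂μ := (lintegral_tsum hmeas).symm
    _ = ∫⁻ x in F, ({g : G | g +ᵥ x ∈ s}.encard : ℝ≥0∞) ∂μ :=
      lintegral_congr fun x ↦ tsum_indicator_one_eq_encard {g : G | g +ᵥ x ∈ s}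

lemma exists_lt_encard_vadd_mem (hF : IsAddFundamentalDomain G F μ) (hs : NullMeasurableSet s μ)
    {c : ℝ≥0∞} (h : c * μ F < μ s) : ∃ x, c < ({g : G | g +ᵥ x ∈ s}.encard : ℝ≥0∞) := by
  rw [measure_eq_setLIntegral_encard_vadd_mem hF hs, ← Measure.restrict_apply_univ F] at h
  exact exists_lt_of_mul_measure_univ_lt_lintegral h

end FundamentalDomain

theorem blichfeldt_theorem_general {E : Type*} [AddGroup E] [MeasurableSpace E] {μ : Measure E}
    {L : AddSubgroup E} [Countable L] [MeasurableConstVAdd L E] [VAddInvariantMeasure L E μ]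
    {F Ω : Set E} (hF : IsAddFundamentalDomain L F μ) (hΩ : NullMeasurableSet Ω μ) {m : ℕ}
    (h : m * μ F < μ Ω) :
    ∃ x : Fin (m + 1) → E, Function.Injective x ∧ (∀ i, x i ∈ Ω) ∧ ∀ i j, x j - x i ∈ L := by
  obtain ⟨x, hx⟩ := exists_lt_encard_vadd_mem hF hΩ h
  have hcard : ((m + 1 : ℕ) : ℕ∞) ≤ {g : L | g +ᵥ x ∈ Ω}.encard :=
    Order.add_one_le_of_lt (by exact_mod_cast hx)
  obtain ⟨g⟩ := exists_fin_embedding_of_le_encard hcard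
  refine ⟨fun i ↦ (g i : L) + x, fun i j hij ↦ ?_, fun i ↦ (g i).2, fun i j ↦ ?_⟩
  · exact g.injective (Subtype.ext (Subtype.ext (add_right_cancel hij)))
  · rw [add_sub_add_right_eq_sub]
    exact L.sub_mem (g j).1.2 (g i).1.2

section ColumnLattice

variable {ι κ : Type*}

/-- The additive group `B ℤ^ι` generated by the columns of a real matrix `B`: the full-rank lattices
of `ℝⁿ` are those of this form with `B` square and invertible. -/
def columnLattice (B : Matrix κ ι ℝ) : AddSubgroup (κ → ℝ) :=
  (Submodule.span ℤ (Set.range B.col)).toAddSubgroup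

instance [Finite ι] (B : Matrix κ ι ℝ) : Countable (columnLattice B) :=
  inferInstanceAs (Countable (Submodule.span ℤ (Set.range B.col)))

lemma mem_columnLattice_iff [Fintype ι] {B : Matrix κ ι ℝ} {v : κ → ℝ} :
    v ∈ columnLattice B ↔ ∃ c : ι → ℤ, v = B.mulVec (fun k ↦ (c k : ℝ)) := by
  have hsum (c : ι → ℤ) : ∑ k, c k • B.col k = B.mulVec (fun k ↦ (c k : ℝ)) := by
    simp only [Matrix.mulVec_eq_sum, op_smul_eq_smul, Int.cast_smul_eq_zsmul, Matrix.col_def]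
  simp only [columnLattice, Submodule.mem_toAddSubgroup, Submodule.mem_span_range_iff_exists_fun,
    hsum, eq_comm]

lemma exists_isAddFundamentalDomain_columnLattice [Fintype ι] [DecidableEq ι] {B : Matrix ι ι ℝ}
    (hB : B.det ≠ 0) :
    ∃ F : Set (ι → ℝ), IsAddFundamentalDomain (columnLattice B) F ∧
      volume F = ENNReal.ofReal |B.det| := by
  classical
  have hli : LinearIndependent ℝ B.col :=
    Matrix.linearIndependent_cols_iff_isUnit.2 ((Matrix.isUnit_iff_isUnit_det B).2 hB.isUnit)
  obtain ⟨b, hb⟩ : ∃ b : Module.Basis ι ℝ (ι → ℝ), ⇑b = B.col :=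
    ⟨basisOfPiSpaceOfLinearIndependent hli, coe_basisOfPiSpaceOfLinearIndependent hli⟩
  refine ⟨ZSpan.fundamentalDomain b, ?_, ?_⟩
  · rw [columnLattice, ← hb]
    exact ZSpan.isAddFundamentalDomain' b volume
  · rw [ZSpan.volume_fundamentalDomain, hb, ← B.det_transpose]
    rfl

end ColumnLattice

theorem blichfeldt_theorem (n : ℕ) (hn : 1 ≤ n)
    (B : Matrix (Fin n) (Fin n) ℝ) (hB : B.det ≠ 0)
    (m : ℕ) (hm : 1 ≤ m) (Ω : Set (Fin n → ℝ)) (hΩ : MeasurableSet Ω)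
    (hvol : ENNReal.ofReal (m * |B.det|) < volume Ω) :
    ∃ x : Fin (m + 1) → (Fin n → ℝ), Function.Injective x ∧ (∀ i, x i ∈ Ω) ∧
      ∀ i j, ∃ c : Fin n → ℤ, x j - x i = B.mulVec (fun k => (c k : ℝ)) := by
  obtain ⟨F, hF, hFvol⟩ := exists_isAddFundamentalDomain_columnLattice hB
  rw [ENNReal.ofReal_mul m.cast_nonneg, ENNReal.ofReal_natCast, ← hFvol] at hvol
  simpa only [mem_columnLattice_iff] using blichfeldt_theorem_general hF hΩ.nullMeasurableSet hvol
end

section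
/- Minkowski–Hlawka theorem: Let n ≥ 2 and let S ⊆ ℝⁿ be a bounded Lebesgue measurable set which is a symmetric star body, i.e. 0 ∈ S, S = −S, and for every x ∈ S and every t ∈ [0,1] one has tx ∈ S. If vol(S) < 2·ζ(n), where ζ is the Riemann zeta function, then there exists a full-rank lattice Λ ⊆ ℝⁿ with det(Λ) = 1 such that Λ ∩ S ⊆ {0}. -/
open MeasureTheory

/-!
Write `n = d + 1` and consider the unimodular lattices of points `(kh, ε(m + kξ))` in `ℝ × ℝᵈ`, with
`hεᵈ = 1`. If `h` is small, then `ε` is large and no nonzero point with `k = 0` lies in `S`; by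
symmetry and starlikeness it remains to avoid the primitive `(k, m)` with `k > 0`. Let `V t` be the
volume of the slice of `S` at height `t`. Primitivity depends on `m` modulo `k` only, so the union
bound over `ξ` in the unit cube shows that the bad `ξ` have measure at most `∑ₖ J_d(k) k⁻ᵈ h V(kh)`.

If this sum were at least `1` for every small `h`, then integrating it against `hˢ⁻¹` and using
`ζ(d+1+s) ∑ₖ J_d(k) k^{-(d+1+s)} = ζ(1+s)` would give, up to factors tending to `1` as `s → 0⁺`,
`ζ(d+1+s) ≤ s ζ(1+s) ∫_{t>0} V`. In the limit `2ζ(n) ≤ 2∫_{t>0} V ≤ vol S`, a contradiction.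
-/

section Arithmetic

variable {ι : Type*}

/-- Primitivity of the integer vector `(k, m)`, i.e. `gcd (k, m) = 1`. It is expressed through the
order of `m` in `(ℤ/kℤ)^ι`, which makes it visibly a condition on `m` modulo `k` only. -/
def IsPrimitive (k : ℕ) (m : ι → ℤ) : Prop :=
  addOrderOf (fun i => (m i : ZMod k)) = k

/-- Jordan's totient `J_d(k)` with `d = card ι`: the number of residue tuples modulo `k` that are
coprime to `k`, counted as the elements of order exactly `k` in `(ℤ/kℤ)^ι`. -/
noncomputable def jordanTotient (ι : Type*) (k : ℕ) : ℕ :=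
  Nat.card {c : ι → ZMod k // addOrderOf c = k}

theorem addOrderOf_intCast_dvd_iff {k n : ℕ} {m : ι → ℤ} :
    addOrderOf (fun i => (m i : ZMod k)) ∣ n ↔ ∀ i, (k : ℤ) ∣ n * m i := by
  simp [addOrderOf_dvd_iff_nsmul_eq_zero, funext_iff, ← ZMod.intCast_zmod_eq_zero_iff_dvd]

theorem dvd_of_addOrderOf_intCast_dvd {N g k : ℕ} {m : ι → ℤ} (h : g * k = N) (hk : k ≠ 0)
    (hm : addOrderOf (fun i => (m i : ZMod N)) ∣ k) (i : ι) : (g : ℤ) ∣ m i := by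
  have hkm := addOrderOf_intCast_dvd_iff.1 hm i
  rw [← h, Nat.cast_mul, mul_comm] at hkm
  exact Int.dvd_of_mul_dvd_mul_left (by exact_mod_cast hk) hkm

theorem isPrimitive_iff {k : ℕ} {m : ι → ℤ} :
    IsPrimitive k m ↔ ∀ n : ℕ, (∀ i, (k : ℤ) ∣ n * m i) → k ∣ n := by
  simp only [← addOrderOf_intCast_dvd_iff]
  refine ⟨fun h n hn => ?_, fun h => ?_⟩
  · exact h.symm.dvd.trans hn
  · exact Nat.dvd_antisymm (addOrderOf_intCast_dvd_iff.2 fun i => dvd_mul_right _ _) (h _ dvd_rfl)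

theorem exists_eq_mul_isPrimitive {k : ℕ} (hk : 0 < k) (m : ι → ℤ) :
    ∃ (g k' : ℕ) (m' : ι → ℤ), 0 < g ∧ 0 < k' ∧ k = g * k' ∧ (∀ i, m i = g * m' i) ∧
      IsPrimitive k' m' := by
  set k' := addOrderOf (fun i => (m i : ZMod k)) with hk'
  obtain ⟨g, hg⟩ : k' ∣ k := addOrderOf_intCast_dvd_iff.2 fun i => dvd_mul_right _ _
  rw [mul_comm] at hg
  obtain ⟨hg0, hk0⟩ : 0 < g ∧ 0 < k' := CanonicallyOrderedAdd.mul_pos.1 (hg ▸ hk)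
  choose m' hm' using dvd_of_addOrderOf_intCast_dvd hg.symm hk0.ne' hk'.symm.dvd
  refine ⟨g, k', m', hg0, hk0, hg, hm', isPrimitive_iff.2 fun n hn => ?_⟩
  refine hk' ▸ addOrderOf_intCast_dvd_iff.2 fun i => ?_
  rw [hm', hg, mul_left_comm, Nat.cast_mul]
  exact mul_dvd_mul_left _ (hn i)

/-- Multiplication by `g`, as an embedding of `ℤ/kℤ` into `ℤ/gkℤ`. -/
def zmodMulLeft {N g k : ℕ} (h : g * k = N) : ZMod k →+ ZMod N :=
  ZMod.lift k ⟨(AddMonoidHom.mulLeft (g : ZMod N)).comp (Int.castAddHom _), by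
    simp [← Nat.cast_mul, h]⟩

theorem zmodMulLeft_intCast {N g k : ℕ} (h : g * k = N) (a : ℤ) :
    zmodMulLeft h a = ((g * a : ℤ) : ZMod N) := by
  simp [zmodMulLeft]

theorem zmodMulLeft_injective {N g k : ℕ} (h : g * k = N) (hg : g ≠ 0) :
    Function.Injective (zmodMulLeft h) := by
  refine (ZMod.lift_injective _).2 fun a ha => ?_
  have ha : ((g * a : ℤ) : ZMod N) = 0 := by simpa using ha
  rw [ZMod.intCast_zmod_eq_zero_iff_dvd, ← h, Nat.cast_mul] at ha
  exact (ZMod.intCast_zmod_eq_zero_iff_dvd _ _).2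
    (Int.dvd_of_mul_dvd_mul_left (by exact_mod_cast hg) ha)

theorem card_addOrderOf_eq_jordanTotient {N k : ℕ} (hN : N ≠ 0) (hk : k ∣ N) :
    Nat.card {x : ι → ZMod N // addOrderOf x = k} = jordanTotient ι k := by
  obtain ⟨g, hg⟩ := hk
  have h : g * k = N := by rw [hg, mul_comm]
  have hg0 : g ≠ 0 := left_ne_zero_of_mul (h ▸ hN)
  have hk0 : k ≠ 0 := right_ne_zero_of_mul (h ▸ hN)
  let φ : (ι → ZMod k) →+ (ι → ZMod N) := (zmodMulLeft h).compLeft ι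
  have hφ : Function.Injective φ := (zmodMulLeft_injective h hg0).comp_left
  refine (Nat.card_congr (Equiv.ofBijective
    (Subtype.map φ fun c hc => (addOrderOf_injective φ hφ c).trans hc)
    ⟨Subtype.map_injective _ hφ, fun ⟨x, hx⟩ => ?_⟩)).symm
  obtain ⟨m, rfl⟩ : ∃ m : ι → ℤ, (fun i => (m i : ZMod N)) = x :=
    ⟨fun i => (x i).cast, funext fun i => ZMod.intCast_zmod_cast _⟩
  choose m' hm' using dvd_of_addOrderOf_intCast_dvd h hk0 hx.dvd
  have hm : φ (fun i => (m' i : ZMod k)) = fun i => (m i : ZMod N) :=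
    funext fun i => by rw [hm']; exact zmodMulLeft_intCast h (m' i)
  exact ⟨⟨_, by rw [← addOrderOf_injective φ hφ, hm, hx]⟩, Subtype.ext hm⟩

theorem sum_divisors_jordanTotient [Fintype ι] {N : ℕ} (hN : N ≠ 0) :
    ∑ k ∈ N.divisors, jordanTotient ι k = N ^ Fintype.card ι := by
  classical
  have : NeZero N := ⟨hN⟩
  have hord (x : ι → ZMod N) : addOrderOf x ∈ N.divisors :=
    Nat.mem_divisors.2 ⟨addOrderOf_dvd_of_nsmul_eq_zero (by ext; simp), hN⟩
  calc ∑ k ∈ N.divisors, jordanTotient ι k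
      = ∑ k ∈ N.divisors, Finset.card {x : ι → ZMod N | addOrderOf x = k} :=
        Finset.sum_congr rfl fun k hk => by
          rw [← card_addOrderOf_eq_jordanTotient hN (Nat.dvd_of_mem_divisors hk),
            Nat.card_eq_fintype_card, Fintype.card_subtype]
    _ = Fintype.card (ι → ZMod N) :=
        (Finset.card_eq_sum_card_fiberwise fun x _ => hord x).symm
    _ = N ^ Fintype.card ι := by simp [ZMod.card]

theorem tsum_pnat_mul_tsum_pnat (f g : ℕ → ENNReal) :
    (∑' j : ℕ+, f j) * ∑' k : ℕ+, g k =
      ∑' N : ℕ+, ∑ x ∈ Nat.divisorsAntidiagonal N, f x.1 * g x.2 := by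
  simp_rw [← ENNReal.tsum_mul_right, ← ENNReal.tsum_mul_left]
  rw [← ENNReal.tsum_prod (f := fun j k : ℕ+ => f j * g k), ← sigmaAntidiagonalEquivProd.tsum_eq,
    ENNReal.tsum_sigma']
  refine tsum_congr fun N => ?_
  rw [tsum_fintype]
  exact Finset.sum_coe_sort (Nat.divisorsAntidiagonal N) fun x => f x.1 * g x.2

theorem tsum_rpow_mul_tsum_jordanTotient [Fintype ι] (s : ℝ) :
    (∑' j : ℕ+, (j : ENNReal) ^ (-s)) * ∑' k : ℕ+, jordanTotient ι k * (k : ENNReal) ^ (-s) =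
      ∑' N : ℕ+, (N : ENNReal) ^ (Fintype.card ι - s) := by
  rw [tsum_pnat_mul_tsum_pnat (fun j => (j : ENNReal) ^ (-s))
    fun k => jordanTotient ι k * (k : ENNReal) ^ (-s)]
  refine tsum_congr fun N => ?_
  have hN : ((N : ℕ) : ENNReal) ≠ 0 := by simp
  calc ∑ x ∈ Nat.divisorsAntidiagonal N,
        (x.1 : ENNReal) ^ (-s) * (jordanTotient ι x.2 * (x.2 : ENNReal) ^ (-s))
      = ∑ x ∈ Nat.divisorsAntidiagonal N, (N : ENNReal) ^ (-s) * jordanTotient ι x.2 := by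
        refine Finset.sum_congr rfl fun x hx => ?_
        rw [← (Nat.mem_divisorsAntidiagonal.1 hx).1, Nat.cast_mul, ENNReal.mul_rpow_of_ne_top
          (ENNReal.natCast_ne_top _) (ENNReal.natCast_ne_top _)]
        ring
    _ = (N : ENNReal) ^ (-s) * (N : ENNReal) ^ Fintype.card ι := by
        rw [← Finset.mul_sum,
          Nat.sum_divisorsAntidiagonal' fun _ k => (jordanTotient ι k : ENNReal)]
        congr 1
        exact_mod_cast sum_divisors_jordanTotient N.ne_zero
    _ = (N : ENNReal) ^ (Fintype.card ι - s) := by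
        rw [← ENNReal.rpow_natCast, ← ENNReal.rpow_add _ _ hN (ENNReal.natCast_ne_top _),
          neg_add_eq_sub]

end Arithmetic

section UnionBound

open scoped Pointwise

theorem measure_exists_vadd_mem_le {G α : Type*} [AddGroup G] [AddAction G α] [MeasurableSpace α]
    [MeasurableConstVAdd G α] [Countable G] {μ : Measure α}
    [VAddInvariantMeasure G α μ] {s : Set α} (hs : IsAddFundamentalDomain G s μ) (A : Set α) :
    μ {x ∈ s | ∃ g : G, g +ᵥ x ∈ A} ≤ μ A :=
  calc μ {x ∈ s | ∃ g : G, g +ᵥ x ∈ A}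
      ≤ μ (⋃ g : G, (g +ᵥ A) ∩ s) := measure_mono fun x ⟨hx, g, hg⟩ =>
        Set.mem_iUnion.2 ⟨-g, Set.mem_vadd_set_iff_neg_vadd_mem.2 (by rwa [neg_neg]), hx⟩
    _ ≤ ∑' g : G, μ ((g +ᵥ A) ∩ s) := measure_iUnion_le _
    _ = μ A := (hs.measure_eq_tsum A).symm

variable {ι : Type*} [Fintype ι]

theorem volume_unitCube_exists_intCast_add_mem_le (A : Set (ι → ℝ)) :
    volume {ξ ∈ Set.univ.pi fun _ => Set.Ico (0 : ℝ) 1 | ∃ q : ι → ℤ, (fun i => (q i : ℝ)) + ξ ∈ A}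
      ≤ volume A := by
  let b := Pi.basisFun ℝ ι
  have : Countable (Submodule.span ℤ (Set.range b)).toAddSubgroup :=
    inferInstanceAs (Countable (Submodule.span ℤ (Set.range b)))
  refine le_trans (measure_mono ?_)
    (measure_exists_vadd_mem_le (ZSpan.isAddFundamentalDomain' b volume) A)
  rintro ξ ⟨hξ, q, hq⟩
  refine ⟨ZSpan.fundamentalDomain_pi_basisFun (ι := ι) ▸ hξ, ⟨fun i => (q i : ℝ), ?_⟩, hq⟩
  exact (b.mem_span_iff_repr_mem ℤ _).2 fun i => ⟨q i, by simp [b]⟩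

theorem volume_preimage_add_smul (a : ι → ℝ) {r : ℝ} (hr : 0 < r) (A : Set (ι → ℝ)) :
    volume {y | a + r • y ∈ A} = (ENNReal.ofReal r ^ Fintype.card ι)⁻¹ * volume A := by
  have h := Measure.addHaar_preimage_smul volume hr.ne' ((a + ·) ⁻¹' A)
  rwa [measure_preimage_add, Module.finrank_fintype_fun_eq_card, abs_of_pos (by positivity),
    ENNReal.ofReal_inv_of_pos (by positivity), ENNReal.ofReal_pow hr.le] at h

theorem volume_unitCube_exists_isPrimitive_mem_le {k : ℕ} (hk : 0 < k) (A : Set (ι → ℝ)) :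
    volume {ξ ∈ Set.univ.pi fun _ => Set.Ico (0 : ℝ) 1 | ∃ m : ι → ℤ, IsPrimitive k m ∧
      (fun i => (m i : ℝ)) + (k : ℝ) • ξ ∈ A} ≤
      jordanTotient ι k * (((k : ENNReal) ^ Fintype.card ι)⁻¹ * volume A) := by
  classical
  have : NeZero k := ⟨hk.ne'⟩
  set cube : Set (ι → ℝ) := Set.univ.pi fun _ => Set.Ico (0 : ℝ) 1
  let C := {c : ι → ZMod k // addOrderOf c = k}
  let A' (c : C) : Set (ι → ℝ) := {y | (fun i => ((c.1 i).cast : ℝ)) + (k : ℝ) • y ∈ A}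
  have hcover : {ξ ∈ cube | ∃ m : ι → ℤ, IsPrimitive k m ∧
      (fun i => (m i : ℝ)) + (k : ℝ) • ξ ∈ A} ⊆
      ⋃ c : C, {ξ ∈ cube | ∃ q : ι → ℤ, (fun i => (q i : ℝ)) + ξ ∈ A' c} := by
    rintro ξ ⟨hξ, m, hm, hmA⟩
    refine Set.mem_iUnion.2 ⟨⟨_, hm⟩, hξ, fun i => m i / k, ?_⟩
    change (fun i => ((m i : ZMod k).cast : ℝ)) +
      (k : ℝ) • ((fun i => ((m i / k : ℤ) : ℝ)) + ξ) ∈ A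
    rw [smul_add, ← add_assoc]
    convert hmA using 2
    ext i
    have h := congrArg (Int.cast : ℤ → ℝ) (Int.emod_add_mul_ediv (m i) k)
    push_cast at h
    rw [← h, ← ZMod.coe_intCast]
    simp
  calc _ ≤ ∑ c : C, volume {ξ ∈ cube | ∃ q : ι → ℤ, (fun i => (q i : ℝ)) + ξ ∈ A' c} :=
        (measure_mono hcover).trans (measure_iUnion_fintype_le _ _)
    _ ≤ ∑ c : C, volume (A' c) :=
        Finset.sum_le_sum fun c _ => volume_unitCube_exists_intCast_add_mem_le (A' c)
    _ = _ := by
        simp only [A', volume_preimage_add_smul _ (Nat.cast_pos.2 hk), ENNReal.ofReal_natCast,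
          Finset.sum_const, nsmul_eq_mul, Finset.card_univ, jordanTotient,
          Nat.card_eq_fintype_card, C]

theorem exists_forall_isPrimitive_notMem (T : Set (ℝ × (ι → ℝ)))
    (hT : ∑' k : ℕ+, jordanTotient ι k *
      (((k : ENNReal) ^ Fintype.card ι)⁻¹ * volume (Prod.mk (k : ℝ) ⁻¹' T)) < 1) :
    ∃ ξ : ι → ℝ, ∀ k : ℕ, 0 < k → ∀ m : ι → ℤ, IsPrimitive k m →
      ((k : ℝ), (fun i => (m i : ℝ)) + (k : ℝ) • ξ) ∉ T := by
  set cube : Set (ι → ℝ) := Set.univ.pi fun _ => Set.Ico (0 : ℝ) 1 with hcube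
  let bad (k : ℕ+) : Set (ι → ℝ) := {ξ ∈ cube | ∃ m : ι → ℤ, IsPrimitive (k : ℕ) m ∧
    (fun i => (m i : ℝ)) + (k : ℝ) • ξ ∈ Prod.mk (k : ℝ) ⁻¹' T}
  have hbad : volume (⋃ k, bad k) < volume cube :=
    calc volume (⋃ k, bad k) ≤ ∑' k, volume (bad k) := measure_iUnion_le _
      _ ≤ _ := ENNReal.tsum_le_tsum fun k => volume_unitCube_exists_isPrimitive_mem_le k.pos _
      _ < 1 := hT
      _ = volume cube := by simp [hcube, Real.volume_pi_Ico]
  obtain ⟨ξ, hξ, hξbad⟩ := Set.not_subset.1 fun h => (measure_mono h).not_gt hbad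
  exact ⟨ξ, fun k hk m hm hmT => hξbad (Set.mem_iUnion.2 ⟨⟨k, hk⟩, hξ, m, hm, hmT⟩)⟩

end UnionBound

section Mellin

open Filter Topology

theorem tsum_pnat_rpow_neg_eq_ofReal {s : ℝ} (hs : 1 < s) :
    ∑' k : ℕ+, (k : ENNReal) ^ (-s) = ENNReal.ofReal (∑' k : ℕ, 1 / (k : ℝ) ^ s) := by
  have hsum := Real.summable_one_div_nat_rpow.2 hs
  rw [tsum_pnat_eq_tsum_succ (f := fun k : ℕ => (k : ENNReal) ^ (-s)), hsum.tsum_eq_zero_add,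
    Nat.cast_zero, Real.zero_rpow (by positivity), div_zero, zero_add,
    ENNReal.ofReal_tsum_of_nonneg (fun k => by positivity) ((summable_nat_add_iff 1).2 hsum)]
  refine tsum_congr fun k => ?_
  rw [one_div, ← Real.rpow_neg (by positivity), ← ENNReal.ofReal_rpow_of_pos (by positivity),
    ENNReal.ofReal_natCast]

theorem tendsto_ofReal_mul_tsum_pnat_rpow :
    Tendsto (fun s : ℝ => ENNReal.ofReal s * ∑' k : ℕ+, (k : ENNReal) ^ (-(1 + s)))
      (𝓝[>] 0) (𝓝 1) := by
  have hshift : Tendsto (fun s : ℝ => 1 + s) (𝓝[>] 0) (𝓝[>] 1) := by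
    refine tendsto_nhdsWithin_iff.2
      ⟨?_, eventually_mem_nhdsWithin.mono fun s hs => by simpa using hs⟩
    exact tendsto_nhdsWithin_of_tendsto_nhds ((continuous_const_add 1).tendsto' 0 1 (add_zero 1))
  have h := ENNReal.tendsto_ofReal (tendsto_sub_mul_tsum_nat_rpow.comp hshift)
  rw [ENNReal.ofReal_one] at h
  refine h.congr' (eventually_mem_nhdsWithin.mono fun s (hs : 0 < s) => ?_)
  simp only [Function.comp_apply]
  rw [add_sub_cancel_left, ENNReal.ofReal_mul hs.le, tsum_pnat_rpow_neg_eq_ofReal (by linarith)]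

theorem lintegral_Ioi_comp_mul_left {a : ℝ} (ha : 0 < a) (F : ℝ → ENNReal) :
    ∫⁻ x in Set.Ioi 0, F (a * x) = (ENNReal.ofReal a)⁻¹ * ∫⁻ t in Set.Ioi 0, F t := by
  have h := lintegral_map_equiv ((Set.Ioi 0).indicator F)
    (MeasurableEquiv.mulLeft₀ a ha.ne') (μ := volume)
  rw [MeasurableEquiv.coe_mulLeft₀, Real.map_volume_mul_left ha.ne', lintegral_smul_measure,
    lintegral_indicator measurableSet_Ioi, abs_of_pos (by positivity),
    ENNReal.ofReal_inv_of_pos ha] at h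
  rw [← lintegral_indicator measurableSet_Ioi, ← smul_eq_mul, h]
  refine lintegral_congr fun x => ?_
  simp [Set.indicator_apply, mul_pos_iff_of_pos_left ha]

theorem lintegral_Ioc_ofReal_rpow {b s : ℝ} (hb : 0 < b) (hs : 0 < s) :
    ENNReal.ofReal s * ∫⁻ x in Set.Ioc 0 b, ENNReal.ofReal x ^ (s - 1) = ENNReal.ofReal b ^ s := by
  have hint : ∫⁻ x in Set.Ioc 0 b, ENNReal.ofReal x ^ (s - 1) = ENNReal.ofReal (b ^ s / s) := by
    rw [setLIntegral_congr_fun measurableSet_Ioc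
      fun x hx => ENNReal.ofReal_rpow_of_pos hx.1, ← ofReal_integral_eq_lintegral_ofReal,
      ← intervalIntegral.integral_of_le hb.le, integral_rpow (Or.inl (by linarith))]
    · rw [sub_add_cancel, Real.zero_rpow hs.ne', sub_zero]
    · exact (intervalIntegrable_iff_integrableOn_Ioc_of_le hb.le).1
        (intervalIntegral.intervalIntegrable_rpow' (by linarith))
    · exact (ae_restrict_mem measurableSet_Ioc).mono fun x hx => Real.rpow_nonneg hx.1.le _
  rw [hint, ← ENNReal.ofReal_mul hs.le, mul_div_cancel₀ _ hs.ne', ENNReal.ofReal_rpow_of_pos hb]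

theorem lintegral_rpow_mul_tsum_comp_mul (a : ℕ+ → ENNReal) {F : ℝ → ENNReal} (hF : Measurable F)
    (s : ℝ) :
    ∫⁻ x in Set.Ioi 0, ENNReal.ofReal x ^ (s - 1) * ∑' k : ℕ+, a k * F (k * x) =
      (∑' k : ℕ+, a k * (k : ENNReal) ^ (-s)) *
        ∫⁻ t in Set.Ioi 0, ENNReal.ofReal t ^ (s - 1) * F t := by
  simp_rw [← ENNReal.tsum_mul_left]
  rw [lintegral_tsum fun k => by fun_prop, ← ENNReal.tsum_mul_right]
  refine tsum_congr fun k => ?_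
  have hk0 : ((k : ℕ) : ENNReal) ≠ 0 := by simp
  have hktop := ENNReal.natCast_ne_top k
  have hscale (x : ℝ) : ENNReal.ofReal x ^ (s - 1) * (a k * F (k * x)) =
      a k * (k : ENNReal) ^ (1 - s) * (ENNReal.ofReal (k * x) ^ (s - 1) * F (k * x)) := by
    rw [ENNReal.ofReal_mul (by positivity), ENNReal.ofReal_natCast,
      ENNReal.mul_rpow_of_ne_top hktop ENNReal.ofReal_ne_top]
    have hcancel : (k : ENNReal) ^ (1 - s) * (k : ENNReal) ^ (s - 1) = 1 := by
      rw [← ENNReal.rpow_add _ _ hk0 hktop, sub_add_sub_cancel, sub_self, ENNReal.rpow_zero]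
    calc _ = (k : ENNReal) ^ (1 - s) * (k : ENNReal) ^ (s - 1) *
          (ENNReal.ofReal x ^ (s - 1) * (a k * F (k * x))) := by rw [hcancel, one_mul]
      _ = _ := by ring
  simp_rw [hscale]
  rw [lintegral_const_mul _ (by fun_prop), lintegral_Ioi_comp_mul_left (by simp)
    fun t => ENNReal.ofReal t ^ (s - 1) * F t, ENNReal.ofReal_natCast, ← mul_assoc,
    mul_assoc (a k), ← ENNReal.rpow_neg_one, ← ENNReal.rpow_add _ _ hk0 hktop]
  ring_nf

theorem continuous_ennreal_const_rpow {a : ENNReal} (ha0 : a ≠ 0) (ha : a ≠ ⊤) :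
    Continuous fun s : ℝ => a ^ s := by
  have hpos : 0 < a.toReal := ENNReal.toReal_pos ha0 ha
  rw [← ENNReal.ofReal_toReal ha]
  simp_rw [ENNReal.ofReal_rpow_of_pos hpos]
  exact ENNReal.continuous_ofReal.comp (Real.continuous_const_rpow hpos.ne')

variable {ι : Type*} [Fintype ι]

theorem rpow_mul_tsum_le_of_forall_one_le {F : ℝ → ENNReal} (hF : Measurable F) {b s : ℝ}
    (hb : 0 < b) (hs : 0 < s) (h : ∀ x ∈ Set.Ioc 0 b,
      1 ≤ ∑' k : ℕ+, jordanTotient ι k * (k : ENNReal) ^ (-(Fintype.card ι + 1) : ℝ) * F (k * x)) :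
    ENNReal.ofReal b ^ s * ∑' j : ℕ+, (j : ENNReal) ^ (-(Fintype.card ι + 1 + s)) ≤
      (ENNReal.ofReal s * ∑' N : ℕ+, (N : ENNReal) ^ (-(1 + s))) *
        ∫⁻ t in Set.Ioi 0, ENNReal.ofReal t ^ (s - 1) * F t := by
  set d : ℝ := (Fintype.card ι : ℝ)
  let J : ENNReal := ∑' k : ℕ+, jordanTotient ι k * (k : ENNReal) ^ (-(d + 1 + s))
  set M : ENNReal := ∫⁻ t in Set.Ioi 0, ENNReal.ofReal t ^ (s - 1) * F t with hM
  have hJ : ∑' k : ℕ+, jordanTotient ι k * (k : ENNReal) ^ (-(d + 1)) * (k : ENNReal) ^ (-s) = J :=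
    tsum_congr fun k => by
      rw [mul_assoc, ← ENNReal.rpow_add _ _ (by simp) (ENNReal.natCast_ne_top k), ← neg_add]
  have hmellin : ENNReal.ofReal b ^ s ≤ ENNReal.ofReal s * (J * M) := by
    rw [← lintegral_Ioc_ofReal_rpow hb hs, ← hJ, hM, ← lintegral_rpow_mul_tsum_comp_mul _ hF]
    refine mul_le_mul' le_rfl ((setLIntegral_mono' measurableSet_Ioc fun x hx => ?_).trans
      (lintegral_mono_set Set.Ioc_subset_Ioi_self))
    exact le_mul_of_one_le_right' (h x hx)
  calc ENNReal.ofReal b ^ s * ∑' j : ℕ+, (j : ENNReal) ^ (-(d + 1 + s))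
      ≤ ENNReal.ofReal s * (J * M) * ∑' j : ℕ+, (j : ENNReal) ^ (-(d + 1 + s)) := by gcongr
    _ = ENNReal.ofReal s * ((∑' j : ℕ+, (j : ENNReal) ^ (-(d + 1 + s))) * J) * M := by ring
    _ = (ENNReal.ofReal s * ∑' N : ℕ+, (N : ENNReal) ^ (-(1 + s))) * M := by
      rw [tsum_rpow_mul_tsum_jordanTotient, show Fintype.card ι - (d + 1 + s) = -(1 + s) by ring]

theorem lintegral_rpow_sub_one_mul_le {V : ℝ → ENNReal} (hV : Measurable V) {R s : ℝ}
    (hVR : ∀ t, R < t → V t = 0) (hs : 0 ≤ s) :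
    ∫⁻ t in Set.Ioi 0, ENNReal.ofReal t ^ (s - 1) * (ENNReal.ofReal t * V t) ≤
      ENNReal.ofReal R ^ s * ∫⁻ t in Set.Ioi 0, V t := by
  rw [← lintegral_const_mul _ hV]
  refine setLIntegral_mono' measurableSet_Ioi fun t (ht : 0 < t) => ?_
  obtain htR | htR := lt_or_ge R t
  · simp [hVR t htR]
  calc ENNReal.ofReal t ^ (s - 1) * (ENNReal.ofReal t * V t) = ENNReal.ofReal t ^ s * V t := by
        rw [← mul_assoc, ENNReal.rpow_sub _ _ (by simpa) ENNReal.ofReal_ne_top, ENNReal.rpow_one,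
          ENNReal.div_mul_cancel (by simpa) ENNReal.ofReal_ne_top]
    _ ≤ ENNReal.ofReal R ^ s * V t := by gcongr

theorem tsum_rpow_le_lintegral_of_forall_one_le {V : ℝ → ENNReal} (hV : Measurable V) {b R : ℝ}
    (hb : 0 < b) (hR : 0 < R) (hVR : ∀ t, R < t → V t = 0) (h : ∀ x ∈ Set.Ioc 0 b,
      1 ≤ ∑' k : ℕ+, jordanTotient ι k * (k : ENNReal) ^ (-(Fintype.card ι + 1) : ℝ) *
        (ENNReal.ofReal (k * x) * V (k * x))) :
    ∑' j : ℕ+, (j : ENNReal) ^ (-(Fintype.card ι + 1) : ℝ) ≤ ∫⁻ t in Set.Ioi 0, V t := by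
  set d : ℝ := (Fintype.card ι : ℝ)
  have hrpow {a : ENNReal} (ha0 : a ≠ 0) (ha : a ≠ ⊤) {f : ℝ → ℝ} (hf : Continuous f) :
      Tendsto (fun s => a ^ f s) (𝓝[>] 0) (𝓝 (a ^ f 0)) :=
    ((continuous_ennreal_const_rpow ha0 ha).comp hf).continuousWithinAt
  refine ENNReal.summable.tsum_le_of_sum_le fun u => ?_
  have hleft : Tendsto (fun s => ENNReal.ofReal b ^ s * ∑ j ∈ u, (j : ENNReal) ^ (-(d + 1 + s)))
      (𝓝[>] 0) (𝓝 (∑ j ∈ u, (j : ENNReal) ^ (-(d + 1)))) := by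
    have hsum : Tendsto (fun s => ∑ j ∈ u, (j : ENNReal) ^ (-(d + 1 + s)))
        (𝓝[>] 0) (𝓝 (∑ j ∈ u, (j : ENNReal) ^ (-(d + 1 + 0)))) :=
      tendsto_finsetSum u fun j _ => hrpow (f := fun s => -(d + 1 + s))
        (by simp) (ENNReal.natCast_ne_top j) (by fun_prop)
    simpa using ENNReal.Tendsto.mul (hrpow (by simpa) ENNReal.ofReal_ne_top continuous_id)
      (by simp) hsum (by simp)
  have hright : Tendsto (fun s => (ENNReal.ofReal s * ∑' N : ℕ+, (N : ENNReal) ^ (-(1 + s))) *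
      (ENNReal.ofReal R ^ s * ∫⁻ t in Set.Ioi 0, V t)) (𝓝[>] 0) (𝓝 (∫⁻ t in Set.Ioi 0, V t)) := by
    have hbound := ENNReal.Tendsto.mul_const (b := ∫⁻ t in Set.Ioi 0, V t)
      (hrpow (a := ENNReal.ofReal R) (by simpa) ENNReal.ofReal_ne_top continuous_id) (by simp)
    simpa using ENNReal.Tendsto.mul tendsto_ofReal_mul_tsum_pnat_rpow (by simp) hbound
      (by simp)
  refine le_of_tendsto_of_tendsto hleft hright
    (eventually_mem_nhdsWithin.mono fun s (hs : 0 < s) => ?_)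
  calc ENNReal.ofReal b ^ s * ∑ j ∈ u, (j : ENNReal) ^ (-(d + 1 + s))
      ≤ ENNReal.ofReal b ^ s * ∑' j : ℕ+, (j : ENNReal) ^ (-(d + 1 + s)) := by
        gcongr
        exact ENNReal.sum_le_tsum u
    _ ≤ _ := rpow_mul_tsum_le_of_forall_one_le
        (F := fun t => ENNReal.ofReal t * V t) (by fun_prop) hb hs h
    _ ≤ _ := mul_le_mul' le_rfl (lintegral_rpow_sub_one_mul_le hV hVR hs.le)

end Mellin

theorem two_mul_measure_inter_pos_le {G : Type*} [AddGroup G] [MeasurableSpace G]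
    [MeasurableNeg G] {μ : Measure G} [μ.IsNegInvariant] {S : Set G} (hS : S = -S) {φ : G →+ ℝ}
    (hφ : Measurable φ) : 2 * μ (S ∩ {x | 0 < φ x}) ≤ μ S := by
  have hneg : -(S ∩ {x | 0 < φ x}) ⊆ S \ {x | 0 < φ x} := by
    rintro x ⟨hxS, hx⟩
    rw [Set.mem_ofPred_eq, map_neg] at hx
    exact ⟨by rwa [hS], fun h => by linarith [h.out]⟩
  calc 2 * μ (S ∩ {x | 0 < φ x})
      = μ (S ∩ {x | 0 < φ x}) + μ (-(S ∩ {x | 0 < φ x})) := by rw [Measure.measure_neg, two_mul]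
    _ ≤ μ (S ∩ {x | 0 < φ x}) + μ (S \ {x | 0 < φ x}) := by gcongr
    _ = μ S := measure_inter_add_sdiff S (measurableSet_lt measurable_const hφ)

theorem setLIntegral_measure_prodMk_preimage {α β : Type*} [MeasurableSpace α] [MeasurableSpace β]
    {μ : Measure α} {ν : Measure β} [SFinite μ] [SFinite ν] {S : Set (α × β)}
    (hS : MeasurableSet S) (A : Set α) :
    ∫⁻ t in A, ν (Prod.mk t ⁻¹' S) ∂μ = μ.prod ν (S ∩ Prod.fst ⁻¹' A) := by
  rw [← Measure.prod_apply hS, ← Measure.restrict_univ (μ := ν), Measure.prod_restrict,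
    Measure.restrict_apply hS, Measure.restrict_univ, Set.prod_univ]

section ShearedLattice

variable {ι : Type*}

/-- The point with coordinates `(k, m)` in the lattice obtained from `hℤ × εℤ^ι` by a shear along
`ξ`. -/
def shearedPoint (h ε : ℝ) (ξ : ι → ℝ) (k : ℤ) (m : ι → ℤ) : ℝ × (ι → ℝ) :=
  (k * h, ε • ((fun i => (m i : ℝ)) + (k : ℝ) • ξ))

theorem shearedPoint_mul (h ε : ℝ) (ξ : ι → ℝ) (g k : ℤ) (m : ι → ℤ) :
    shearedPoint h ε ξ (g * k) (fun i => g * m i) = (g : ℝ) • shearedPoint h ε ξ k m := by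
  refine Prod.ext ?_ (funext fun i => ?_)
  · simp only [shearedPoint, Prod.smul_fst, smul_eq_mul]
    push_cast
    ring
  · simp only [shearedPoint, Prod.smul_snd, Pi.smul_apply, Pi.add_apply, smul_eq_mul]
    push_cast
    ring

theorem shearedPoint_notMem_of_forall_isPrimitive {S : Set (ℝ × (ι → ℝ))} {h ε : ℝ} {ξ : ι → ℝ}
    (hstar : ∀ x ∈ S, ∀ t ∈ Set.Icc (0 : ℝ) 1, t • x ∈ S)
    (hprim : ∀ k : ℕ, 0 < k → ∀ m : ι → ℤ, IsPrimitive k m → shearedPoint h ε ξ k m ∉ S)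
    {k : ℕ} (hk : 0 < k) (m : ι → ℤ) : shearedPoint h ε ξ k m ∉ S := fun hmem => by
  obtain ⟨g, k', m', hg, hk', rfl, hm, hprim'⟩ := exists_eq_mul_isPrimitive hk m
  obtain rfl : m = fun i => (g : ℤ) * m' i := funext hm
  have hg1 : (1 : ℝ) ≤ g := by exact_mod_cast hg
  have hsmul := hstar _ hmem (g : ℝ)⁻¹ ⟨by positivity, inv_le_one_of_one_le₀ hg1⟩
  rw [Nat.cast_mul, shearedPoint_mul, Int.cast_natCast, inv_smul_smul₀ (by positivity)] at hsmul
  exact hprim k' hk' m' hprim' hsmul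

variable [Fintype ι]

theorem exists_forall_isPrimitive_shearedPoint_notMem {S : Set (ℝ × (ι → ℝ))} {h ε : ℝ}
    (hh : 0 < h) (hε : 0 < ε) (hdet : h * ε ^ Fintype.card ι = 1)
    (hsum : ∑' k : ℕ+, jordanTotient ι k * (k : ENNReal) ^ (-(Fintype.card ι + 1) : ℝ) *
      (ENNReal.ofReal (k * h) * volume (Prod.mk (k * h) ⁻¹' S)) < 1) :
    ∃ ξ : ι → ℝ, ∀ k : ℕ, 0 < k → ∀ m : ι → ℤ, IsPrimitive k m → shearedPoint h ε ξ k m ∉ S := by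
  refine exists_forall_isPrimitive_notMem {p | (p.1 * h, ε • p.2) ∈ S}
    ((tsum_congr fun k => ?_).trans_lt hsum)
  have hslice : volume (Prod.mk (k : ℝ) ⁻¹' {p | (p.1 * h, ε • p.2) ∈ S}) =
      ENNReal.ofReal h * volume (Prod.mk (k * h) ⁻¹' S) := by
    have := Measure.addHaar_preimage_smul volume hε.ne' (Prod.mk (k * h) ⁻¹' S)
    rwa [Module.finrank_fintype_fun_eq_card, ← eq_inv_of_mul_eq_one_left hdet,
      abs_of_pos hh] at this
  have hk : (k : ENNReal) ^ (-(Fintype.card ι + 1) : ℝ) * k =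
      ((k : ENNReal) ^ Fintype.card ι)⁻¹ := by
    have hktop := ENNReal.natCast_ne_top k
    rw [neg_add, ENNReal.rpow_add _ _ (by simp) hktop, ENNReal.rpow_neg_one, mul_assoc,
      ENNReal.inv_mul_cancel (by simp) hktop, mul_one, ENNReal.rpow_neg, ENNReal.rpow_natCast]
  rw [hslice, ENNReal.ofReal_mul (by positivity), ENNReal.ofReal_natCast, ← hk]
  ring

theorem exists_le_mul_pow_eq_one {d : ℕ} (hd : d ≠ 0) {h R : ℝ} (hR : 0 < R) (hh : 0 < h)
    (hhR : h ≤ (R ^ d)⁻¹) : ∃ ε, R ≤ ε ∧ h * ε ^ d = 1 := by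
  have hpow := Real.rpow_inv_natCast_pow (inv_nonneg.2 hh.le) hd
  refine ⟨h⁻¹ ^ (d : ℝ)⁻¹, le_of_pow_le_pow_left₀ hd (by positivity) ?_, ?_⟩
  · rw [hpow]
    exact (le_inv_comm₀ hh (by positivity)).1 hhR
  · rw [hpow, mul_inv_cancel₀ hh.ne']

theorem eq_zero_of_shearedPoint_mem {S : Set (ℝ × (ι → ℝ))} {h ε : ℝ} {ξ : ι → ℝ}
    (hsymm : S = -S) (hball : ∀ x ∈ S, ‖x‖ < ε)
    (hpos : ∀ k : ℕ, 0 < k → ∀ m : ι → ℤ, shearedPoint h ε ξ k m ∉ S)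
    {k : ℤ} {m : ι → ℤ} (hmem : shearedPoint h ε ξ k m ∈ S) : k = 0 ∧ m = 0 := by
  obtain hk | rfl | hk := lt_trichotomy k 0
  · have hneg : shearedPoint h ε ξ (-1 * k) (fun i => -1 * m i) ∈ S := by
      rw [shearedPoint_mul, hsymm]
      simpa using hmem
    lift -1 * k to ℕ using by lia with k' hk'
    exact (hpos k' (by lia) _ hneg).elim
  · refine ⟨rfl, funext fun i => ?_⟩
    have hε : 0 < ε := (norm_nonneg _).trans_lt (hball _ hmem)
    have hmi : ‖(m i : ℝ)‖ < 1 := by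
      have := ((norm_le_pi_norm _ i).trans (norm_snd_le _)).trans_lt (hball _ hmem)
      simpa [shearedPoint, abs_of_pos hε, hε] using this
    rw [Real.norm_eq_abs] at hmi
    exact Int.abs_lt_one_iff.1 (by exact_mod_cast hmi)
  · lift k to ℕ using hk.le
    exact (hpos k (by exact_mod_cast hk) m hmem).elim

theorem exists_shearedPoint_mem_imp_eq_zero [Nonempty ι] {S : Set (ℝ × (ι → ℝ))}
    (hS : MeasurableSet S) (hbd : Bornology.IsBounded S) (hsymm : S = -S)
    (hstar : ∀ x ∈ S, ∀ t ∈ Set.Icc (0 : ℝ) 1, t • x ∈ S)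
    (hvol : volume S < 2 * ∑' j : ℕ+, (j : ENNReal) ^ (-(Fintype.card ι + 1) : ℝ)) :
    ∃ (h ε : ℝ) (ξ : ι → ℝ), h * ε ^ Fintype.card ι = 1 ∧
      ∀ k m, shearedPoint h ε ξ k m ∈ S → k = 0 ∧ m = 0 := by
  obtain ⟨R, hR, hSR⟩ := hbd.subset_ball_lt 0 0
  have hball (x) (hx : x ∈ S) : ‖x‖ < R := by simpa using hSR hx
  let V (t : ℝ) : ENNReal := volume (Prod.mk t ⁻¹' S)
  have hVR (t : ℝ) (ht : R < t) : V t = 0 := by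
    have hempty : Prod.mk t ⁻¹' S = ∅ := Set.eq_empty_of_forall_notMem fun y hy =>
      (ht.trans_le ((le_abs_self t).trans (norm_fst_le (t, y)))).not_gt (hball _ hy)
    exact (congrArg volume hempty).trans measure_empty
  have hhalf : 2 * ∫⁻ t in Set.Ioi 0, V t ≤ volume S := by
    have : (volume : Measure (ℝ × (ι → ℝ))).IsAddHaarMeasure :=
      Measure.prod.instIsAddHaarMeasure _ _
    rw [setLIntegral_measure_prodMk_preimage hS]
    exact two_mul_measure_inter_pos_le hsymm (φ := AddMonoidHom.fst ℝ (ι → ℝ)) measurable_fst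
      (μ := volume)
  obtain ⟨h, ⟨hh, hhb⟩, hsum⟩ : ∃ h ∈ Set.Ioc 0 (R ^ Fintype.card ι)⁻¹, ∑' k : ℕ+,
      jordanTotient ι k * (k : ENNReal) ^ (-(Fintype.card ι + 1) : ℝ) *
        (ENNReal.ofReal (k * h) * V (k * h)) < 1 := by
    by_contra! hge
    have := tsum_rpow_le_lintegral_of_forall_one_le (measurable_measure_prodMk_left hS)
      (by positivity) hR hVR hge
    exact (hvol.trans_le (by gcongr)).not_ge hhalf
  obtain ⟨ε, hRε, hdet⟩ := exists_le_mul_pow_eq_one Fintype.card_ne_zero hR hh hhb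
  obtain ⟨ξ, hξ⟩ := exists_forall_isPrimitive_shearedPoint_notMem hh (hR.trans_le hRε) hdet hsum
  exact ⟨h, ε, ξ, hdet, fun k m => eq_zero_of_shearedPoint_mem hsymm
    (fun x hx => (hball x hx).trans_le hRε)
    fun _ hk => shearedPoint_notMem_of_forall_isPrimitive hstar hξ hk⟩

end ShearedLattice

/-- The matrix whose columns span the lattice of the points `shearedPoint h ε ξ k m`, under the
identification of `ℝ × ℝᵈ` with `ℝᵈ⁺¹`. -/
def shearedMatrix {d : ℕ} (h ε : ℝ) (ξ : Fin d → ℝ) : Matrix (Fin (d + 1)) (Fin (d + 1)) ℝ :=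
  Matrix.of (Fin.cons (Fin.cons h 0) fun i => Fin.cons (ε * ξ i) (Pi.single i ε))

theorem det_shearedMatrix {d : ℕ} (h ε : ℝ) (ξ : Fin d → ℝ) :
    (shearedMatrix h ε ξ).det = h * ε ^ d := by
  have hlower : (shearedMatrix h ε ξ).IsLowerTriangular := by
    intro i j (hij : i < j)
    obtain ⟨j, rfl⟩ := Fin.exists_succ_eq.2 ((Fin.zero_le i).trans_lt hij).ne'
    induction i using Fin.cases with
    | zero => rfl
    | succ i => exact Pi.single_eq_of_ne (Fin.succ_lt_succ_iff.1 hij).ne' _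
  rw [Matrix.det_of_isLowerTriangular _ hlower, Fin.prod_univ_succ]
  simp [shearedMatrix]

theorem shearedMatrix_mulVec {d : ℕ} (h ε : ℝ) (ξ : Fin d → ℝ) (m : Fin (d + 1) → ℤ) :
    (shearedMatrix h ε ξ).mulVec (fun i => (m i : ℝ)) =
      Fin.consEquivL ℝ (fun _ => ℝ) (shearedPoint h ε ξ (m 0) (Fin.tail m)) := by
  ext i
  induction i using Fin.cases with
  | zero =>
    simp [shearedMatrix, shearedPoint, Matrix.mulVec, dotProduct, Fin.sum_univ_succ, mul_comm]
  | succ i =>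
    have hrow : ∑ j, (Pi.single i ε : Fin d → ℝ) j * m j.succ = ε * m i.succ := by
      simp [Pi.single_apply]
    calc (shearedMatrix h ε ξ).mulVec (fun i => (m i : ℝ)) i.succ
        = ε * ξ i * m 0 + ∑ j, (Pi.single i ε : Fin d → ℝ) j * m j.succ := Fin.sum_univ_succ _
      _ = ε * (m i.succ + m 0 * ξ i) := by rw [hrow]; ring

theorem measurePreserving_consEquivL (d : ℕ) :
    MeasurePreserving (Fin.consEquivL ℝ fun _ : Fin (d + 1) => ℝ) := by
  convert (volume_preserving_piFinSuccAbove (fun _ : Fin (d + 1) => ℝ) 0).symm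
  ext x : 1
  exact (Fin.insertNth_zero' _ _).symm

theorem ofReal_tsum_inv_pow {n : ℕ} (hn : 2 ≤ n) :
    ENNReal.ofReal (∑' k : ℕ, ((k : ℝ) + 1)⁻¹ ^ n) = ∑' k : ℕ+, (k : ENNReal) ^ (-n : ℝ) := by
  have hn' : (1 : ℝ) < n := by exact_mod_cast hn
  rw [tsum_pnat_rpow_neg_eq_ofReal hn', (Real.summable_one_div_nat_rpow.2 hn').tsum_eq_zero_add]
  simp [(by lia : n ≠ 0)]

theorem minkowski_hlawka (n : ℕ) (hn : 2 ≤ n)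
    (S : Set (Fin n → ℝ)) (hS : MeasurableSet S) (hbd : Bornology.IsBounded S)
    (h0 : (0 : Fin n → ℝ) ∈ S) (hsymm : S = -S)
    (hstar : ∀ x ∈ S, ∀ t ∈ Set.Icc (0 : ℝ) 1, t • x ∈ S)
    (hvol : volume S < ENNReal.ofReal (2 * ∑' k : ℕ, ((k : ℝ) + 1)⁻¹ ^ n)) :
    ∃ B : Matrix (Fin n) (Fin n) ℝ, |B.det| = 1 ∧
      ∀ m : Fin n → ℤ, B.mulVec (fun i => (m i : ℝ)) ∈ S → m = 0 := by
  obtain ⟨d, rfl⟩ : ∃ d, n = d + 1 := ⟨n - 1, by lia⟩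
  have : NeZero d := ⟨by lia⟩
  let L := Fin.consEquivL ℝ fun _ : Fin (d + 1) => ℝ
  obtain ⟨h, ε, ξ, hdet, hξ⟩ := exists_shearedPoint_mem_imp_eq_zero (S := L ⁻¹' S)
    (L.continuous.measurable hS) (L.antilipschitz.isBounded_preimage hbd)
    (by ext x; simpa using Set.ext_iff.1 hsymm (L x))
    (fun x hx t ht => by simpa using hstar (L x) hx t ht)
    (by
      rw [ENNReal.ofReal_mul zero_le_two, ofReal_tsum_inv_pow hn] at hvol
      simpa [(measurePreserving_consEquivL d).measure_preimage hS.nullMeasurableSet, L] using hvol)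
  refine ⟨shearedMatrix h ε ξ, ?_, fun m hm => ?_⟩
  · rw [det_shearedMatrix, ← Fintype.card_fin d, hdet, abs_one]
  · rw [shearedMatrix_mulVec] at hm
    obtain ⟨hhead, htail⟩ := hξ _ _ hm
    exact funext (Fin.cases hhead (congrFun htail))
end

section
/- Gauss's bound for the circle problem: For every real x ≥ 1, the number R(x) = #{(a,b) ∈ ℤ² : a² + b² ≤ x} of integer lattice points in the closed disk of radius √x around the origin satisfies π·(√x − √2/2)² < R(x) < π·(√x + √2/2)². In particular R(x) = πx + O(x^{1/2}). -/
/-!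
Rounding every coordinate sends a point of `ℝ^ι` to the centre of its unit cube; every fibre has
volume `1`, so the number of lattice points in a set is the volume of the union of their cubes.
Rounding moves a point by at most `δ = √(card ι) / 2`, so for the lattice points in the ball of
radius `r` this union lies between the balls of radii `r - δ` and `r + δ`.
-/

open Filter

section

open MeasureTheory Metric

lemma measureReal_lt_of_isOpen_subset_diff {X : Type*} [TopologicalSpace X] [MeasurableSpace X]
    [OpensMeasurableSpace X] {μ : Measure X} [μ.IsOpenPosMeasure] {s t u : Set X} (hst : s ⊆ t)
    (hu : IsOpen u) (hu_nonempty : u.Nonempty) (hut : u ⊆ t \ s) (ht : μ t ≠ ⊤) :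
    μ.real s < μ.real t := by
  have hu_pos : 0 < μ.real u :=
    ENNReal.toReal_pos (hu.measure_pos μ hu_nonempty).ne'
      (measure_ne_top_of_subset (hut.trans Set.sdiff_subset) ht)
  calc μ.real s ≤ μ.real (t \ u) :=
        measureReal_mono (Set.subset_sdiff.2 ⟨hst, (Set.subset_sdiff.1 hut).2.symm⟩)
          (measure_ne_top_of_subset Set.sdiff_subset ht)
    _ = μ.real t - μ.real u :=
        measureReal_sdiff (hut.trans Set.sdiff_subset) hu.measurableSet ht
    _ < μ.real t := sub_lt_self _ hu_pos

lemma sqrt_pow_eq_rpow {x : ℝ} (hx : 0 ≤ x) (n : ℕ) : √x ^ n = x ^ ((n : ℝ) / 2) := by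
  rw [Real.rpow_div_two_eq_sqrt _ hx, Real.rpow_natCast]

lemma abs_add_pow_sub_pow_le {r δ : ℝ} (hδ : |δ| ≤ r) (n : ℕ) :
    |(r + δ) ^ n - r ^ n| ≤ |δ| * n * (2 * r) ^ (n - 1) := by
  have r_nonneg : 0 ≤ r := (abs_nonneg δ).trans hδ
  have max_le_two_mul : max |r + δ| |r| ≤ 2 * r :=
    max_le (by linarith [abs_add_le r δ, abs_of_nonneg r_nonneg])
      (by linarith [abs_of_nonneg r_nonneg])
  calc |(r + δ) ^ n - r ^ n| ≤ |r + δ - r| * n * max |r + δ| |r| ^ (n - 1) :=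
        abs_pow_sub_pow_le ..
    _ ≤ |δ| * n * (2 * r) ^ (n - 1) := by
        rw [add_sub_cancel_left]
        gcongr

lemma isBigO_sub_mul_pow {α : Type*} {l : Filter α} {N r : α → ℝ} {v δ : ℝ} {n : ℕ} (hv : 0 ≤ v)
    (hδ : 0 ≤ δ) (hr : Tendsto r l atTop) (h_lower : ∀ᶠ a in l, v * (r a - δ) ^ n ≤ N a)
    (h_upper : ∀ᶠ a in l, N a ≤ v * (r a + δ) ^ n) :
    (fun a ↦ N a - v * r a ^ n) =O[l] fun a ↦ r a ^ (n - 1) := by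
  refine .of_bound (v * (δ * n * 2 ^ (n - 1))) ?_
  filter_upwards [h_lower, h_upper, hr.eventually_ge_atTop δ] with a ha_lower ha_upper hδr
  have above := abs_add_pow_sub_pow_le (δ := δ) (r := r a) (by rwa [abs_of_nonneg hδ]) n
  have below := abs_add_pow_sub_pow_le (δ := -δ) (r := r a) (by rwa [abs_neg, abs_of_nonneg hδ]) n
  rw [abs_of_nonneg hδ] at above
  rw [abs_neg, abs_of_nonneg hδ, ← sub_eq_add_neg] at below
  rw [Real.norm_eq_abs, Real.norm_of_nonneg (pow_nonneg (hδ.trans hδr) _), mul_assoc, mul_assoc,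
    ← mul_pow, abs_le]
  constructor
  · linarith [mul_le_mul_of_nonneg_left (abs_le.1 below).1 hv]
  · linarith [mul_le_mul_of_nonneg_left (abs_le.1 above).2 hv]

variable {ι : Type*}

/-- A point of `ℤ^ι`, regarded as a point of Euclidean space. -/
noncomputable def latticePoint (p : ι → ℤ) : EuclideanSpace ℝ ι := WithLp.toLp 2 fun i ↦ (p i : ℝ)

/-- The lattice point whose half-open unit cube contains `z`, so that the fibre over `p` is the
unit cube centred at `p`. -/
noncomputable def roundVec (z : EuclideanSpace ℝ ι) : ι → ℤ := fun i ↦ round (z i)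

lemma measurable_roundVec : Measurable (roundVec : EuclideanSpace ℝ ι → ι → ℤ) := by
  refine measurable_pi_lambda _ fun i ↦ ?_
  simp only [roundVec, round_eq]
  fun_prop

variable [Fintype ι]

variable (ι) in
/-- The integer points of the closed Euclidean ball of radius `√x` around the origin. As in the
circle problem, the parameter `x` is the square of the radius. -/
def latticeBall (x : ℝ) : Set (ι → ℤ) := {p | ∑ i, (p i : ℝ) ^ 2 ≤ x}

lemma latticeBall_floor (x : ℝ) : latticeBall ι ⌊x⌋ = latticeBall ι x := by
  ext p
  have cast_sum : ∑ i, (p i : ℝ) ^ 2 = ((∑ i, p i ^ 2 : ℤ) : ℝ) := by push_cast; rfl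
  simp only [latticeBall, Set.mem_ofPred_eq, cast_sum, Int.cast_le, Int.le_floor]

lemma exists_gt_latticeBall_eq (x : ℝ) : ∃ y > x, latticeBall ι y = latticeBall ι x := by
  obtain ⟨y, hxy, hy⟩ := exists_between (Int.lt_floor_add_one x)
  have floor_eq : ⌊y⌋ = ⌊x⌋ := Int.floor_eq_iff.2 ⟨(Int.floor_le x).trans hxy.le, hy⟩
  exact ⟨y, hxy, by rw [← latticeBall_floor, floor_eq, latticeBall_floor]⟩

lemma apply_le_sqrt_of_mem_latticeBall {p : ι → ℤ} {x : ℝ} (hp : p ∈ latticeBall ι x) (i : ι) :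
    (p i : ℝ) ≤ √x :=
  (le_abs_self _).trans <| Real.abs_le_sqrt <|
    (Finset.single_le_sum (fun j _ ↦ sq_nonneg (p j : ℝ)) (Finset.mem_univ i)).trans hp

lemma mem_latticeBall_iff_norm_le {p : ι → ℤ} {x : ℝ} (hx : 0 ≤ x) :
    p ∈ latticeBall ι x ↔ ‖latticePoint p‖ ≤ √x := by
  simp [EuclideanSpace.norm_eq, latticePoint, latticeBall, Real.sqrt_le_sqrt_iff hx]

lemma norm_sub_latticePoint_roundVec_le (z : EuclideanSpace ℝ ι) :
    ‖z - latticePoint (roundVec z)‖ ≤ √(Fintype.card ι) / 2 := by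
  have sq_coord_le (i : ι) : (z i - round (z i)) ^ 2 ≤ (1 / 2) ^ 2 :=
    sq_le_sq' (abs_le.1 (abs_sub_round _)).1 (abs_le.1 (abs_sub_round _)).2
  refine le_of_sq_le_sq ?_ (by positivity)
  calc ‖z - latticePoint (roundVec z)‖ ^ 2 = ∑ i, (z i - round (z i)) ^ 2 := by
        simp [EuclideanSpace.norm_sq_eq, latticePoint, roundVec]
    _ ≤ ∑ _i : ι, (1 / 2 : ℝ) ^ 2 := Finset.sum_le_sum fun i _ ↦ sq_coord_le i
    _ = (√(Fintype.card ι) / 2) ^ 2 := by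
        rw [Finset.sum_const, Finset.card_univ, nsmul_eq_mul, div_pow, div_pow,
          Real.sq_sqrt (Nat.cast_nonneg _)]
        ring

lemma closedBall_subset_roundVec_preimage {x : ℝ} (hx : 0 ≤ x) :
    closedBall 0 (√x - √(Fintype.card ι) / 2) ⊆ roundVec ⁻¹' latticeBall ι x := by
  intro z hz
  rw [mem_closedBall_zero_iff] at hz
  rw [Set.mem_preimage, mem_latticeBall_iff_norm_le hx]
  linarith [norm_le_norm_add_norm_sub z (latticePoint (roundVec z)),
    norm_sub_latticePoint_roundVec_le z]

lemma roundVec_preimage_subset_closedBall {x : ℝ} (hx : 0 ≤ x) :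
    roundVec ⁻¹' latticeBall ι x ⊆ closedBall 0 (√x + √(Fintype.card ι) / 2) := by
  intro z hz
  rw [Set.mem_preimage, mem_latticeBall_iff_norm_le hx] at hz
  rw [mem_closedBall_zero_iff]
  linarith [norm_le_norm_add_norm_sub' z (latticePoint (roundVec z)),
    norm_sub_latticePoint_roundVec_le z]

lemma volume_roundVec_preimage_singleton (p : ι → ℤ) :
    volume (roundVec ⁻¹' {p} : Set (EuclideanSpace ℝ ι)) = 1 := by
  have fibre_eq : roundVec ⁻¹' {p} = (WithLp.ofLp : EuclideanSpace ℝ ι → ι → ℝ) ⁻¹'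
      Set.univ.pi fun i ↦ Set.Ico (p i - 1 / 2 : ℝ) (p i + 1 / 2) := by
    ext z
    simp only [Set.mem_preimage, Set.mem_singleton_iff, funext_iff, roundVec, round_eq_iff,
      Set.mem_univ_pi]
  have side_length (i : ι) : (p i + 1 / 2 : ℝ) - (p i - 1 / 2) = 1 := by ring
  rw [fibre_eq, (PiLp.volume_preserving_ofLp ι).measure_preimage
    (MeasurableSet.univ_pi fun _ ↦ measurableSet_Ico).nullMeasurableSet, Real.volume_pi_Ico]
  simp only [side_length, ENNReal.ofReal_one, Finset.prod_const_one]

lemma measurePreserving_roundVec :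
    MeasurePreserving (roundVec : EuclideanSpace ℝ ι → ι → ℤ) volume Measure.count where
  measurable := measurable_roundVec
  map_eq := Measure.ext_of_singleton fun p ↦ by
    rw [Measure.map_apply measurable_roundVec (measurableSet_singleton p),
      volume_roundVec_preimage_singleton, Measure.count_singleton]

lemma volume_real_roundVec_preimage (s : Set (ι → ℤ)) :
    volume.real (roundVec ⁻¹' s : Set (EuclideanSpace ℝ ι)) = s.ncard := by
  have hs : MeasurableSet s := s.to_countable.measurableSet
  rw [measurePreserving_roundVec.measureReal_preimage hs.nullMeasurableSet, measureReal_def,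
    Measure.count_apply hs, Set.ncard]
  cases s.encard <;> simp

lemma volume_real_closedBall_le_ncard_latticeBall {x : ℝ} (hx : 0 ≤ x) :
    volume.real (closedBall (0 : EuclideanSpace ℝ ι) (√x - √(Fintype.card ι) / 2)) ≤
      (latticeBall ι x).ncard := by
  rw [← volume_real_roundVec_preimage]
  exact measureReal_mono (closedBall_subset_roundVec_preimage hx)
    (measure_ne_top_of_subset (roundVec_preimage_subset_closedBall hx)
      measure_closedBall_lt_top.ne)

lemma ncard_latticeBall_lt_volume_real_closedBall [Nontrivial ι] {x : ℝ} (hx : 0 ≤ x) :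
    (latticeBall ι x).ncard <
      volume.real (closedBall (0 : EuclideanSpace ℝ ι) (√x + √(Fintype.card ι) / 2)) := by
  classical
  obtain ⟨i⟩ : Nonempty ι := inferInstance
  have one_lt_sqrt_card : 1 < √(Fintype.card ι) :=
    Real.lt_sqrt_of_sq_lt (by exact_mod_cast Fintype.one_lt_card (α := ι))
  -- The cubes reach at most `√x + 1 / 2` along a coordinate axis, so they miss this cap.
  let cap := ball (0 : EuclideanSpace ℝ ι) (√x + √(Fintype.card ι) / 2) ∩ {z | √x + 1 / 2 < z i}
  have cap_nonempty : cap.Nonempty := by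
    obtain ⟨t, ht, ht'⟩ := exists_between
      (show √x + 1 / 2 < √x + √(Fintype.card ι) / 2 by linarith)
    have t_nonneg : 0 ≤ t := by linarith [Real.sqrt_nonneg x]
    exact ⟨EuclideanSpace.single i t, by simpa [abs_of_nonneg t_nonneg] using ht',
      by simpa using ht⟩
  rw [← volume_real_roundVec_preimage]
  refine measureReal_lt_of_isOpen_subset_diff (roundVec_preimage_subset_closedBall hx)
    (isOpen_ball.inter (isOpen_lt (by fun_prop) (by fun_prop))) cap_nonempty ?_
    measure_closedBall_lt_top.ne
  rintro z ⟨hz_ball, hz_gt : √x + 1 / 2 < z i⟩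
  refine ⟨ball_subset_closedBall hz_ball, fun hz ↦ ?_⟩
  have round_le : (round (z i) : ℝ) ≤ √x := apply_le_sqrt_of_mem_latticeBall hz i
  linarith [sub_half_lt_round (z i)]

lemma volume_real_closedBall_eq_mul_pow {r : ℝ} (hr : 0 ≤ r) :
    volume.real (closedBall (0 : EuclideanSpace ℝ ι) r) =
      volume.real (ball (0 : EuclideanSpace ℝ ι) 1) * r ^ Fintype.card ι := by
  rw [Measure.addHaar_real_closedBall _ _ hr, finrank_euclideanSpace, mul_comm]

lemma ncard_latticeBall_lt_mul_pow [Nontrivial ι] {x : ℝ} (hx : 0 ≤ x) :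
    (latticeBall ι x).ncard < volume.real (ball (0 : EuclideanSpace ℝ ι) 1) *
      (√x + √(Fintype.card ι) / 2) ^ Fintype.card ι := by
  rw [← volume_real_closedBall_eq_mul_pow (by positivity)]
  exact ncard_latticeBall_lt_volume_real_closedBall hx

-- Strictness: the count stays constant on some `[x, y]`, while the volume of the ball grows.
lemma mul_pow_lt_ncard_latticeBall [Nonempty ι] {x : ℝ} (hx : √(Fintype.card ι) / 2 ≤ √x) :
    volume.real (ball (0 : EuclideanSpace ℝ ι) 1) *
      (√x - √(Fintype.card ι) / 2) ^ Fintype.card ι < (latticeBall ι x).ncard := by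
  obtain ⟨y, hxy, count_eq⟩ := exists_gt_latticeBall_eq (ι := ι) x
  have sqrt_pos : 0 < √x := lt_of_lt_of_le (by positivity) hx
  have x_pos : 0 < x := Real.sqrt_pos.1 sqrt_pos
  have sqrt_lt : √x < √y := Real.sqrt_lt_sqrt x_pos.le hxy
  have ball_pos : 0 < volume.real (ball (0 : EuclideanSpace ℝ ι) 1) :=
    ENNReal.toReal_pos (measure_ball_pos _ _ one_pos).ne' measure_ball_lt_top.ne
  calc volume.real (ball (0 : EuclideanSpace ℝ ι) 1) *
        (√x - √(Fintype.card ι) / 2) ^ Fintype.card ι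
    _ < volume.real (ball (0 : EuclideanSpace ℝ ι) 1) *
        (√y - √(Fintype.card ι) / 2) ^ Fintype.card ι := by
        gcongr
    _ = volume.real (closedBall (0 : EuclideanSpace ℝ ι) (√y - √(Fintype.card ι) / 2)) :=
        (volume_real_closedBall_eq_mul_pow (by linarith)).symm
    _ ≤ (latticeBall ι y).ncard := volume_real_closedBall_le_ncard_latticeBall (by linarith)
    _ = (latticeBall ι x).ncard := by rw [count_eq]

lemma isBigO_ncard_latticeBall_sub [Nontrivial ι] :
    (fun x ↦ (latticeBall ι x).ncard -
        volume.real (ball (0 : EuclideanSpace ℝ ι) 1) * x ^ ((Fintype.card ι : ℝ) / 2)) =O[atTop]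
      fun x ↦ x ^ (((Fintype.card ι : ℝ) - 1) / 2) := by
  have radius_form := isBigO_sub_mul_pow (N := fun x ↦ (latticeBall ι x).ncard) (r := Real.sqrt)
    (δ := √(Fintype.card ι) / 2) (n := Fintype.card ι)
    (v := volume.real (ball (0 : EuclideanSpace ℝ ι) 1)) measureReal_nonneg (by positivity)
    Real.tendsto_sqrt_atTop
    ((Real.tendsto_sqrt_atTop.eventually_ge_atTop _).mono
      fun x hx ↦ (mul_pow_lt_ncard_latticeBall hx).le)
    ((eventually_ge_atTop 0).mono fun x hx ↦ (ncard_latticeBall_lt_mul_pow hx).le)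
  refine radius_form.congr' ?_ ?_ <;> filter_upwards [eventually_ge_atTop 0] with x hx
  · rw [sqrt_pow_eq_rpow hx]
  · rw [sqrt_pow_eq_rpow hx, Nat.cast_pred Fintype.card_pos]

theorem gauss_circle_problem_general [Nontrivial ι] :
    (∀ x : ℝ, (Fintype.card ι : ℝ) / 4 ≤ x →
      volume.real (ball (0 : EuclideanSpace ℝ ι) 1) *
          (√x - √(Fintype.card ι) / 2) ^ Fintype.card ι < (latticeBall ι x).ncard ∧
        (latticeBall ι x).ncard < volume.real (ball (0 : EuclideanSpace ℝ ι) 1) *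
          (√x + √(Fintype.card ι) / 2) ^ Fintype.card ι) ∧
    (fun x ↦ (latticeBall ι x).ncard -
        volume.real (ball (0 : EuclideanSpace ℝ ι) 1) * x ^ ((Fintype.card ι : ℝ) / 2)) =O[atTop]
      fun x ↦ x ^ (((Fintype.card ι : ℝ) - 1) / 2) := by
  refine ⟨fun x hx ↦ ⟨mul_pow_lt_ncard_latticeBall ?_, ncard_latticeBall_lt_mul_pow ?_⟩,
    isBigO_ncard_latticeBall_sub⟩
  · refine Real.le_sqrt_of_sq_le ?_
    rwa [div_pow, Real.sq_sqrt (Nat.cast_nonneg _), show (2 : ℝ) ^ 2 = 4 by norm_num]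
  · exact le_trans (by positivity) hx

lemma ncard_latticeBall_fin_two (x : ℝ) : (latticeBall (Fin 2) x).ncard =
    Nat.card {p : ℤ × ℤ // (p.1 : ℝ) ^ 2 + (p.2 : ℝ) ^ 2 ≤ x} :=
  Nat.card_congr <| (finTwoArrowEquiv ℤ).subtypeEquiv fun p ↦ by
    simp [latticeBall, Fin.sum_univ_two]

lemma volume_real_ball_fin_two : volume.real (ball (0 : EuclideanSpace ℝ (Fin 2)) 1) = Real.pi := by
  simp [measureReal_def, Real.pi_nonneg]

end

theorem gauss_circle_problem :
    (∀ x : ℝ, 1 ≤ x →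
      Real.pi * (Real.sqrt x - Real.sqrt 2 / 2) ^ 2 <
          (Nat.card {p : ℤ × ℤ // (p.1 : ℝ) ^ 2 + (p.2 : ℝ) ^ 2 ≤ x} : ℝ) ∧
        (Nat.card {p : ℤ × ℤ // (p.1 : ℝ) ^ 2 + (p.2 : ℝ) ^ 2 ≤ x} : ℝ) <
          Real.pi * (Real.sqrt x + Real.sqrt 2 / 2) ^ 2) ∧
    (fun x : ℝ => (Nat.card {p : ℤ × ℤ // (p.1 : ℝ) ^ 2 + (p.2 : ℝ) ^ 2 ≤ x} : ℝ) -
        Real.pi * x) =O[atTop] fun x : ℝ => x ^ ((1 : ℝ) / 2) := by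
  have ⟨bounds, error⟩ := gauss_circle_problem_general (ι := Fin 2)
  simp only [ncard_latticeBall_fin_two, volume_real_ball_fin_two, Fintype.card_fin, Nat.cast_ofNat,
    div_self (two_ne_zero (α := ℝ)), Real.rpow_one,
    show (2 : ℝ) - 1 = 1 by norm_num] at bounds error
  exact ⟨fun x hx ↦ bounds x (by linarith), error⟩
end

section
/- Mean value of lattice points in balls: For every integer d ≥ 1, lim_{x→∞} x^{−d/2} · #{a ∈ ℤ^d : a₁² + ⋯ + a_d² ≤ x} = π^{d/2}/Γ(d/2 + 1), i.e. the counting function of integer points in the ball of radius √x, divided by x^{d/2}, converges to the volume of the d-dimensional Euclidean unit ball. -/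
open Filter

/-!
The points of a lattice `L` in the ball of radius `r` number about `r ^ n * vol B / covol L`, `B`
the unit ball: this is the count for a region `{F ≤ c}`, `c → ∞`, with `F` homogeneous of degree
`n`, applied to `F v = ‖v‖ ^ n`. The lattice `ℤ ^ d` is spanned by an orthonormal basis, so its
covolume is `1`.
-/

open MeasureTheory Metric Module Submodule Topology

theorem natCard_sum_smul_mem_eq_inter_span {ι R M : Type*} [Fintype ι] [Semiring R]
    [AddCommMonoid M] [Module R M] {v : ι → M} (hv : LinearIndependent R v) (s : Set M) :
    Nat.card {a : ι → R // ∑ i, a i • v i ∈ s} = Nat.card ↑(s ∩ span R (Set.range v)) := by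
  rw [← Fintype.range_linearCombination, LinearMap.coe_range, ← Set.image_preimage_eq_inter_range,
    Nat.card_image_of_injective hv.fintypeLinearCombination_injective]
  rfl

section RealInnerProductSpace

variable {ι E : Type*} [Fintype ι] [NormedAddCommGroup E] [InnerProductSpace ℝ E]
  [FiniteDimensional ℝ E] [MeasurableSpace E] [BorelSpace E]

theorem covolume_span_range_orthonormalBasis (b : OrthonormalBasis ι ℝ E) :
    ZLattice.covolume (span ℤ (Set.range b)) = 1 := by
  rw [← b.coe_toBasis, ZLattice.covolume_eq_measure_fundamentalDomain _ volume
      (ZSpan.isAddFundamentalDomain b.toBasis volume),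
    measureReal_congr (ZSpan.fundamentalDomain_ae_parallelepiped b.toBasis volume),
    b.coe_toBasis, measureReal_def, b.volume_parallelepiped, ENNReal.toReal_one]

variable [Nontrivial E]

theorem volume_real_closedBall (v : E) {r : ℝ} (hr : 0 ≤ r) :
    volume.real (closedBall v r) = r ^ finrank ℝ E *
      (Real.pi ^ ((finrank ℝ E : ℝ) / 2) / Real.Gamma ((finrank ℝ E : ℝ) / 2 + 1)) := by
  have : 0 < Real.Gamma ((finrank ℝ E : ℝ) / 2 + 1) := Real.Gamma_pos_of_pos (by positivity)
  rw [measureReal_def, InnerProductSpace.volume_closedBall, ENNReal.toReal_mul, ENNReal.toReal_pow,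
    ENNReal.toReal_ofReal hr, ENNReal.toReal_ofReal (by positivity),
    Real.rpow_div_two_eq_sqrt _ Real.pi_nonneg, Real.rpow_natCast]

theorem tendsto_natCard_closedBall_inter_div_pow (L : Submodule ℤ E) [DiscreteTopology L]
    [IsZLattice ℝ L] :
    Tendsto (fun r : ℝ => (Nat.card ↑(closedBall 0 r ∩ (L : Set E)) : ℝ) / r ^ finrank ℝ E)
      atTop (𝓝 (volume.real (closedBall (0 : E) 1) / ZLattice.covolume L)) := by
  have hn : finrank ℝ E ≠ 0 := finrank_pos.ne'
  have closedBall_eq {r : ℝ} (hr : 0 ≤ r) :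
      {v ∈ Set.univ | ‖v‖ ^ finrank ℝ E ≤ r ^ finrank ℝ E} = closedBall (0 : E) r := by
    ext v
    simp [pow_le_pow_iff_left₀ (norm_nonneg v) hr hn]
  have unitBall_eq : {v ∈ Set.univ | ‖v‖ ^ finrank ℝ E ≤ 1} = closedBall (0 : E) 1 := by
    simpa only [one_pow] using closedBall_eq zero_le_one
  have sublevel_count := ZLattice.covolume.tendsto_card_le_div' L (X := Set.univ)
    (F := fun v => ‖v‖ ^ finrank ℝ E) (fun _ _ _ _ => Set.mem_univ _)
    (fun v r hr => by rw [norm_smul_of_nonneg hr, mul_pow])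
    (by rw [unitBall_eq]; exact isBounded_closedBall)
    (by rw [unitBall_eq]; exact measurableSet_closedBall)
    (by rw [unitBall_eq]; exact (convex_closedBall 0 1).addHaar_frontier volume)
  rw [unitBall_eq] at sublevel_count
  refine (sublevel_count.comp (tendsto_pow_atTop hn)).congr' ?_
  filter_upwards [eventually_ge_atTop 0] with r hr
  rw [Function.comp_apply, closedBall_eq hr]

/-- As `b` varies, `a ↦ ‖∑ i, a i • b i‖ ^ 2` runs through all positive definite quadratic forms;
the covolume is the square root of the Gram determinant. -/
theorem lattice_points_in_balls_asymptotics_general (b : Basis ι ℝ E) :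
    Tendsto (fun x : ℝ =>
        (Nat.card {a : ι → ℤ // ‖∑ i, a i • b i‖ ^ 2 ≤ x} : ℝ) / x ^ ((finrank ℝ E : ℝ) / 2))
      atTop (𝓝 (Real.pi ^ ((finrank ℝ E : ℝ) / 2) / Real.Gamma ((finrank ℝ E : ℝ) / 2 + 1) /
        ZLattice.covolume (span ℤ (Set.range b)))) := by
  have ball_count := tendsto_natCard_closedBall_inter_div_pow (span ℤ (Set.range b))
  rw [volume_real_closedBall 0 zero_le_one, one_pow, one_mul] at ball_count
  refine (ball_count.comp Real.tendsto_sqrt_atTop).congr' ?_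
  filter_upwards [eventually_ge_atTop 0] with x hx
  rw [Function.comp_apply, Real.rpow_div_two_eq_sqrt _ hx, Real.rpow_natCast,
    ← natCard_sum_smul_mem_eq_inter_span (b.linearIndependent.restrict_scalars' ℤ)]
  simp only [mem_closedBall_zero_iff, Real.le_sqrt (norm_nonneg _) hx]

end RealInnerProductSpace

theorem lattice_points_in_balls_asymptotics (d : ℕ) (hd : 1 ≤ d) :
    Tendsto (fun x : ℝ =>
        (Nat.card {a : Fin d → ℤ // ∑ i, ((a i : ℝ)) ^ 2 ≤ x} : ℝ) / x ^ ((d : ℝ) / 2))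
      atTop (nhds (Real.pi ^ ((d : ℝ) / 2) / Real.Gamma ((d : ℝ) / 2 + 1))) := by
  have : Nonempty (Fin d) := ⟨⟨0, hd⟩⟩
  simpa [covolume_span_range_orthonormalBasis, EuclideanSpace.real_norm_sq_eq,
    Pi.single_apply] using
    lattice_points_in_balls_asymptotics_general (EuclideanSpace.basisFun (Fin d) ℝ).toBasis
end

section
/- Gauss's Eureka theorem: Every natural number n can be written as the sum of at most three triangular numbers, i.e. there exist natural numbers a, b, c ≥ 0 such that n = a(a+1)/2 + b(b+1)/2 + c(c+1)/2. -/
/-! Write `8 * n + 3` as a sum of three squares: modulo `4` all three are odd, and an odd square is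
`8 * T + 1` with `T` triangular.

For the three squares (Dirichlet), it is enough to exhibit `8 * n + 3` as a diagonal entry of a
positive definite integral matrix of determinant one, because in dimension at most five such a
matrix is `Pᵀ * P`. The classification is Hermite's reduction: if `a` is the smallest corner entry
in an equivalence class, then the Schur complement can be reduced inductively, and comparing its
corner with `a` bounds `a ^ N` by `(4 / 3) ^ (N choose 2)` times the determinant in dimension `N`.
When the determinant is one this forces `a = 1`, and a unit corner splits off.
The remaining entries of the ternary matrix come from Dirichlet's theorem on primes in arithmetic
progressions and quadratic reciprocity. -/

open Matrix

/-- Congruence of square matrices over `R`. For symmetric matrices this is equivalence of the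
associated quadratic forms under invertible substitutions with coefficients in `R`. -/
def IsCongruent {ι R : Type*} [Fintype ι] [DecidableEq ι] [CommRing R] (A B : Matrix ι ι R) :
    Prop :=
  ∃ P : Matrix ι ι R, IsUnit P ∧ Pᵀ * A * P = B

namespace IsCongruent

section CommRing

variable {ι R : Type*} [Fintype ι] [DecidableEq ι] [CommRing R] {A B C : Matrix ι ι R}

theorem refl (A : Matrix ι ι R) : IsCongruent A A := ⟨1, isUnit_one, by simp⟩

theorem symm (h : IsCongruent A B) : IsCongruent B A := by
  obtain ⟨P, hP, rfl⟩ := h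
  obtain ⟨Q, hPQ⟩ := hP.exists_right_inv
  refine ⟨Q, IsUnit.of_mul_eq_one_right P hPQ, ?_⟩
  have hQP : Qᵀ * Pᵀ = 1 := by rw [← transpose_mul, hPQ, transpose_one]
  rw [← Matrix.mul_assoc, ← Matrix.mul_assoc, hQP, Matrix.one_mul, Matrix.mul_assoc, hPQ,
    Matrix.mul_one]

theorem trans (hAB : IsCongruent A B) (hBC : IsCongruent B C) : IsCongruent A C := by
  obtain ⟨P, hP, rfl⟩ := hAB
  obtain ⟨Q, hQ, rfl⟩ := hBC
  exact ⟨P * Q, hP.mul hQ, by simp only [transpose_mul, Matrix.mul_assoc]⟩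

theorem submatrix_perm (A : Matrix ι ι R) (σ : Equiv.Perm ι) :
    IsCongruent A (A.submatrix σ σ) := by
  refine ⟨permMatrixHom σ, (Group.isUnit σ).map permMatrixHom, ?_⟩
  ext i j
  simp [PEquiv.toMatrix_toPEquiv_mul, PEquiv.mul_toMatrix_toPEquiv, Equiv.Perm.inv_def]

theorem posDef [PartialOrder R] [StarRing R] [TrivialStar R] (h : IsCongruent A B)
    (hA : A.PosDef) : B.PosDef := by
  obtain ⟨P, hP, rfl⟩ := h
  rw [← conjTranspose_eq_transpose_of_trivial]
  exact hA.conjTranspose_mul_mul_same (mulVec_injective_of_isUnit hP)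

end CommRing

theorem det_eq {ι : Type*} [Fintype ι] [DecidableEq ι] {A B : Matrix ι ι ℤ}
    (h : IsCongruent A B) : B.det = A.det := by
  obtain ⟨P, hP, rfl⟩ := h
  have hsq : P.det * P.det = 1 := Int.isUnit_mul_self ((isUnit_iff_isUnit_det P).1 hP)
  rw [det_mul, det_mul, det_transpose, mul_right_comm, hsq, one_mul]

end IsCongruent

section schurComplement

variable {R : Type*} [CommRing R] {n : ℕ}

/-- The Schur complement of the corner entry, multiplied by that entry to avoid division: for
`A = [a, b; c, D]` this is `a • D - c * b`. -/
def scaledSchurComplement (A : Matrix (Fin (n + 1)) (Fin (n + 1)) R) : Matrix (Fin n) (Fin n) R :=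
  A 0 0 • A.submatrix Fin.succ Fin.succ - vecMulVec (fun i ↦ A i.succ 0) fun j ↦ A 0 j.succ

theorem scaledSchurComplement_apply (A : Matrix (Fin (n + 1)) (Fin (n + 1)) R) (i j : Fin n) :
    scaledSchurComplement A i j = A 0 0 * A i.succ j.succ - A i.succ 0 * A 0 j.succ :=
  rfl

theorem corner_mul_det_scaledSchurComplement (A : Matrix (Fin (n + 1)) (Fin (n + 1)) R) :
    A 0 0 * (scaledSchurComplement A).det = A 0 0 ^ n * A.det := by
  let v : Fin (n + 1) → R := Fin.cons 1 fun _ ↦ A 0 0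
  let c : Fin (n + 1) → R := Fin.cons 0 fun i ↦ -A i.succ 0
  let E : Matrix (Fin (n + 1)) (Fin (n + 1)) R := of fun i j ↦ v i * A i j + c i * A 0 j
  calc A 0 0 * (scaledSchurComplement A).det = E.det := by
        have hsub : E.submatrix Fin.succ Fin.succ = scaledSchurComplement A := by
          ext i j
          simp [E, v, c, scaledSchurComplement_apply, sub_eq_add_neg]
        have hcol (i : Fin n) : E i.succ 0 = 0 := by
          simp [E, v, c, mul_comm]
        have hE : E 0 0 = A 0 0 := by simp [E, v, c]
        rw [det_succ_column_zero, Fin.sum_univ_succ]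
        simp [hcol, hsub, hE]
    _ = (of fun i j ↦ v i * A i j).det :=
        det_eq_of_forall_row_eq_smul_add_const c 0 rfl fun i j ↦ by simp [E, v]
    _ = A 0 0 ^ n * A.det := by
        rw [det_mul_column, Fin.prod_univ_succ]
        simp [v]

theorem mulVec_vecCons (A : Matrix (Fin (n + 1)) (Fin (n + 1)) R) (t : R) (v : Fin n → R) :
    A *ᵥ vecCons t v =
      vecCons (A 0 0 * t + (fun j ↦ A 0 j.succ) ⬝ᵥ v)
        (t • (fun i ↦ A i.succ 0) + A.submatrix Fin.succ Fin.succ *ᵥ v) := by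
  ext i
  refine Fin.cases ?_ (fun i ↦ ?_) i <;>
    simp [mulVec, dotProduct, Fin.sum_univ_succ, mul_comm]

theorem corner_mul_dotProduct_mulVec_vecCons (A : Matrix (Fin (n + 1)) (Fin (n + 1)) R) (s t : R)
    (u v : Fin n → R) :
    A 0 0 * (vecCons s u ⬝ᵥ A *ᵥ vecCons t v) =
      (A 0 0 * s + u ⬝ᵥ fun i ↦ A i.succ 0) * (A 0 0 * t + (fun j ↦ A 0 j.succ) ⬝ᵥ v) +
        u ⬝ᵥ scaledSchurComplement A *ᵥ v := by
  simp only [mulVec_vecCons, cons_dotProduct_cons, scaledSchurComplement, sub_mulVec, smul_mulVec,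
    vecMulVec_mulVec, dotProduct_add, dotProduct_sub, dotProduct_smul, op_smul_eq_smul,
    smul_eq_mul]
  ring

theorem corner_mul_dotProduct_mulVec_vecCons_self {A : Matrix (Fin (n + 1)) (Fin (n + 1)) R}
    (hA : A.IsSymm) (t : R) (y : Fin n → R) :
    A 0 0 * (vecCons t y ⬝ᵥ A *ᵥ vecCons t y) =
      (A 0 0 * t + (fun j ↦ A 0 j.succ) ⬝ᵥ y) ^ 2 + y ⬝ᵥ scaledSchurComplement A *ᵥ y := by
  have hcol : (fun i : Fin n ↦ A i.succ 0) = fun j ↦ A 0 j.succ :=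
    funext fun i ↦ hA.apply 0 i.succ
  rw [corner_mul_dotProduct_mulVec_vecCons, hcol, dotProduct_comm y, sq]

theorem isSymm_scaledSchurComplement {A : Matrix (Fin (n + 1)) (Fin (n + 1)) R} (hA : A.IsSymm) :
    (scaledSchurComplement A).IsSymm := by
  ext i j
  simp only [transpose_apply, scaledSchurComplement_apply, hA.apply i.succ j.succ,
    hA.apply i.succ 0, hA.apply 0 j.succ, mul_comm]

theorem posDef_iff_scaledSchurComplement [LinearOrder R] [IsStrictOrderedRing R] [StarRing R]
    [TrivialStar R] {A : Matrix (Fin (n + 1)) (Fin (n + 1)) R} (hA : A.IsSymm) :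
    A.PosDef ↔ 0 < A 0 0 ∧ (scaledSchurComplement A).PosDef := by
  simp only [posDef_iff_dotProduct_mulVec, star_trivial, isHermitian_iff_isSymm, hA,
    isSymm_scaledSchurComplement hA, true_and]
  constructor
  · intro h
    have hcorner : 0 < A 0 0 := by
      simpa [mulVec_vecCons] using @h (vecCons 1 0) (by simp)
    refine ⟨hcorner, fun y hy ↦ ?_⟩
    have hx : vecCons (-((fun j ↦ A 0 j.succ) ⬝ᵥ y)) (A 0 0 • y) ≠ 0 := by
      simp [hcorner.ne', hy]
    have hpos := mul_pos hcorner (h hx)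
    rw [corner_mul_dotProduct_mulVec_vecCons_self hA, mul_neg, dotProduct_smul, smul_eq_mul,
      neg_add_cancel, zero_pow two_ne_zero, zero_add, mulVec_smul, smul_dotProduct,
      dotProduct_smul, smul_eq_mul, smul_eq_mul] at hpos
    exact pos_of_mul_pos_right (pos_of_mul_pos_right hpos hcorner.le) hcorner.le
  · rintro ⟨hcorner, h⟩ x hx
    obtain ⟨t, y, rfl⟩ : ∃ t y, x = vecCons t y := ⟨vecHead x, vecTail x, by simp⟩
    refine pos_of_mul_pos_right (a := A 0 0) ?_ hcorner.le
    rw [corner_mul_dotProduct_mulVec_vecCons_self hA]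
    rcases eq_or_ne y 0 with rfl | hy
    · have ht : t ≠ 0 := by rintro rfl; simp at hx
      simpa using sq_pos_iff.2 (mul_ne_zero hcorner.ne' ht)
    · exact add_pos_of_nonneg_of_pos (sq_nonneg _) (h hy)

theorem posDef_fin_one_iff [LinearOrder R] [IsStrictOrderedRing R] [StarRing R]
    [TrivialStar R] {A : Matrix (Fin 1) (Fin 1) R} : A.PosDef ↔ 0 < A 0 0 := by
  have hA : A.IsSymm := by ext i j; rw [Subsingleton.elim i j]; rfl
  rw [posDef_iff_scaledSchurComplement hA, and_iff_left]
  exact ⟨Subsingleton.elim _ _, fun x hx ↦ absurd (Subsingleton.elim x 0) hx⟩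

theorem posDef_fin_three_iff [LinearOrder R] [IsStrictOrderedRing R] [StarRing R]
    [TrivialStar R] {A : Matrix (Fin 3) (Fin 3) R} (hA : A.IsSymm) :
    A.PosDef ↔ 0 < A 0 0 ∧ 0 < A 0 0 * A 1 1 - A 0 1 ^ 2 ∧ 0 < A.det := by
  have hcorner : scaledSchurComplement A 0 0 = A 0 0 * A 1 1 - A 0 1 ^ 2 := by
    rw [scaledSchurComplement_apply, Fin.succ_zero_eq_one, hA.apply 0 1, sq]
  have hdet : scaledSchurComplement (scaledSchurComplement A) 0 0 = A 0 0 * A.det := by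
    simp only [scaledSchurComplement_apply, Fin.succ_zero_eq_one, Fin.succ_one_eq_two,
      det_fin_three]
    ring
  rw [posDef_iff_scaledSchurComplement hA,
    posDef_iff_scaledSchurComplement (isSymm_scaledSchurComplement hA), posDef_fin_one_iff,
    hcorner, hdet]
  exact and_congr_right fun h ↦ and_congr_right fun _ ↦ mul_pos_iff_of_pos_left h

/-- The block matrix `[1, k; 0, Q]`. As a change of basis it fixes the first basis vector, acts by
`Q` modulo it, and `k` records the multiples of it added to the other basis vectors. -/
def borderedExtension (k : Fin n → R) (Q : Matrix (Fin n) (Fin n) R) :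
    Matrix (Fin (n + 1)) (Fin (n + 1)) R :=
  of (vecCons (vecCons 1 k) fun i ↦ vecCons 0 (Q i))

theorem det_borderedExtension (k : Fin n → R) (Q : Matrix (Fin n) (Fin n) R) :
    (borderedExtension k Q).det = Q.det := by
  have hsub : (borderedExtension k Q).submatrix Fin.succ Fin.succ = Q := rfl
  rw [det_succ_column_zero, Fin.sum_univ_succ, Fin.succAbove_zero, hsub]
  simp [borderedExtension]

-- One `v` serves every `k`, so the first row can be reduced modulo the corner afterwards.
theorem exists_isCongruent_scaledSchurComplement_eq (A : Matrix (Fin (n + 1)) (Fin (n + 1)) R)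
    {C : Matrix (Fin n) (Fin n) R} (h : IsCongruent (scaledSchurComplement A) C) :
    ∃ v : Fin n → R, ∀ k : Fin n → R, ∃ B, IsCongruent A B ∧ B 0 0 = A 0 0 ∧
      scaledSchurComplement B = C ∧ ∀ j, B 0 j.succ = v j + A 0 0 * k j := by
  obtain ⟨Q, hQ, rfl⟩ := h
  refine ⟨fun j ↦ (fun j ↦ A 0 j.succ) ⬝ᵥ Qᵀ j, fun k ↦ ?_⟩
  let P := borderedExtension k Q
  have hP : IsUnit P := by
    rwa [isUnit_iff_isUnit_det, det_borderedExtension, ← isUnit_iff_isUnit_det]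
  have hcol0 : Pᵀ 0 = vecCons 1 0 := funext (Fin.cases rfl fun i ↦ rfl)
  have hcol (j) : Pᵀ (Fin.succ j) = vecCons (k j) (Qᵀ j) :=
    funext (Fin.cases rfl fun i ↦ rfl)
  have hcorner : (Pᵀ * A * P) 0 0 = A 0 0 := by
    simp [mul_mul_apply, hcol0, mulVec_vecCons]
  have hrow (j : Fin n) :
      (Pᵀ * A * P) 0 j.succ = A 0 0 * k j + (fun j ↦ A 0 j.succ) ⬝ᵥ Qᵀ j := by
    simp [mul_mul_apply, hcol0, hcol, mulVec_vecCons]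
  have hcolumn (i : Fin n) :
      (Pᵀ * A * P) i.succ 0 = A 0 0 * k i + Qᵀ i ⬝ᵥ fun i ↦ A i.succ 0 := by
    simp [mul_mul_apply, hcol0, hcol, mulVec_vecCons, mul_comm]
  refine ⟨Pᵀ * A * P, ⟨P, hP, rfl⟩, hcorner, ?_, fun j ↦ by rw [hrow, add_comm]⟩
  ext i j
  rw [scaledSchurComplement_apply, hcorner, hrow, hcolumn, mul_mul_apply, hcol, hcol,
    corner_mul_dotProduct_mulVec_vecCons, mul_mul_apply, add_sub_cancel_left]

theorem three_mul_corner_sq_le [LinearOrder R] [IsStrictOrderedRing R]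
    {A : Matrix (Fin (n + 2)) (Fin (n + 2)) R} (hA : A.IsSymm) (hdiag : A 0 0 ≤ A 1 1)
    (hoff : 2 * |A 0 1| ≤ A 0 0) : 3 * A 0 0 ^ 2 ≤ 4 * scaledSchurComplement A 0 0 := by
  have hcorner : 0 ≤ A 0 0 := le_trans (by positivity) hoff
  have hsq : 4 * A 0 1 ^ 2 ≤ A 0 0 ^ 2 := by
    calc 4 * A 0 1 ^ 2 = (2 * |A 0 1|) ^ 2 := by rw [mul_pow, sq_abs]; norm_num
      _ ≤ A 0 0 ^ 2 := by gcongr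
  calc 3 * A 0 0 ^ 2 = 4 * (A 0 0 * A 0 0) - A 0 0 ^ 2 := by ring
    _ ≤ 4 * (A 0 0 * A 1 1) - 4 * A 0 1 ^ 2 := by gcongr
    _ = 4 * scaledSchurComplement A 0 0 := by
      rw [scaledSchurComplement_apply, Fin.succ_zero_eq_one, hA.apply 0 1]; ring

theorem eq_one_of_scaledSchurComplement_eq_one {A : Matrix (Fin (n + 1)) (Fin (n + 1)) R}
    (hA : A.IsSymm) (hcorner : A 0 0 = 1) (hrow : ∀ j : Fin n, A 0 j.succ = 0)
    (hschur : scaledSchurComplement A = 1) : A = 1 := by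
  have hcol (i : Fin n) : A i.succ 0 = 0 := by rw [hA.apply, hrow]
  have hrest (i j : Fin n) : A i.succ j.succ = (1 : Matrix (Fin n) (Fin n) R) i j := by
    rw [← hschur, scaledSchurComplement_apply, hcorner, hcol, one_mul, zero_mul, sub_zero]
  ext i j
  refine Fin.cases ?_ (fun i ↦ ?_) i <;> refine Fin.cases ?_ (fun j ↦ ?_) j <;>
    simp [hcorner, hrow, hcol, hrest, one_apply, Fin.succ_ne_zero, (Fin.succ_ne_zero _).symm]

end schurComplement

theorem exists_two_mul_abs_add_mul_le {a : ℤ} (ha : 0 < a) (v : ℤ) :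
    ∃ k : ℤ, 2 * |v + a * k| ≤ a := by
  lift a to ℕ using ha.le
  have hpos : 0 < a := by exact_mod_cast ha
  refine ⟨-v.bdiv a, ?_⟩
  have h : v + a * -v.bdiv a = v.bmod a := by linarith [Int.bmod_add_bdiv v a]
  have hlower := Int.le_bmod (x := v) hpos
  have hupper := Int.bmod_le (x := v) hpos
  rw [h]
  grind

section Integral

variable {n : ℕ}

theorem exists_isCongruent_scaledSchurComplement_eq_of_pos
    {A : Matrix (Fin (n + 1)) (Fin (n + 1)) ℤ} (hA : 0 < A 0 0) {C : Matrix (Fin n) (Fin n) ℤ}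
    (h : IsCongruent (scaledSchurComplement A) C) :
    ∃ B, IsCongruent A B ∧ B 0 0 = A 0 0 ∧ scaledSchurComplement B = C ∧
      ∀ j : Fin n, 2 * |B 0 j.succ| ≤ A 0 0 := by
  obtain ⟨v, hv⟩ := exists_isCongruent_scaledSchurComplement_eq A h
  choose k hk using fun j ↦ exists_two_mul_abs_add_mul_le hA (v j)
  obtain ⟨B, hAB, hcorner, hschur, hrow⟩ := hv k
  exact ⟨B, hAB, hcorner, hschur, fun j ↦ hrow j ▸ hk j⟩

theorem exists_isCongruent_forall_corner_le {A : Matrix (Fin (n + 1)) (Fin (n + 1)) ℤ}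
    (hA : A.PosDef) :
    ∃ B, IsCongruent A B ∧ ∀ C, IsCongruent B C → B 0 0 ≤ C 0 0 := by
  obtain ⟨_, ⟨B, hAB, rfl⟩, hmin⟩ :=
    Int.exists_least_of_bdd (P := fun a ↦ ∃ B, IsCongruent A B ∧ B 0 0 = a)
      ⟨0, by rintro _ ⟨B, hB, rfl⟩; exact (hB.posDef hA).diag_pos.le⟩ ⟨_, A, .refl A, rfl⟩
  exact ⟨B, hAB, fun C hBC ↦ hmin _ ⟨C, hAB.trans hBC, rfl⟩⟩

-- Hermite's bound `B 0 0 ≤ (4 / 3) ^ ((N - 1) / 2) * det A ^ (1 / N)` in dimension `N = n + 1`.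
theorem exists_isCongruent_three_pow_mul_corner_pow_le {A : Matrix (Fin (n + 1)) (Fin (n + 1)) ℤ}
    (hA : A.PosDef) :
    ∃ B, IsCongruent A B ∧
      3 ^ (n + 1).choose 2 * B 0 0 ^ (n + 1) ≤ 4 ^ (n + 1).choose 2 * A.det := by
  induction n with
  | zero => exact ⟨A, .refl A, by simp⟩
  | succ n ih =>
    obtain ⟨B, hAB, hmin⟩ := exists_isCongruent_forall_corner_le hA
    have hB : B.PosDef := hAB.posDef hA
    obtain ⟨hpos, hS⟩ := (posDef_iff_scaledSchurComplement (by simpa using hB.isHermitian)).1 hB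
    obtain ⟨C, hSC, hC⟩ := ih hS
    obtain ⟨D, hBD, hcorner, hschur, hrow⟩ :=
      exists_isCongruent_scaledSchurComplement_eq_of_pos hpos hSC
    have hdiag : B 0 0 ≤ D 1 1 := by
      simpa using hmin _ (hBD.trans (.submatrix_perm D (Equiv.swap 0 1)))
    have hstep : 3 * B 0 0 ^ 2 ≤ 4 * C 0 0 := by
      have hD : D.IsSymm := by simpa using (hBD.posDef hB).isHermitian
      rw [← hcorner] at hdiag hrow ⊢
      exact hschur ▸ three_mul_corner_sq_le hD hdiag (hrow 0)
    have hdet : (scaledSchurComplement B).det = B 0 0 ^ n * A.det := by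
      refine mul_left_cancel₀ hpos.ne' ?_
      rw [corner_mul_det_scaledSchurComplement, hAB.det_eq, pow_succ']
      ring
    refine ⟨B, hAB, le_of_mul_le_mul_left ?_ (pow_pos hpos n)⟩
    rw [Nat.choose_succ_succ' (n + 1), Nat.choose_one_right]
    calc B 0 0 ^ n * (3 ^ (n + 1 + (n + 1).choose 2) * B 0 0 ^ (n + 1 + 1))
        = 3 ^ (n + 1).choose 2 * (3 * B 0 0 ^ 2) ^ (n + 1) := by ring
      _ ≤ 3 ^ (n + 1).choose 2 * (4 * C 0 0) ^ (n + 1) := by gcongr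
      _ = 4 ^ (n + 1) * (3 ^ (n + 1).choose 2 * C 0 0 ^ (n + 1)) := by ring
      _ ≤ 4 ^ (n + 1) * (4 ^ (n + 1).choose 2 * (scaledSchurComplement B).det) := by gcongr
      _ = B 0 0 ^ n * (4 ^ (n + 1 + (n + 1).choose 2) * A.det) := by rw [hdet]; ring

theorem exists_isCongruent_corner_eq_one {A : Matrix (Fin (n + 1)) (Fin (n + 1)) ℤ}
    (hn : n ≤ 4) (hA : A.PosDef) (hdet : A.det = 1) : ∃ B, IsCongruent A B ∧ B 0 0 = 1 := by
  obtain ⟨B, hAB, hB⟩ := exists_isCongruent_three_pow_mul_corner_pow_le hA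
  have hpos : 0 < B 0 0 := (hAB.posDef hA).diag_pos
  refine ⟨B, hAB, ?_⟩
  by_contra hne
  have hpow : (2 : ℤ) ^ (n + 1) ≤ B 0 0 ^ (n + 1) := by gcongr; omega
  have hle : (3 : ℤ) ^ (n + 1).choose 2 * 2 ^ (n + 1) ≤ 4 ^ (n + 1).choose 2 :=
    calc (3 : ℤ) ^ (n + 1).choose 2 * 2 ^ (n + 1)
        ≤ 3 ^ (n + 1).choose 2 * B 0 0 ^ (n + 1) := by gcongr
      _ ≤ 4 ^ (n + 1).choose 2 := by simpa [hdet] using hB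
  -- `hle` fails for every `n ≤ 4` but holds for `n = 5`, hence the bound on the dimension.
  interval_cases n <;> simp [Nat.choose] at hle

theorem isCongruent_one_of_posDef_of_det_eq_one {A : Matrix (Fin n) (Fin n) ℤ} (hn : n ≤ 5)
    (hA : A.PosDef) (hdet : A.det = 1) : IsCongruent A 1 := by
  induction n with
  | zero => exact Subsingleton.elim A 1 ▸ .refl A
  | succ n ih =>
    obtain ⟨B, hAB, hB1⟩ := exists_isCongruent_corner_eq_one (by omega) hA hdet
    have hB : B.PosDef := hAB.posDef hA
    have hS := ((posDef_iff_scaledSchurComplement (by simpa using hB.isHermitian)).1 hB).2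
    have hSdet : (scaledSchurComplement B).det = 1 := by
      simpa [hB1, hAB.det_eq, hdet] using corner_mul_det_scaledSchurComplement B
    obtain ⟨D, hBD, hcorner, hschur, hrow⟩ :=
      exists_isCongruent_scaledSchurComplement_eq_of_pos (by omega) (ih (by omega) hS hSdet)
    have hD : D.IsSymm := by simpa using (hBD.posDef hB).isHermitian
    rw [hB1] at hcorner hrow
    have hrow0 (j : Fin n) : D 0 j.succ = 0 := by
      rw [← abs_nonpos_iff]
      have habs := hrow j
      omega
    exact eq_one_of_scaledSchurComplement_eq_one hD hcorner hrow0 hschur ▸ hAB.trans hBD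

end Integral

theorem exists_sum_sq_eq_diag {n : ℕ} (hn : n ≤ 5) {A : Matrix (Fin n) (Fin n) ℤ}
    (hA : A.PosDef) (hdet : A.det = 1) (i : Fin n) : ∃ x : Fin n → ℤ, A i i = ∑ j, x j ^ 2 := by
  obtain ⟨P, -, rfl⟩ := (isCongruent_one_of_posDef_of_det_eq_one hn hA hdet).symm
  exact ⟨P.col i, by simp [mul_apply, sq]⟩

theorem exists_sum_three_sq_of_dvd {n b d w : ℤ} (hb : 0 < b) (hd : 0 < d)
    (hbd : b * n = d + 1) (hdvd : d ∣ w ^ 2 + b) : ∃ x y z : ℤ, n = x ^ 2 + y ^ 2 + z ^ 2 := by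
  obtain ⟨e, he⟩ := hdvd
  have hepos : 0 < e := pos_of_mul_pos_right (he ▸ by positivity) hd.le
  let A : Matrix (Fin 3) (Fin 3) ℤ := !![e, w, 1; w, d, 0; 1, 0, n]
  have hdet : A.det = 1 := by
    simp only [det_fin_three, of_apply, cons_val', cons_val_zero, cons_val_fin_one, cons_val_one,
      cons_val, mul_zero, sub_zero, mul_one, add_zero, one_mul, A]
    linear_combination (-n) * he + hbd
  have hsymm : A.IsSymm := by ext i j; fin_cases i <;> fin_cases j <;> rfl
  have hposDef : A.PosDef := by
    have hminor : e * d - w ^ 2 = b := by linear_combination -he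
    rw [posDef_fin_three_iff hsymm, hdet]
    simp [A, hminor, hepos, hb]
  obtain ⟨x, hx⟩ := exists_sum_sq_eq_diag (by norm_num) hposDef hdet 2
  exact ⟨x 0, x 1, x 2, by simpa [A, Fin.sum_univ_three] using hx⟩

theorem isSquare_neg_of_dvd_two_mul_add_one {b p : ℕ} [Fact p.Prime] (hp : p % 4 = 1)
    (hb : b % 8 = 1 ∨ b % 8 = 3) (hdvd : b ∣ 2 * p + 1) :
    IsSquare (-b : ZMod p) := by
  have hbodd : Odd b := Nat.odd_iff.2 (by omega)
  have hpodd : Odd p := Nat.odd_iff.2 (by omega)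
  have htwo_mul : jacobiSym (-2 * p) b = 1 := by
    have hmod : (-2 * p : ℤ) ≡ 1 [ZMOD b] := by
      rw [Int.modEq_iff_dvd]
      convert Int.natCast_dvd_natCast.2 hdvd using 1
      push_cast
      ring
    rw [jacobiSym.mod_left' hmod, jacobiSym.one_left]
  have htwo : jacobiSym (-2) b = 1 := by
    rw [jacobiSym.at_neg_two hbodd, ZMod.χ₈'_nat_eq_if_mod_eight]
    simp [hb, Nat.odd_iff.1 hbodd]
  have hpb : jacobiSym p b = 1 := by
    rwa [jacobiSym.mul_left, htwo, one_mul] at htwo_mul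
  have hbp : jacobiSym (-b) p = 1 := by
    rw [jacobiSym.neg _ hpodd, ZMod.χ₄_nat_one_mod_four hp, one_mul,
      ← jacobiSym.quadratic_reciprocity_one_mod_four hp hbodd, hpb]
  simpa using ZMod.isSquare_of_jacobiSym_eq_one hbp

theorem exists_two_mul_dvd_sq_add {b p : ℕ} (hp : Odd p) (hb : Odd b)
    (hsq : IsSquare (-b : ZMod p)) : ∃ w : ℤ, (2 * p : ℤ) ∣ w ^ 2 + b := by
  obtain ⟨x, hx⟩ := hsq
  obtain ⟨y, rfl⟩ := ZMod.intCast_surjective x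
  have hdvd : (p : ℤ) ∣ y ^ 2 + b := by
    rw [← ZMod.intCast_zmod_eq_zero_iff_dvd]
    push_cast
    linear_combination -hx
  obtain ⟨w, hw, hwodd⟩ : ∃ w : ℤ, (p : ℤ) ∣ w ^ 2 + b ∧ Odd w := by
    rcases Int.even_or_odd y with hy | hy
    · refine ⟨y + p, ?_, hy.add_odd (by exact_mod_cast hp)⟩
      rw [show (y + p : ℤ) ^ 2 + b = (y ^ 2 + b) + p * (2 * y + p) by ring]
      exact dvd_add hdvd (dvd_mul_right _ _)
    · exact ⟨y, hdvd, hy⟩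
  have htwo : (2 : ℤ) ∣ w ^ 2 + b := (hwodd.pow.add_odd (by exact_mod_cast hb)).two_dvd
  have hcop : IsCoprime (2 : ℤ) p := by
    exact_mod_cast Nat.isCoprime_iff_coprime.2 (Nat.coprime_two_left.2 hp)
  exact ⟨w, hcop.mul_dvd htwo hw⟩

theorem exists_prime_two_mul_add_one_eq {n : ℕ} (hn : n % 8 = 3) :
    ∃ p b : ℕ, p.Prime ∧ p % 4 = 1 ∧ b % 8 = 1 ∧ 2 * p + 1 = b * n := by
  obtain ⟨m, rfl⟩ : ∃ m, n = 8 * m + 3 := ⟨n / 8, by omega⟩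
  have hcop : (4 * m + 1).Coprime (4 * (8 * m + 3)) := by
    apply Nat.Coprime.mul_right
    · rw [show 4 * m + 1 = 1 + m * 4 by ring]; simp
    · rw [show 8 * m + 3 = 1 + 2 * (4 * m + 1) by ring]; simp
  obtain ⟨p, hgt, hp, hmod⟩ :=
    Nat.forall_exists_prime_gt_and_modEq (4 * m + 1) (by omega) hcop
  obtain ⟨j, hj⟩ := (Nat.modEq_iff_dvd' hgt.le).1 hmod.symm
  have hpj : p = 4 * m + 1 + 4 * ((8 * m + 3) * j) := by rw [← mul_assoc]; omega
  exact ⟨p, 8 * j + 1, hp, by omega, by omega, by rw [hpj]; ring⟩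

theorem exists_sum_three_sq_of_mod_eight_eq_three {n : ℕ} (hn : n % 8 = 3) :
    ∃ x y z : ℤ, (n : ℤ) = x ^ 2 + y ^ 2 + z ^ 2 := by
  obtain ⟨p, b, hp, hp4, hb8, hpb⟩ := exists_prime_two_mul_add_one_eq hn
  have : Fact p.Prime := ⟨hp⟩
  have hsq := isSquare_neg_of_dvd_two_mul_add_one hp4 (.inl hb8) ⟨n, hpb⟩
  obtain ⟨w, hw⟩ := exists_two_mul_dvd_sq_add (Nat.odd_iff.2 (by omega))
    (Nat.odd_iff.2 (by omega)) hsq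
  have hb : 0 < b := by omega
  have hd : 0 < p := hp.pos
  exact exists_sum_three_sq_of_dvd (by exact_mod_cast hb) (by positivity)
    (by exact_mod_cast hpb.symm) hw

theorem exists_sq_eq_eight_mul_triangular_add_one {x : ℤ} (hx : Odd x) :
    ∃ a : ℕ, x ^ 2 = 8 * (a * (a + 1) / 2 : ℕ) + 1 := by
  obtain ⟨a, ha⟩ := Int.natAbs_odd.2 hx
  refine ⟨a, ?_⟩
  have htwo : 2 * (a * (a + 1) / 2) = a * (a + 1) :=
    Nat.mul_div_cancel' (Nat.even_mul_succ_self a).two_dvd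
  zify at htwo
  rw [← Int.natAbs_sq, ha]
  push_cast
  linear_combination (-4) * htwo

theorem odd_of_sum_three_sq_emod_four_eq_three {x y z : ℤ}
    (h : (x ^ 2 + y ^ 2 + z ^ 2) % 4 = 3) : Odd x ∧ Odd y ∧ Odd z := by
  have hsq (t : ℤ) : Odd t ∧ t ^ 2 % 4 = 1 ∨ ¬ Odd t ∧ t ^ 2 % 4 = 0 := by
    rcases Int.even_or_odd t with ht | ht
    · exact .inr ⟨Int.not_odd_iff_even.2 ht,
        Int.emod_eq_zero_of_dvd (pow_dvd_pow_of_dvd ht.two_dvd 2)⟩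
    · exact .inl ⟨ht, Int.sq_mod_four_eq_one_of_odd ht⟩
  grind

theorem gauss_eureka (n : ℕ) :
    ∃ a b c : ℕ, n = a * (a + 1) / 2 + b * (b + 1) / 2 + c * (c + 1) / 2 := by
  obtain ⟨x, y, z, hxyz⟩ := exists_sum_three_sq_of_mod_eight_eq_three (n := 8 * n + 3) (by omega)
  have hmod : (x ^ 2 + y ^ 2 + z ^ 2) % 4 = 3 := by omega
  obtain ⟨hx, hy, hz⟩ := odd_of_sum_three_sq_emod_four_eq_three hmod
  obtain ⟨a, ha⟩ := exists_sq_eq_eight_mul_triangular_add_one hx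
  obtain ⟨b, hb⟩ := exists_sq_eq_eight_mul_triangular_add_one hy
  obtain ⟨c, hc⟩ := exists_sq_eq_eight_mul_triangular_add_one hz
  exact ⟨a, b, c, by omega⟩
end
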